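/- There exist constants C > 0 and Q₀ such that for every prime q ≥ Q₀ there is an integer a with 1 ≤ a < q and gcd(a,q) = 1 for which every partial quotient in the continued fraction expansion a/q = [0;c₁,…,c_s] satisfies c_j ≤ C · log q / log log q for all j = 1,…,s. -/

import Mathlib

/-- The value of the regular continued fraction `[0; c₁, …, c_s]`. -/
def cfVal (l : List ℕ) : ℚ :=
  l.foldr (fun c r => 1 / ((c : ℚ) + r)) 0

/-- `IsCFOf x l` means that `l = [c₁, …, c_s]` is the regular continued fraction
expansion of `x`, i.e. `x = [0; c₁, …, c_s]`, all partial quotients are positive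
integers and the last one is at least `2`. -/
def IsCFOf (x : ℚ) (l : List ℕ) : Prop :=
  (∀ c ∈ l, 1 ≤ c) ∧ (∀ h : l ≠ [], 2 ≤ l.getLast h) ∧ cfVal l = x

section PartP1
open Polynomial

namespace Kor

section Stepanov
variable {p : ℕ} [hp : Fact p.Prime]

/-- twisted iterated derivative -/
noncomputable def rk (f : (ZMod p)[X]) (E : ℕ) : ℕ → ((ZMod p)[X] →ₗ[ZMod p] (ZMod p)[X])
  | 0 => LinearMap.id
  | k+1 => (LinearMap.mulLeft (ZMod p) (C ((E : ZMod p) - k) * derivative f)) ∘ₗ rk f E k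
      + (LinearMap.mulLeft (ZMod p) f) ∘ₗ derivative ∘ₗ rk f E k

lemma rk_succ (f : (ZMod p)[X]) (E k : ℕ) (r : (ZMod p)[X]) :
    rk f E (k+1) r = C ((E : ZMod p) - k) * derivative f * rk f E k r
      + f * derivative (rk f E k r) := by
  simp [rk, mul_assoc]

lemma iter_deriv_rk (f : (ZMod p)[X]) (E k : ℕ) (hk : k ≤ E) (r : (ZMod p)[X]) :
    derivative^[k] (f ^ E * r) = f ^ (E - k) * rk f E k r := by
  induction k with
  | zero => simp [rk]
  | succ k ih =>
    rw [Function.iterate_succ_apply', ih (by omega), rk_succ]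
    obtain ⟨t, rfl⟩ : ∃ t, E = t + (k+1) := ⟨E - (k+1), by omega⟩
    have h1 : t + (k+1) - k = t + 1 := by omega
    have h2 : t + (k+1) - (k+1) = t := by omega
    rw [h1, h2, derivative_mul, derivative_pow]
    push_cast
    simp only [map_sub, map_add, map_natCast, map_one]
    ring

lemma iter_deriv_X (j k : ℕ) (g : (ZMod p)[X]) :
    derivative^[k] (X ^ (p * j) * g) = X ^ (p * j) * derivative^[k] g := by
  induction k with
  | zero => simp
  | succ k ih =>
    rw [Function.iterate_succ_apply', ih, Function.iterate_succ_apply', derivative_mul]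
    simp [derivative_X_pow]

lemma rk_natDegree (f : (ZMod p)[X]) (E k : ℕ) (r : (ZMod p)[X]) :
    (rk f E k r).natDegree ≤ r.natDegree + k * f.natDegree := by
  induction k with
  | zero => simp [rk]
  | succ k ih =>
    rw [rk_succ]
    refine (natDegree_add_le _ _).trans (max_le ?_ ?_)
    · refine natDegree_mul_le.trans ?_
      have := (natDegree_C_mul_le ((E : ZMod p) - k) (derivative f)).trans (natDegree_derivative_le f)
      have h : (k+1) * f.natDegree = k * f.natDegree + f.natDegree := by ring
      omega
    · refine natDegree_mul_le.trans ?_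
      have := natDegree_derivative_le (rk f E k r)
      have h : (k+1) * f.natDegree = k * f.natDegree + f.natDegree := by ring
      omega

/-- the parity argument -/
lemma parity (f r s : (ZMod p)[X]) (h0 : f.eval 0 ≠ 0) (ρ : ZMod p) (hρ : f.rootMultiplicity ρ = 1)
    (h : C (f.eval 0) * s ^ 2 = f * r ^ 2) : r = 0 ∧ s = 0 := by
  have hf : f ≠ 0 := by rintro rfl; simp at h0
  by_cases hr : r = 0
  · subst hr; simpa [h0] using h
  by_cases hs : s = 0
  · subst hs; simp [hf, hr] at h
  exfalso
  have h1 := congrArg (rootMultiplicity ρ) h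
  have hs2 : s * s ≠ 0 := mul_ne_zero hs hs
  have hr2 : r * r ≠ 0 := mul_ne_zero hr hr
  have hc0 : C (f.eval 0) ≠ 0 := by simpa using h0
  rw [pow_two, pow_two, rootMultiplicity_mul (mul_ne_zero hc0 hs2), rootMultiplicity_mul (mul_ne_zero hf hr2),
    rootMultiplicity_C, rootMultiplicity_mul hr2, rootMultiplicity_mul hs2, hρ] at h1
  omega

lemma lowest (f r s : (ZMod p)[X]) (h0 : f.eval 0 ≠ 0) (ρ : ZMod p) (hρ : f.rootMultiplicity ρ = 1)
    (c n0 : ℕ) (hc : p = 2 * c + 1) (hn : n0 + f.natDegree ≤ c) (hr : r.natDegree ≤ n0)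
    (hs : s.natDegree ≤ n0) (hdvd : (X : (ZMod p)[X]) ^ p ∣ r + f ^ c * s) : r = 0 ∧ s = 0 := by
  apply parity f r s h0 ρ hρ
  have h1 : (X : (ZMod p)[X]) ^ p ∣ f ^ p - C (f.eval 0) := by
    rw [← ZMod.expand_card f]
    have : (X : (ZMod p)[X]) ∣ f - C (f.eval 0) := by
      have := X_sub_C_dvd_sub_C_eval (a := (0 : ZMod p)) (p := f)
      simpa using this
    have h2 := map_dvd (expand (ZMod p) p) this
    simpa [map_sub, expand_C, expand_X] using h2
  have h2 : (X : (ZMod p)[X]) ^ p ∣ C (f.eval 0) * s ^ 2 - f * r ^ 2 := by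
    have e : C (f.eval 0) * s ^ 2 - f * r ^ 2 =
        - (f ^ p - C (f.eval 0)) * s ^ 2 + (r + f ^ c * s) * (f * (f ^ c * s - r)) := by
      have hfp : f ^ p = f * f ^ c * f ^ c := by
        calc f ^ p = f ^ (2 * c + 1) := congrArg (fun t => f ^ t) hc
          _ = _ := by ring
      rw [hfp]; ring
    rw [e]
    exact dvd_add (Dvd.dvd.mul_right (dvd_neg.mpr h1) _) (Dvd.dvd.mul_right hdvd _)
  have h3 : C (f.eval 0) * s ^ 2 - f * r ^ 2 = 0 := by
    by_contra hne
    have := natDegree_le_of_dvd h2 hne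
    rw [natDegree_X_pow] at this
    have h4 : (C (f.eval 0) * s ^ 2 - f * r ^ 2).natDegree ≤ 2 * c := by
      refine (natDegree_sub_le _ _).trans (max_le ?_ ?_)
      · refine (natDegree_C_mul_le _ _).trans ((natDegree_pow_le).trans ?_)
        omega
      · refine natDegree_mul_le.trans ?_
        have := natDegree_pow_le (p := r) (n := 2)
        omega
    omega
  exact sub_eq_zero.mp h3

lemma nonvanish (f : (ZMod p)[X]) (h0 : f.eval 0 ≠ 0) (ρ : ZMod p) (hρ : f.rootMultiplicity ρ = 1)
    (c n0 J : ℕ) (hc : p = 2 * c + 1) (hn : n0 + f.natDegree ≤ c) (r s : ℕ → (ZMod p)[X])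
    (hr : ∀ j, (r j).natDegree ≤ n0) (hs : ∀ j, (s j).natDegree ≤ n0)
    (hz : ∑ j ∈ Finset.range J, X ^ (p * j) * (r j + f ^ c * s j) = 0) :
    ∀ j < J, r j = 0 ∧ s j = 0 := by
  intro j
  induction j using Nat.strong_induction_on with
  | _ j ih =>
    intro hj
    apply lowest f (r j) (s j) h0 ρ hρ c n0 hc hn (hr j) (hs j)
    have h1 : (X : (ZMod p)[X]) ^ (p * j) * (r j + f ^ c * s j) =
        - ∑ i ∈ (Finset.range J).erase j, X ^ (p * i) * (r i + f ^ c * s i) := by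
      rw [← Finset.add_sum_erase _ _ (Finset.mem_range.mpr hj)] at hz
      exact eq_neg_of_add_eq_zero_left hz
    have h2 : (X : (ZMod p)[X]) ^ (p * j) * X ^ p ∣ X ^ (p * j) * (r j + f ^ c * s j) := by
      rw [h1, dvd_neg]
      apply Finset.dvd_sum
      intro i hi
      rw [Finset.mem_erase, Finset.mem_range] at hi
      rcases lt_or_gt_of_ne hi.1 with h | h
      · obtain ⟨e1, e2⟩ := ih i h hi.2
        simp [e1, e2]
      · rw [← pow_add]
        apply Dvd.dvd.mul_right
        apply pow_dvd_pow
        calc p * j + p = p * (j+1) := by ring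
          _ ≤ p * i := Nat.mul_le_mul_left _ h
    exact (mul_dvd_mul_iff_left (pow_ne_zero _ X_ne_zero)).mp h2

/-- polynomial with given coefficients -/
noncomputable def toP (n : ℕ) : (Fin n → ZMod p) →ₗ[ZMod p] (ZMod p)[X] :=
  (degreeLT (ZMod p) n).subtype ∘ₗ (degreeLTEquiv (ZMod p) n).symm.toLinearMap

lemma toP_inj (n : ℕ) (u : Fin n → ZMod p) (h : toP n u = 0) : u = 0 := by
  have : (degreeLTEquiv (ZMod p) n).symm u = 0 := by
    apply Subtype.ext
    simpa [toP] using h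
  simpa using this

lemma toP_natDegree (n : ℕ) (u : Fin n → ZMod p) : (toP n u).natDegree ≤ n := by
  have h : toP n u ∈ degreeLT (ZMod p) n := by simp [toP]
  rw [mem_degreeLT] at h
  exact natDegree_le_of_degree_le h.le

noncomputable def sig (f : (ZMod p)[X]) (a : ZMod p) (c l J n0 k : ℕ) :
    ((Fin J → Fin n0 → ZMod p) × (Fin J → Fin n0 → ZMod p)) →ₗ[ZMod p] (ZMod p)[X] :=
  ∑ j : Fin J, LinearMap.mulLeft (ZMod p) (X ^ (j : ℕ)) ∘ₗ
    (rk f l k ∘ₗ toP n0 ∘ₗ LinearMap.proj j ∘ₗ LinearMap.fst _ _ _ +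
      a • rk f (l + c) k ∘ₗ toP n0 ∘ₗ LinearMap.proj j ∘ₗ LinearMap.snd _ _ _)

lemma sig_apply (f : (ZMod p)[X]) (a : ZMod p) (c l J n0 k : ℕ) (u) :
    sig f a c l J n0 k u = ∑ j : Fin J, X ^ (j : ℕ) *
      (rk f l k (toP n0 (u.1 j)) + a • rk f (l + c) k (toP n0 (u.2 j))) := by
  simp [sig]

lemma sig_natDegree (f : (ZMod p)[X]) (a : ZMod p) (c l J n0 k : ℕ) (hk : k < l) (hD : 1 ≤ f.natDegree) (u) :
    (sig f a c l J n0 k u).natDegree < n0 + l * f.natDegree + J := by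
  rw [sig_apply]
  have hkD : (k + 1) * f.natDegree ≤ l * f.natDegree := Nat.mul_le_mul_right _ hk
  have e : (k + 1) * f.natDegree = k * f.natDegree + f.natDegree := by ring
  have key : (∑ j : Fin J, X ^ (j : ℕ) *
      (rk f l k (toP n0 (u.1 j)) + a • rk f (l + c) k (toP n0 (u.2 j)))).natDegree
      ≤ n0 + l * f.natDegree + J - 1 := by
    apply natDegree_sum_le_of_forall_le
    intro j _
    refine natDegree_mul_le.trans ?_
    rw [natDegree_X_pow]
    have h3 : (rk f l k (toP n0 (u.1 j)) + a • rk f (l + c) k (toP n0 (u.2 j))).natDegree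
        ≤ n0 + k * f.natDegree := by
      refine (natDegree_add_le _ _).trans (max_le ?_ ?_)
      · exact (rk_natDegree _ _ _ _).trans (Nat.add_le_add_right (toP_natDegree _ _) _)
      · refine (natDegree_smul_le _ _).trans ?_
        exact (rk_natDegree _ _ _ _).trans (Nat.add_le_add_right (toP_natDegree _ _) _)
    have := j.2
    omega
  omega

lemma exists_aux (f : (ZMod p)[X]) (a : ZMod p) (c l J n0 : ℕ) (hD : 1 ≤ f.natDegree)
    (hrank : l * (n0 + l * f.natDegree + J) < 2 * (J * n0)) :
    ∃ u : (Fin J → Fin n0 → ZMod p) × (Fin J → Fin n0 → ZMod p), u ≠ 0 ∧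
      ∀ k < l, sig f a c l J n0 k u = 0 := by
  set T := n0 + l * f.natDegree + J with hT
  let Λ : ((Fin J → Fin n0 → ZMod p) × (Fin J → Fin n0 → ZMod p)) →ₗ[ZMod p]
      (Fin l → Fin T → ZMod p) :=
    LinearMap.pi fun k => LinearMap.pi fun t => lcoeff (ZMod p) (t : ℕ) ∘ₗ sig f a c l J n0 k
  have h1 : LinearMap.ker Λ ≠ ⊥ := by
    apply LinearMap.ker_ne_bot_of_finrank_lt
    simp only [Module.finrank_prod, Module.finrank_pi_fintype, Module.finrank_self,
      Finset.sum_const, Finset.card_univ, Fintype.card_fin, smul_eq_mul, mul_one]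
    omega
  obtain ⟨u, hu, hu0⟩ := Submodule.exists_mem_ne_zero_of_ne_bot h1
  refine ⟨u, hu0, fun k hk => ?_⟩
  ext t
  by_cases ht : t < T
  · have := congrFun (congrFun (LinearMap.mem_ker.mp hu) ⟨k, hk⟩) ⟨t, ht⟩
    simpa [Λ] using this
  · rw [coeff_zero]
    apply coeff_eq_zero_of_natDegree_lt
    have := sig_natDegree f a c l J n0 k hk hD u
    omega

theorem stepanov_nat (f : (ZMod p)[X]) (h0 : f.eval 0 ≠ 0) (ρ : ZMod p) (hρ : f.rootMultiplicity ρ = 1)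
    (a : ZMod p) (c l J n0 : ℕ) (hc : p = 2 * c + 1) (hn : n0 + f.natDegree ≤ c) (hl0 : 0 < l) (hl : l < p)
    (hD : 1 ≤ f.natDegree)
    (hrank : l * (n0 + l * f.natDegree + J) < 2 * (J * n0)) :
    l * (Finset.univ.filter (fun x : ZMod p => (f.eval x) ^ c = a)).card
      ≤ p * (J - 1) + (l + c) * f.natDegree + n0 := by
  obtain ⟨u, hu0, hu⟩ := exists_aux f a c l J n0 hD hrank
  have hf : f ≠ 0 := by rintro rfl; simp at h0
  let r : ℕ → (ZMod p)[X] := fun j => if h : j < J then toP n0 (u.1 ⟨j, h⟩) else 0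
  let s : ℕ → (ZMod p)[X] := fun j => if h : j < J then toP n0 (u.2 ⟨j, h⟩) else 0
  have hr : ∀ j, (r j).natDegree ≤ n0 := by
    intro j; simp only [r]; split_ifs
    · exact toP_natDegree _ _
    · simp
  have hs : ∀ j, (s j).natDegree ≤ n0 := by
    intro j; simp only [s]; split_ifs
    · exact toP_natDegree _ _
    · simp
  let R : (ZMod p)[X] := ∑ j ∈ Finset.range J, X ^ (p * j) * (f ^ l * r j + f ^ (l + c) * s j)
  have hR0 : R ≠ 0 := by
    intro hR
    have h1 : R = f ^ l * ∑ j ∈ Finset.range J, X ^ (p * j) * (r j + f ^ c * s j) := by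
      simp only [R]; rw [Finset.mul_sum]
      apply Finset.sum_congr rfl; intro j _; ring
    rw [h1] at hR
    have h2 := (mul_eq_zero.mp hR).resolve_left (pow_ne_zero _ hf)
    have h3 := nonvanish f h0 ρ hρ c n0 J hc hn r s hr hs h2
    apply hu0
    ext1
    · funext j
      have := (h3 j j.2).1
      simp only [r, j.2, dif_pos] at this
      exact toP_inj _ _ this
    · funext j
      have := (h3 j j.2).2
      simp only [s, j.2, dif_pos] at this
      exact toP_inj _ _ this
  have hRdeg : R.natDegree ≤ p * (J - 1) + (l + c) * f.natDegree + n0 := by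
    apply natDegree_sum_le_of_forall_le
    intro j hj
    rw [Finset.mem_range] at hj
    refine natDegree_mul_le.trans ?_
    rw [natDegree_X_pow, add_assoc]
    apply Nat.add_le_add (Nat.mul_le_mul_left _ (by omega))
    have e : (l + c) * f.natDegree = l * f.natDegree + c * f.natDegree := by ring
    refine (natDegree_add_le _ _).trans (max_le ?_ ?_)
    · refine natDegree_mul_le.trans ?_
      have := natDegree_pow_le (p := f) (n := l)
      have := hr j
      omega
    · refine natDegree_mul_le.trans ?_
      have := natDegree_pow_le (p := f) (n := l + c)
      have := hs j
      omega
  have hmult : ∀ x : ZMod p, f.eval x ^ c = a → l ≤ R.rootMultiplicity x := by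
    intro x hx
    obtain ⟨l', rfl⟩ : ∃ l', l = l' + 1 := ⟨l - 1, by omega⟩
    apply Nat.succ_le_of_lt
    apply lt_rootMultiplicity_of_isRoot_iterate_derivative_of_mem_nonZeroDivisors hR0
    · intro k hk
      rw [IsRoot.def]
      have h1 : derivative^[k] R = ∑ j ∈ Finset.range J, X ^ (p * j) *
          (f ^ (l' + 1 - k) * rk f (l' + 1) k (r j) + f ^ (l' + 1 + c - k) * rk f (l' + 1 + c) k (s j)) := by
        simp only [R]
        rw [iterate_derivative_sum]
        apply Finset.sum_congr rfl
        intro j _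
        rw [iter_deriv_X, iterate_map_add, iter_deriv_rk _ _ _ (by omega),
          iter_deriv_rk _ _ _ (by omega)]
      have h2 := congrArg (eval x) (hu k (by omega))
      rw [sig_apply, eval_finsetSum] at h2
      rw [h1, eval_finsetSum, Finset.sum_range]
      rw [eval_zero] at h2
      rw [← mul_zero (f.eval x ^ (l' + 1 - k)), ← h2, Finset.mul_sum]
      apply Finset.sum_congr rfl
      intro j _
      have e : l' + 1 + c - k = (l' + 1 - k) + c := by omega
      simp only [eval_mul, eval_add, eval_pow, eval_X, eval_smul, r, s, j.2, dif_pos, Fin.eta, e, pow_add, hx,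
        pow_mul, ZMod.pow_card, smul_eq_mul]
      ring
    · rw [mem_nonZeroDivisors_iff_ne_zero]
      intro h
      rw [ZMod.natCast_eq_zero_iff] at h
      have := (hp.out.dvd_factorial).mp h
      omega
  calc l * (Finset.univ.filter (fun x : ZMod p => (f.eval x) ^ c = a)).card
      = ∑ x ∈ Finset.univ.filter (fun x : ZMod p => (f.eval x) ^ c = a), l := by
        rw [Finset.sum_const, smul_eq_mul, mul_comm]
    _ ≤ ∑ x ∈ Finset.univ.filter (fun x : ZMod p => (f.eval x) ^ c = a), R.roots.count x := by
        apply Finset.sum_le_sum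
        intro x hx
        rw [count_roots]
        exact hmult x (Finset.mem_filter.mp hx).2
    _ ≤ ∑ x ∈ R.roots.toFinset, R.roots.count x := by
        apply Finset.sum_le_sum_of_subset
        intro x hx
        have := hmult x (Finset.mem_filter.mp hx).2
        rw [Multiset.mem_toFinset, ← Multiset.count_pos, count_roots]
        omega
    _ = R.roots.card := Multiset.toFinset_sum_count_eq _
    _ ≤ R.natDegree := card_roots' _
    _ ≤ _ := hRdeg

end Stepanov
end Kor
end PartP1

section PartP1b
open Polynomial

namespace Kor
section CharSum
variable {p : ℕ} [hp : Fact p.Prime]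

lemma stepanov_real (f : (ZMod p)[X]) (h0 : f.eval 0 ≠ 0) (ρ : ZMod p) (hρ : f.rootMultiplicity ρ = 1)
    (a : ZMod p) (c : ℕ) (hc : p = 2 * c + 1) (hD : 1 ≤ f.natDegree)
    (hbig : 100 * f.natDegree ≤ Nat.sqrt p) :
    ((Finset.univ.filter (fun x : ZMod p => (f.eval x) ^ c = a)).card : ℝ)
      ≤ p / 2 + 16 * f.natDegree * Real.sqrt p := by
  set D := f.natDegree with hDdef
  set l := Nat.sqrt p with hl
  have hl2 : l * l ≤ p := Nat.sqrt_le p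
  have hl3 : p < (l+1) * (l+1) := Nat.lt_succ_sqrt p
  have hll : 100 * l ≤ l * l := Nat.mul_le_mul_right _ (by omega)
  obtain ⟨n0, hn0⟩ : ∃ n0, c = n0 + D := ⟨c - D, by omega⟩
  have hrank : l * (n0 + l * D + (l / 2 + 2 * D + 3)) < 2 * ((l / 2 + 2 * D + 3) * n0) := by
    obtain ⟨h, hh⟩ : ∃ h, h = l / 2 := ⟨_, rfl⟩
    rw [← hh]
    have h1 : 2 * h ≤ l := by omega
    have h2 : l ≤ 2 * h + 1 := by omega
    have h3 : l * l ≤ 2 * n0 + 2 * D + 1 := by omega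
    have h4 : 100 * l ≤ 2 * n0 + 2 * D + 1 := by omega
    have h5 : 100 * D ≤ l := hbig
    have a1 : l * l * D ≤ (2 * n0 + 2 * D + 1) * D := Nat.mul_le_mul_right _ h3
    have a2 : 100 * l * D ≤ (2 * n0 + 2 * D + 1) * D := Nat.mul_le_mul_right _ h4
    have a3 : 100 * D * D ≤ l * D := Nat.mul_le_mul_right _ h5
    have a4 : l * (2 * h) ≤ l * l := Nat.mul_le_mul_left _ h1
    have a5 : l * n0 ≤ (2 * h + 1) * n0 := Nat.mul_le_mul_right _ h2
    have a6 : n0 ≤ D * n0 := Nat.le_mul_of_pos_left _ (by omega)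
    nlinarith
  have key := stepanov_nat f h0 ρ hρ a c l (l / 2 + 2 * D + 3) n0 hc (by omega) (by omega)
    (by nlinarith) hD hrank
  have key2 : (l : ℝ) * ((Finset.univ.filter (fun x : ZMod p => (f.eval x) ^ c = a)).card : ℝ)
      ≤ p * ((l : ℝ) / 2 + 2 * D + 2) + (l + c) * D + n0 := by
    have : ((l * (Finset.univ.filter (fun x : ZMod p => (f.eval x) ^ c = a)).card : ℕ) : ℝ) ≤
       ((p * (l / 2 + 2 * D + 2) + (l + c) * D + n0 : ℕ) : ℝ) := by exact_mod_cast key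
    push_cast at this
    have h2 : ((l / 2 : ℕ) : ℝ) ≤ (l : ℝ) / 2 := Nat.cast_div_le
    have : (p : ℝ) * ((l / 2 : ℕ) : ℝ) ≤ p * ((l : ℝ) / 2) := by gcongr
    nlinarith
  have hlpos : (0 : ℝ) < l := by have : 0 < l := by omega
                                 exact_mod_cast this
  have hs2 : Real.sqrt p * Real.sqrt p = p := Real.mul_self_sqrt (by positivity)
  have hs1 : Real.sqrt p ≤ l + 1 := by
    rw [Real.sqrt_le_left (by positivity)]
    have : (p : ℝ) ≤ ((l+1) * (l+1) : ℕ) := by exact_mod_cast hl3.le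
    push_cast at this; nlinarith
  have hl1 : (1 : ℝ) ≤ l := by have : 1 ≤ l := by omega
                               exact_mod_cast this
  have hD1 : (1 : ℝ) ≤ D := by exact_mod_cast hD
  have hcr : (p : ℝ) = 2 * c + 1 := by
    have : (p : ℝ) = ((2 * c + 1 : ℕ) : ℝ) := congrArg _ hc
    push_cast at this; exact this
  have hn0r : (c : ℝ) = n0 + D := by exact_mod_cast hn0
  refine le_of_mul_le_mul_left (key2.trans ?_) hlpos
  set w := Real.sqrt p
  have hw1 : 1 ≤ w := by
    have : (1:ℝ) ≤ p := by rw [hcr]; have : (0:ℝ) ≤ c := by positivity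
                           linarith
    nlinarith [Real.sqrt_nonneg (p:ℝ)]
  have hw0 : 0 ≤ w := Real.sqrt_nonneg _
  have e1 : (p : ℝ) ≤ 2 * l * w := by rw [← hs2]; nlinarith
  have e2 : (p : ℝ) * D ≤ 2 * l * w * D := by gcongr
  have e3 : (l : ℝ) * D ≤ l * w * D := by nlinarith [mul_le_mul_of_nonneg_left hw1 (by positivity : (0:ℝ) ≤ l * D)]
  have e4 : (p : ℝ) ≤ p * D := by nlinarith
  have e5 : (0:ℝ) ≤ l * w * D := by positivity
  have e6 : (c : ℝ) * D ≤ p * D / 2 := by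
    have : (c : ℝ) ≤ p / 2 := by linarith
    nlinarith
  have e7 : (n0 : ℝ) ≤ p := by linarith [(by positivity : (0:ℝ) ≤ n0)]
  nlinarith

theorem charsum (n : ℕ) (x : Fin n → ZMod p) (i0 : Fin n) (h : ∀ i, i ≠ i0 → x i ≠ x i0)
    (hbig : 100 * n ≤ Nat.sqrt p) :
    |((∑ z : ZMod p, ∏ i, quadraticChar (ZMod p) (z + x i) : ℤ) : ℝ)| ≤ 40 * n * Real.sqrt p := by
  have hn : 1 ≤ n := by have := i0.2; omega
  have hsp : Nat.sqrt p * Nat.sqrt p ≤ p := Nat.sqrt_le p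
  have hnp : n < p := by nlinarith
  have hp2 : p ≠ 2 := by rintro rfl; have : 100 * 100 ≤ Nat.sqrt 2 * Nat.sqrt 2 := Nat.mul_le_mul (by omega) (by omega)
                         omega
  have hodd : p % 2 = 1 := (hp.out.eq_two_or_odd).resolve_left hp2
  obtain ⟨c, hc⟩ : ∃ c, p = 2 * c + 1 := ⟨p / 2, by omega⟩
  have hchar : ringChar (ZMod p) ≠ 2 := by rw [ZMod.ringChar_zmod_n]; exact hp2
  obtain ⟨t, ht⟩ : ∃ t : ZMod p, ∀ i, x i + t ≠ 0 := by
    by_contra hcon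
    push Not at hcon
    have hs : Function.Surjective (fun i : Fin n => - x i) := by
      intro t
      obtain ⟨i, hi⟩ := hcon t
      exact ⟨i, (eq_neg_of_add_eq_zero_right hi).symm⟩
    have := Fintype.card_le_of_surjective _ hs
    rw [Fintype.card_fin, ZMod.card] at this
    omega
  set f : (ZMod p)[X] := ∏ i, (X + C (x i + t)) with hf
  have hdeg : f.natDegree = n := by
    rw [hf, natDegree_prod_of_monic _ _ (fun i _ => monic_X_add_C _)]
    simp only [natDegree_X_add_C, Finset.sum_const, Finset.card_univ, Fintype.card_fin, smul_eq_mul, mul_one]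
  have hev : ∀ z, f.eval z = ∏ i, (z + (x i + t)) := by
    intro z; rw [hf, eval_prod]; simp
  have h0 : f.eval 0 ≠ 0 := by
    rw [hev]; apply Finset.prod_ne_zero_iff.mpr; intro i _; simpa using ht i
  have hfne : f ≠ 0 := by rintro h; rw [h] at h0; simp at h0
  have hρ : f.rootMultiplicity (-(x i0 + t)) = 1 := by
    have e : f = (X - C (-(x i0 + t))) * ∏ i ∈ Finset.univ.erase i0, (X + C (x i + t)) := by
      rw [hf, ← Finset.mul_prod_erase _ _ (Finset.mem_univ i0), map_neg, sub_neg_eq_add]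
    rw [e] at hfne
    rw [e, rootMultiplicity_mul hfne, rootMultiplicity_X_sub_C_self, rootMultiplicity_eq_zero]
    rw [IsRoot.def, eval_prod]
    apply Finset.prod_ne_zero_iff.mpr
    intro i hi
    have := h i (Finset.ne_of_mem_erase hi)
    simp only [eval_add, eval_X, eval_C]
    intro h2; apply this
    linear_combination h2
  have hsum : (∑ z : ZMod p, ∏ i, quadraticChar (ZMod p) (z + x i)) =
      ∑ z : ZMod p, quadraticChar (ZMod p) (f.eval z) := by
    rw [← Equiv.sum_comp (Equiv.addRight t)]
    apply Finset.sum_congr rfl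
    intro z _
    rw [hev, map_prod]
    apply Finset.prod_congr rfl
    intro i _
    congr 1
    simp only [Equiv.coe_addRight]; ring
  have hcard : Fintype.card (ZMod p) / 2 = c := by rw [ZMod.card]; omega
  have hval : ∀ z, ((quadraticChar (ZMod p) (f.eval z) : ℤ) : ZMod p) = f.eval z ^ c := by
    intro z; rw [quadraticChar_eq_pow_of_char_ne_two' hchar, hcard]
  have hneg : (-1 : ZMod p) ≠ 1 := by
    exact Ring.neg_one_ne_one_of_char_ne_two hchar
  have hpt : ∀ z, (quadraticChar (ZMod p) (f.eval z) : ℤ) =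
      (if f.eval z ^ c = 1 then 1 else 0) - (if f.eval z ^ c = -1 then 1 else 0) := by
    intro z
    have hv := hval z
    rcases quadraticChar_isQuadratic (ZMod p) (f.eval z) with h1 | h1 | h1 <;> rw [h1] at hv ⊢ <;> push_cast at hv <;>
      rw [← hv]
    · simp
    · simp [hneg.symm]
    · simp [hneg]
  have hpt2 : ∀ z, 1 ≤ (if f.eval z ^ c = 1 then 1 else 0) + (if f.eval z ^ c = -1 then 1 else 0)
      + (if f.IsRoot z then 1 else 0) := by
    intro z
    have hv := hval z
    rcases quadraticChar_isQuadratic (ZMod p) (f.eval z) with h1 | h1 | h1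
    · rw [quadraticChar_eq_zero_iff] at h1
      simp [h1, IsRoot.def]
    · rw [h1] at hv; push_cast at hv; rw [if_pos hv.symm]; omega
    · rw [h1] at hv; push_cast at hv; rw [if_pos hv.symm (t := 1)]; omega
  set Np := (Finset.univ.filter (fun x : ZMod p => (f.eval x) ^ c = 1)).card with hNp
  set Nm := (Finset.univ.filter (fun x : ZMod p => (f.eval x) ^ c = -1)).card with hNm
  have e1 : (∑ z : ZMod p, quadraticChar (ZMod p) (f.eval z) : ℤ) = Np - Nm := by
    rw [Finset.sum_congr rfl (fun z _ => hpt z), Finset.sum_sub_distrib]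
    simp [hNp, hNm]
  have e2 : p ≤ Np + Nm + n := by
    have := Finset.sum_le_sum (fun z (_ : z ∈ (Finset.univ : Finset (ZMod p))) => hpt2 z)
    rw [Finset.sum_add_distrib, Finset.sum_add_distrib] at this
    simp only [Finset.sum_const, Finset.card_univ, ZMod.card, smul_eq_mul, mul_one, Finset.sum_boole, Nat.cast_id] at this
    have h3 : (Finset.univ.filter (fun z => f.IsRoot z)).card ≤ n := by
      rw [← hdeg]
      refine le_trans (Finset.card_le_card ?_) ((Multiset.toFinset_card_le _).trans (card_roots' f))
      intro z hz
      rw [Multiset.mem_toFinset, mem_roots hfne]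
      exact (Finset.mem_filter.mp hz).2
    omega
  have b1 := stepanov_real f h0 _ hρ 1 c hc (by omega) (by omega)
  have b2 := stepanov_real f h0 _ hρ (-1) c hc (by omega) (by omega)
  rw [hdeg] at b1 b2
  rw [hsum, e1]
  push_cast
  have e2' : (p : ℝ) ≤ Np + Nm + n := by exact_mod_cast e2
  have hs1 : 1 ≤ Real.sqrt p := by
    rw [Real.one_le_sqrt]; exact_mod_cast (by omega : 1 ≤ p)
  have hn1 : (1:ℝ) ≤ n := by exact_mod_cast hn
  have : (n : ℝ) ≤ n * Real.sqrt p := by nlinarith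
  rw [abs_le]
  constructor <;> linarith

end CharSum
end Kor
end PartP1b

section PartP2
open Polynomial

namespace Kor
section Moment
variable {p : ℕ} [hp : Fact p.Prime]

/-- the quadratic character as a real number -/
noncomputable def chi (x : ZMod p) : ℝ := ((quadraticChar (ZMod p) x : ℤ) : ℝ)

lemma chi_mul (x y : ZMod p) : chi (x * y) = chi x * chi y := by unfold chi; rw [map_mul]; push_cast; rfl

lemma chi_abs (x : ZMod p) : |chi x| ≤ 1 := by
  unfold chi
  rcases quadraticChar_isQuadratic (ZMod p) x with h | h | h <;> rw [h] <;> simp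

lemma charsum_chi (n : ℕ) (x : Fin n → ZMod p) (i0 : Fin n) (h : ∀ i, i ≠ i0 → x i ≠ x i0)
    (hbig : 100 * n ≤ Nat.sqrt p) :
    |∑ z : ZMod p, ∏ i, chi (z + x i)| ≤ 40 * n * Real.sqrt p := by
  have := charsum n x i0 h hbig
  push_cast at this
  exact this

lemma charsum_triv (n : ℕ) (x : Fin n → ZMod p) :
    |∑ z : ZMod p, ∏ i, chi (z + x i)| ≤ p := by
  refine (Finset.abs_sum_le_sum_abs _ _).trans ?_
  have : ∀ z ∈ (Finset.univ : Finset (ZMod p)), |∏ i, chi (z + x i)| ≤ 1 := by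
    intro z _
    rw [Finset.abs_prod]
    exact Finset.prod_le_one (fun i _ => abs_nonneg _) (fun i _ => chi_abs _)
  refine (Finset.sum_le_sum this).trans ?_
  simp

lemma image_card_le {α : Type*} [DecidableEq α] (K : ℕ) (x : Fin (2 * K) → α)
    (h : ∀ i0, ∃ i, i ≠ i0 ∧ x i = x i0) : (Finset.univ.image x).card ≤ K := by
  have := Finset.mul_card_image_le_card (s := (Finset.univ : Finset (Fin (2*K)))) (f := x) 2 (by
    intro b hb
    obtain ⟨i0, _, rfl⟩ := Finset.mem_image.mp hb
    obtain ⟨i, hi, hx⟩ := h i0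
    apply Finset.one_lt_card.mpr
    exact ⟨i, by simp [hx], i0, by simp, hi⟩)
  simp at this
  omega

lemma count_small {α : Type*} [DecidableEq α] (S : Finset α) (K : ℕ) (hK : 0 < K) (T : Finset (Fin (2*K) → α))
    (hT : ∀ x ∈ T, (∀ i, x i ∈ S) ∧ (Finset.univ.image x).card ≤ K) :
    T.card ≤ S.card ^ K * K ^ (2 * K) := by
  classical
  have : T ⊆ ((Finset.univ : Finset ((Fin K → S) × (Fin (2*K) → Fin K))).image
      (fun q => fun i => (q.1 (q.2 i) : α))) := by
    intro x hx
    obtain ⟨h1, h2⟩ := hT x hx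
    rw [Finset.mem_image]
    have hK2 : 0 < 2 * K := by omega
    set Im := Finset.univ.image x with hIm
    let e := Im.equivFin
    have hmem : ∀ i, x i ∈ Im := fun i => Finset.mem_image_of_mem _ (Finset.mem_univ i)
    have hsub : ∀ y ∈ Im, y ∈ S := by
      intro y hy
      obtain ⟨i, _, rfl⟩ := Finset.mem_image.mp hy
      exact h1 i
    refine ⟨(fun k => if h : (k : ℕ) < Im.card then ⟨(e.symm ⟨k, h⟩ : α), hsub _ (e.symm ⟨k, h⟩).2⟩
      else ⟨x ⟨0, hK2⟩, h1 _⟩, fun i => Fin.castLE h2 (e ⟨x i, hmem i⟩)), Finset.mem_univ _, ?_⟩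
    funext i
    simp
  refine (Finset.card_le_card this).trans (Finset.card_image_le.trans ?_)
  simp

theorem moment {ι : Type*} [Fintype ι] [DecidableEq ι] (jj : ι → ZMod p) (S : Finset (ZMod p))
    (hS : ∀ i, jj i ∈ S) (φ : ℕ) (hφ : ∀ y, (Finset.univ.filter (fun i => jj i = y)).card ≤ φ)
    (K : ℕ) (hK : 0 < K) (hbig : 200 * K ≤ Nat.sqrt p) :
    ∑ z1 : ZMod p, ∑ z2 : ZMod p, (∑ i, chi (z1 + jj i) * chi (z2 + jj i)) ^ (2 * K)
     ≤ (p:ℝ)^2 * ((S.card:ℝ) ^ K * K ^ (2 * K) * φ ^ (2 * K)) + (Fintype.card ι : ℝ) ^ (2 * K) * ((80 * K)^2 * p) := by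
  classical
  have e1 : ∑ z1 : ZMod p, ∑ z2 : ZMod p, (∑ i, chi (z1 + jj i) * chi (z2 + jj i)) ^ (2 * K)
      = ∑ t : Fin (2*K) → ι, (∑ z : ZMod p, ∏ i, chi (z + jj (t i)))^2 := by
    have h1 : ∀ z1 z2 : ZMod p, (∑ i, chi (z1 + jj i) * chi (z2 + jj i)) ^ (2 * K) =
        ∑ t : Fin (2*K) → ι, (∏ i, chi (z1 + jj (t i))) * ∏ i, chi (z2 + jj (t i)) := by
      intro z1 z2
      rw [Fintype.sum_pow]
      exact Finset.sum_congr rfl (fun t _ => Finset.prod_mul_distrib)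
    have h2 : ∀ t : Fin (2*K) → ι, (∑ z : ZMod p, ∏ i, chi (z + jj (t i)))^2 =
      ∑ z1 : ZMod p, ∑ z2 : ZMod p, (∏ i, chi (z1 + jj (t i))) * ∏ i, chi (z2 + jj (t i)) := by
      intro t; rw [pow_two, Finset.sum_mul_sum]
    rw [Finset.sum_congr rfl (fun z1 _ => Finset.sum_congr rfl (fun z2 _ => h1 z1 z2)),
      Finset.sum_congr rfl (fun t _ => h2 t)]
    rw [Finset.sum_comm (s := (Finset.univ : Finset (Fin (2*K) → ι)))]
    apply Finset.sum_congr rfl; intro z1 _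
    rw [Finset.sum_comm]
  rw [e1]
  set P : Finset (Fin (2*K) → ι) := Finset.univ.filter (fun t => (Finset.univ.image (fun i => jj (t i))).card ≤ K) with hP
  rw [← Finset.sum_filter_add_sum_filter_not Finset.univ
    (fun t : Fin (2*K) → ι => (Finset.univ.image (fun i => jj (t i))).card ≤ K)]
  apply add_le_add
  · have hcard : P.card ≤ S.card ^ K * K ^ (2 * K) * φ ^ (2 * K) := by
      set Y := P.image (fun t => fun i => jj (t i)) with hY
      have h1 : Y.card ≤ S.card ^ K * K ^ (2 * K) := by
        apply count_small S K hK
        intro x hx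
        obtain ⟨t, ht, rfl⟩ := Finset.mem_image.mp hx
        exact ⟨fun i => hS _, (Finset.mem_filter.mp ht).2⟩
      have h2 : P.card ≤ φ ^ (2 * K) * Y.card := by
        apply Finset.card_le_mul_card_image
        intro y _
        calc _ ≤ (Fintype.piFinset (fun i : Fin (2*K) => Finset.univ.filter (fun a => jj a = y i))).card := by
              apply Finset.card_le_card
              intro t ht
              rw [Fintype.mem_piFinset]
              intro i
              have := (Finset.mem_filter.mp ht).2
              simp [← this]
          _ ≤ φ ^ (2 * K) := by
              rw [Fintype.card_piFinset]
              refine (Finset.prod_le_pow_card _ _ φ (fun i _ => hφ _)).trans ?_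
              simp
      calc P.card ≤ φ ^ (2 * K) * Y.card := h2
        _ ≤ φ ^ (2 * K) * (S.card ^ K * K ^ (2 * K)) := Nat.mul_le_mul_left _ h1
        _ = _ := by ring
    calc _ ≤ ∑ t ∈ P, (p:ℝ)^2 := by
          apply Finset.sum_le_sum
          intro t _
          rw [← sq_abs]
          gcongr
          exact charsum_triv _ _
      _ = P.card * (p:ℝ)^2 := by rw [Finset.sum_const, nsmul_eq_mul]
      _ ≤ ((S.card ^ K * K ^ (2 * K) * φ ^ (2 * K) : ℕ) : ℝ) * (p:ℝ)^2 := by gcongr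
      _ = _ := by push_cast; ring
  · calc _ ≤ ∑ t ∈ Finset.univ.filter (fun t : Fin (2*K) → ι => ¬ (Finset.univ.image (fun i => jj (t i))).card ≤ K),
          ((80 * K)^2 * p : ℝ) := by
          apply Finset.sum_le_sum
          intro t ht
          have ht := (Finset.mem_filter.mp ht).2
          have : ∃ i0, ∀ i, i ≠ i0 → jj (t i) ≠ jj (t i0) := by
            by_contra hcon
            push Not at hcon
            exact ht (image_card_le K _ hcon)
          obtain ⟨i0, hi0⟩ := this
          have h := charsum_chi (2*K) (fun i => jj (t i)) i0 hi0 (by omega)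
          rw [← sq_abs]
          calc _ ≤ (40 * ((2 * K : ℕ):ℝ) * Real.sqrt p)^2 := by gcongr
            _ = (80 * K)^2 * (Real.sqrt p)^2 := by push_cast; ring
            _ = _ := by rw [Real.sq_sqrt (by positivity)]
      _ = (Finset.univ.filter (fun t : Fin (2*K) → ι => ¬ (Finset.univ.image (fun i => jj (t i))).card ≤ K)).card * ((80 * K)^2 * p : ℝ) := by
          rw [Finset.sum_const, nsmul_eq_mul]
      _ ≤ _ := by
          gcongr
          have := Finset.card_filter_le (Finset.univ : Finset (Fin (2*K) → ι)) (fun t => ¬ (Finset.univ.image (fun i => jj (t i))).card ≤ K)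
          rw [Finset.card_univ, Fintype.card_pi] at this
          simp only [Finset.prod_const, Finset.card_univ, Fintype.card_fin] at this
          exact_mod_cast this

end Moment
end Kor
end PartP2

section PartP3
namespace Kor
section Words

/-- continuant pair: first column of the product of the matrices `!![x i, 1; 1, 0]` -/
def con : (m : ℕ) → (Fin m → ℤ) → ℤ × ℤ
  | 0, _ => (1, 0)
  | m+1, x => (x 0 * (con m (Fin.tail x)).1 + (con m (Fin.tail x)).2, (con m (Fin.tail x)).1)

lemma con_upper (N : ℤ) (hN : 1 ≤ N) (m : ℕ) (x : Fin m → ℤ) (hx : ∀ i, |x i| + 1 ≤ N) :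
    |(con m x).1| ≤ N ^ m ∧ |(con m x).2| ≤ N ^ m := by
  induction m with
  | zero => simp [con]
  | succ m ih =>
    obtain ⟨h1, h2⟩ := ih (Fin.tail x) (fun i => hx _)
    have h0 := hx 0
    have hpos : 0 < N ^ m := by positivity
    simp only [con]
    constructor
    · calc |x 0 * (con m (Fin.tail x)).1 + (con m (Fin.tail x)).2|
          ≤ |x 0| * |(con m (Fin.tail x)).1| + |(con m (Fin.tail x)).2| := by
            rw [← abs_mul]; exact abs_add_le _ _
        _ ≤ (N - 1) * N ^ m + N ^ m := by
            apply add_le_add _ h2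
            apply mul_le_mul (by linarith) h1 (abs_nonneg _) (by linarith)
        _ = N ^ (m+1) := by ring
    · calc _ ≤ N ^ m := h1
        _ ≤ N ^ (m+1) := by rw [pow_succ]; nlinarith

lemma con_lower (s : ℤ) (hs : 4 ≤ s) (m : ℕ) (x : Fin m → ℤ) (hx : ∀ i, s ≤ |x i|) :
    (s - 1) * |(con m x).2| ≤ |(con m x).1| ∧ (con m x).1 ≠ 0 := by
  induction m with
  | zero => simp [con]
  | succ m ih =>
    obtain ⟨h1, h2⟩ := ih (Fin.tail x) (fun i => hx _)
    have h0 := hx 0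
    set Y := (con m (Fin.tail x)).1
    set Y' := (con m (Fin.tail x)).2
    have hY : 0 < |Y| := abs_pos.mpr h2
    have hle : |Y'| ≤ |Y| := by nlinarith [abs_nonneg Y']
    have key : (s - 1) * |Y| ≤ |x 0 * Y + Y'| := by
      have := abs_sub_abs_le_abs_sub (x 0 * Y) (-Y')
      rw [abs_mul, abs_neg, sub_neg_eq_add] at this
      nlinarith
    simp only [con]
    refine ⟨key, ?_⟩
    intro h
    change x 0 * Y + Y' = 0 at h
    rw [h, abs_zero] at key
    nlinarith

lemma con_inj (s : ℤ) (hs : 4 ≤ s) (m : ℕ) (x y : Fin m → ℤ) (hx : ∀ i, s ≤ |x i|)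
    (hy : ∀ i, s ≤ |y i|) (h : con m x = con m y) : x = y := by
  induction m with
  | zero => exact Subsingleton.elim _ _
  | succ m ih =>
    simp only [con, Prod.mk.injEq] at h
    obtain ⟨h1, h2⟩ := h
    obtain ⟨a1, a2⟩ := con_lower s hs m (Fin.tail x) (fun i => hx _)
    obtain ⟨b1, _⟩ := con_lower s hs m (Fin.tail y) (fun i => hy _)
    rw [← h2] at b1 h1
    set Y := (con m (Fin.tail x)).1 with hYdef
    set U := (con m (Fin.tail x)).2 with hU
    set V := (con m (Fin.tail y)).2 with hV
    have hY : 0 < |Y| := abs_pos.mpr a2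
    have h3 : (x 0 - y 0) * Y = V - U := by linarith
    have h4 : |x 0 - y 0| * |Y| ≤ |V| + |U| := by
      rw [← abs_mul, h3]; exact abs_sub _ _
    have h5 : x 0 = y 0 := by
      by_contra hne
      have : 1 ≤ |x 0 - y 0| := Int.one_le_abs (sub_ne_zero.mpr hne)
      nlinarith [abs_nonneg U, abs_nonneg V]
    have h6 : U = V := by rw [h5] at h3; linarith
    have h7 := ih (Fin.tail x) (Fin.tail y) (fun i => hx _) (fun i => hy _) (Prod.ext h2 h6)
    rw [← Fin.cons_self_tail x, ← Fin.cons_self_tail y, h5, h7]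

/-- good digit words -/
def Good (p s B : ℕ) (m : ℕ) (x : Fin m → ℤ) : Prop :=
  (∀ i, (s : ℤ) ≤ |x i|) ∧ ∀ b : ℕ, 1 ≤ b → b ≤ B → ∀ l : ℤ,
    2 * |(con m x).1| < |b * (con m x).1 - l * p| * (s - 1)

lemma int_eq_of_modEq {p : ℕ} {a b : ℤ} (h : (a : ZMod p) = b) (ha : 2 * |a| < p) (hb : 2 * |b| < p) : a = b := by
  rw [ZMod.intCast_eq_intCast_iff, Int.modEq_iff_dvd] at h
  have h2 := Int.eq_zero_of_abs_lt_dvd h (by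
    have := abs_sub b a
    linarith)
  linarith

/-- a set of integers in an interval with large gaps is small -/
lemma gap_card (Z : Finset ℤ) (N B : ℕ) (h1 : ∀ d ∈ Z, |d| < N)
    (h2 : ∀ d ∈ Z, ∀ d' ∈ Z, d' < d → (B : ℤ) < d - d') : Z.card ≤ 2 * N / (B + 1) + 1 := by
  have : Z.card ≤ (Finset.range (2 * N / (B + 1) + 1)).card := by
    apply Finset.card_le_card_of_injOn (fun d : ℤ => (d + N).toNat / (B + 1))
    · intro d hd
      have := h1 d hd
      rw [abs_lt] at this
      simp only [Finset.coe_range, Set.mem_Iio]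
      apply Nat.lt_succ_of_le
      apply Nat.div_le_div_right
      omega
    · have key : ∀ d ∈ Z, ∀ d' ∈ Z, d' < d → (d + N).toNat / (B + 1) ≠ (d' + N).toNat / (B + 1) := by
        intro d hd d' hd' hlt heq
        have e1 := abs_lt.mp (h1 d hd)
        have e2 := abs_lt.mp (h1 d' hd')
        have e3 := h2 d hd d' hd' hlt
        have f1 := Nat.div_add_mod (d + N).toNat (B+1)
        have f2 := Nat.div_add_mod (d' + N).toNat (B+1)
        have f3 : (d + N).toNat % (B+1) < B + 1 := Nat.mod_lt _ (Nat.succ_pos B)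
        rw [heq] at f1
        have : (d + N).toNat < (d' + N).toNat + (B + 1) := by omega
        omega
      intro d hd d' hd' heq
      rcases lt_trichotomy d d' with h | h | h
      · exact absurd heq.symm (key d' hd' d hd h)
      · exact h
      · exact absurd heq (key d hd d' hd' h)
  simpa using this

variable {I : Type*} [Fintype I] (dig : I → ℤ) (p N s B m : ℕ)

lemma sup_digits (hp : 2 * N ^ m < p) (hs : 4 ≤ s) (v : ZMod p × ZMod p)
    (Z : Finset (ℤ × (Fin m → ℤ)))
    (hZ : ∀ z ∈ Z, |z.1| + 1 ≤ N ∧ (∀ i, |z.2 i| + 1 ≤ N) ∧ Good p s B m z.2 ∧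
      ((z.1 * (con m z.2).1 + (con m z.2).2 : ℤ) : ZMod p) = v.1 ∧ (((con m z.2).1 : ℤ) : ZMod p) = v.2) :
    Z.card ≤ 2 * N / (B + 1) + 1 := by
  classical
  rcases Z.eq_empty_or_nonempty with rfl | ⟨z0, hz0⟩
  · simp
  have hN : 1 ≤ (N : ℤ) := by have := (hZ z0 hz0).1; have := abs_nonneg z0.1; linarith
  have hp' : 2 * (N : ℤ) ^ m < p := by exact_mod_cast hp
  have hs' : (4 : ℤ) ≤ s := by exact_mod_cast hs
  -- facts about two elements
  have key : ∀ z ∈ Z, ∀ z' ∈ Z, (con m z.2).1 = (con m z'.2).1 ∧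
      (z.1 = z'.1 → z = z') ∧ (z'.1 < z.1 → (B : ℤ) < z.1 - z'.1) := by
    intro z hz z' hz'
    obtain ⟨a1, a2, a3, a4, a5⟩ := hZ z hz
    obtain ⟨b1, b2, b3, b4, b5⟩ := hZ z' hz'
    obtain ⟨u1, u2⟩ := con_upper N hN m z.2 a2
    obtain ⟨u3, u4⟩ := con_upper N hN m z'.2 b2
    obtain ⟨l1, l2⟩ := con_lower s hs' m z.2 a3.1
    obtain ⟨l3, l4⟩ := con_lower s hs' m z'.2 b3.1
    have hY : (con m z.2).1 = (con m z'.2).1 :=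
      int_eq_of_modEq (p := p) (by rw [a5, b5]) (by linarith) (by linarith)
    refine ⟨hY, ?_, ?_⟩
    · intro h
      have h2 : (con m z.2).2 = (con m z'.2).2 := by
        apply int_eq_of_modEq (p := p) _ (by linarith) (by linarith)
        have := a4.trans b4.symm
        rw [hY, h] at this
        push_cast at this
        exact add_left_cancel this
      exact Prod.ext h (con_inj s hs' m _ _ a3.1 b3.1 (Prod.ext hY h2))
    · intro h
      by_contra hcon
      push Not at hcon
      obtain ⟨b, hb⟩ : ∃ b : ℕ, (b : ℤ) = z.1 - z'.1 := ⟨(z.1 - z'.1).toNat, by omega⟩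
      have hd : (((z.1 * (con m z.2).1 + (con m z.2).2 : ℤ)) : ZMod p) =
          ((z'.1 * (con m z'.2).1 + (con m z'.2).2 : ℤ) : ZMod p) := a4.trans b4.symm
      rw [ZMod.intCast_eq_intCast_iff, Int.modEq_iff_dvd] at hd
      obtain ⟨l, hl⟩ := hd
      have hg := a3.2 b (by omega) (by omega) (-l)
      have e : (b : ℤ) * (con m z.2).1 - (-l) * p = (con m z'.2).2 - (con m z.2).2 := by
        rw [hb]; rw [← hY] at hl; linarith
      rw [e] at hg
      have h9 := abs_sub (con m z'.2).2 (con m z.2).2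
      rw [← hY] at l3
      nlinarith
  have hinj : Set.InjOn Prod.fst (Z : Set (ℤ × (Fin m → ℤ))) := fun z hz z' hz' h => (key z hz z' hz').2.1 h
  rw [← Finset.card_image_of_injOn hinj]
  apply gap_card
  · intro d hd
    obtain ⟨z, hz, rfl⟩ := Finset.mem_image.mp hd
    have := (hZ z hz).1
    linarith
  · intro d hd d' hd' h
    obtain ⟨z, hz, rfl⟩ := Finset.mem_image.mp hd
    obtain ⟨z', hz', rfl⟩ := Finset.mem_image.mp hd'
    exact (key z hz z' hz').2.2 h

open Classical in
/-- SUP bound -/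
lemma sup_count (hfib : ∀ d, (Finset.univ.filter (fun i => dig i = d)).card ≤ N)
    (hdig : ∀ i, |dig i| + 1 ≤ N) (hp : 2 * N ^ m < p) (hs : 4 ≤ s) (v : ZMod p × ZMod p) :
    (Finset.univ.filter (fun w : I × (Fin m → I) => Good p s B m (dig ∘ w.2) ∧
      ((dig w.1 * (con m (dig ∘ w.2)).1 + (con m (dig ∘ w.2)).2 : ℤ) : ZMod p) = v.1 ∧
      (((con m (dig ∘ w.2)).1 : ℤ) : ZMod p) = v.2)).card ≤ N ^ (m + 1) * (2 * N / (B + 1) + 1) := by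
  set P := (Finset.univ.filter (fun w : I × (Fin m → I) => Good p s B m (dig ∘ w.2) ∧
      ((dig w.1 * (con m (dig ∘ w.2)).1 + (con m (dig ∘ w.2)).2 : ℤ) : ZMod p) = v.1 ∧
      (((con m (dig ∘ w.2)).1 : ℤ) : ZMod p) = v.2)) with hP
  let ψ : I × (Fin m → I) → ℤ × (Fin m → ℤ) := fun w => (dig w.1, dig ∘ w.2)
  have h1 : (P.image ψ).card ≤ 2 * N / (B + 1) + 1 := by
    apply sup_digits p N s B m hp hs v
    intro z hz
    obtain ⟨w, hw, rfl⟩ := Finset.mem_image.mp hz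
    have := (Finset.mem_filter.mp hw).2
    exact ⟨hdig _, fun i => hdig _, this⟩
  have h2 : P.card ≤ N ^ (m + 1) * (P.image ψ).card := by
    apply Finset.card_le_mul_card_image
    intro z _
    calc _ ≤ ((Finset.univ.filter (fun i => dig i = z.1)) ×ˢ
          Fintype.piFinset (fun j : Fin m => Finset.univ.filter (fun i => dig i = z.2 j))).card := by
          apply Finset.card_le_card
          intro w hw
          have := (Finset.mem_filter.mp hw).2
          rw [Finset.mem_product, Fintype.mem_piFinset]
          simp [← this, ψ]
      _ ≤ N * N ^ m := by
          rw [Finset.card_product, Fintype.card_piFinset]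
          apply Nat.mul_le_mul (hfib _)
          refine (Finset.prod_le_pow_card _ _ N (fun i _ => hfib _)).trans ?_
          simp
      _ = N ^ (m+1) := by ring
  exact h2.trans (Nat.mul_le_mul_left _ h1)

end Words
end Kor
end PartP3

section PartP3b
namespace Kor
section Words2

/-- a set of integers with bounded differences is small -/
lemma diam_card (Z : Finset ℤ) (R : ℕ) (h : ∀ d ∈ Z, ∀ d' ∈ Z, d - d' ≤ R) : Z.card ≤ R + 1 := by
  rcases Z.eq_empty_or_nonempty with rfl | hne
  · simp
  have : Z ⊆ Finset.Icc (Z.min' hne) (Z.min' hne + R) := by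
    intro d hd
    rw [Finset.mem_Icc]
    exact ⟨Finset.min'_le _ _ hd, by have := h d hd _ (Finset.min'_mem Z hne); linarith⟩
  refine (Finset.card_le_card this).trans ?_
  rw [Int.card_Icc]; omega

variable {I : Type*} [Fintype I] (dig : I → ℤ) (p N s B m : ℕ)

lemma fib_count (hfib : ∀ d, (Finset.univ.filter (fun i => dig i = d)).card ≤ N) (Z : Finset ℤ) (T : Finset I)
    (hT : ∀ i ∈ T, dig i ∈ Z) : T.card ≤ N * Z.card := by
  classical
  have h1 : T.card ≤ N * (T.image dig).card := by
    apply Finset.card_le_mul_card_image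
    intro d _
    refine le_trans (Finset.card_le_card ?_) (hfib d)
    intro i hi
    have := (Finset.mem_filter.mp hi).2
    simp [this]
  refine h1.trans (Nat.mul_le_mul_left _ (Finset.card_le_card ?_))
  intro d hd
  obtain ⟨i, hi, rfl⟩ := Finset.mem_image.mp hd
  exact hT i hi

lemma bad_digits (hs : 4 ≤ s) (Y U : ℤ) (hY : Y ≠ 0) (b : ℕ) (hb : 1 ≤ b) (l : ℤ) (Z : Finset ℤ)
    (hZ : ∀ d ∈ Z, |b * (d * Y + U) - l * p| * (s - 1) ≤ 2 * (N * |Y|)) : Z.card ≤ 4 * N / (s - 1) + 1 := by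
  apply diam_card
  intro d hd d' hd'
  by_contra hcon
  push Not at hcon
  have hs1 : ((s - 1 : ℕ) : ℤ) = (s : ℤ) - 1 := by omega
  have h1 := hZ d hd
  have h2 := hZ d' hd'
  have hYp : 0 < |Y| := abs_pos.mpr hY
  have h3 : |(d - d') * (b * Y)| ≤ |b * (d * Y + U) - l * p| + |b * (d' * Y + U) - l * p| := by
    have e : (d - d') * (b * Y) = (b * (d * Y + U) - l * p) - (b * (d' * Y + U) - l * p) := by ring
    rw [e]; exact abs_sub _ _
  have hs' : (4:ℤ) ≤ s := by exact_mod_cast hs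
  have h0 : 0 < d - d' := by
    have : (0:ℤ) ≤ ((4 * N / (s - 1) : ℕ) : ℤ) := by positivity
    linarith
  have h4 : (d - d') * |Y| ≤ |(d - d') * (b * Y)| := by
    rw [abs_mul, abs_mul, abs_of_pos h0]
    have : (1:ℤ) ≤ |(b:ℤ)| := by rw [abs_of_nonneg (by positivity)]; exact_mod_cast hb
    apply mul_le_mul_of_nonneg_left _ h0.le
    nlinarith
  have h5 : (d - d') * |Y| * (s - 1) ≤ 4 * N * |Y| := by nlinarith
  have h6 : (d - d') * (s - 1) ≤ 4 * N := by nlinarith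
  have h7 : 4 * N < (s - 1) * (4 * N / (s - 1) + 1) := by
    have := Nat.div_add_mod (4 * N) (s - 1)
    have := Nat.mod_lt (4 * N) (by omega : 0 < s - 1)
    rw [mul_add]; omega
  have h8 : (4 * N : ℤ) < ((s:ℤ) - 1) * (((4 * N / (s - 1) : ℕ) : ℤ) + 1) := by
    rw [← hs1]; exact_mod_cast h7
  nlinarith

open Classical in
lemma bad_count (hI : Fintype.card I = N ^ 2) (hfib : ∀ d, (Finset.univ.filter (fun i => dig i = d)).card ≤ N)
    (hdig : ∀ i, |dig i| + 1 ≤ N) (hp : 2 * N ^ (m+1) < p) (hs : 4 ≤ s) :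
    (Finset.univ.filter (fun e : Fin (m+1) → I => ¬ Good p s B (m+1) (dig ∘ e))).card ≤
      (m + 1) * (N * (2 * s)) * (N ^ 2) ^ m + N * (B * (2 * B + 1) * (4 * N / (s - 1) + 1)) * (N ^ 2) ^ m := by
  set P1 := (Finset.univ : Finset (Fin (m+1))).biUnion (fun i => Finset.univ.filter (fun e : Fin (m+1) → I => |dig (e i)| < s)) with hP1
  set P2 := Finset.univ.filter (fun e : Fin (m+1) → I => (∀ i, (s:ℤ) ≤ |dig (e i)|) ∧ ¬ Good p s B (m+1) (dig ∘ e)) with hP2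
  have hsub : Finset.univ.filter (fun e : Fin (m+1) → I => ¬ Good p s B (m+1) (dig ∘ e)) ⊆ P1 ∪ P2 := by
    intro e he
    have he := (Finset.mem_filter.mp he).2
    rw [Finset.mem_union]
    by_cases h : ∀ i, (s:ℤ) ≤ |dig (e i)|
    · right; simp [hP2, he, h]
    · left; push Not at h; simpa [hP1] using h
  refine (Finset.card_le_card hsub).trans ((Finset.card_union_le _ _).trans (Nat.add_le_add ?_ ?_))
  · refine Finset.card_biUnion_le.trans ?_
    have : ∀ i ∈ (Finset.univ : Finset (Fin (m+1))), (Finset.univ.filter (fun e : Fin (m+1) → I => |dig (e i)| < s)).card ≤ N * (2 * s) * (N ^ 2) ^ m := by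
      intro i _
      have e1 : Finset.univ.filter (fun e : Fin (m+1) → I => |dig (e i)| < s) ⊆
          Fintype.piFinset (fun j : Fin (m+1) => if j = i then Finset.univ.filter (fun a => |dig a| < s) else Finset.univ) := by
        intro e he
        have he := (Finset.mem_filter.mp he).2
        rw [Fintype.mem_piFinset]
        intro j
        split_ifs with h
        · subst h; simpa using he
        · simp
      refine (Finset.card_le_card e1).trans ?_
      rw [Fintype.card_piFinset, ← Finset.mul_prod_erase _ _ (Finset.mem_univ i)]
      apply Nat.mul_le_mul
      · rw [if_pos rfl]
        refine (fib_count dig N hfib (Finset.Ioo (-(s:ℤ)) s) _ ?_).trans ?_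
        · intro a ha
          have := (Finset.mem_filter.mp ha).2
          rw [Finset.mem_Ioo]; exact abs_lt.mp this
        · apply Nat.mul_le_mul_left
          rw [Int.card_Ioo]; omega
      · rw [Finset.prod_congr rfl (g := fun _ => N ^ 2)]
        · simp
        · intro j hj
          rw [if_neg (Finset.ne_of_mem_erase hj), Finset.card_univ, hI]
    refine (Finset.sum_le_sum this).trans ?_
    simp [mul_assoc]
  · have h1 : P2.card ≤ N * (B * (2 * B + 1) * (4 * N / (s - 1) + 1)) * (Finset.univ : Finset (Fin m → I)).card := by
      apply Finset.card_le_mul_card_image_of_maps_to (f := fun e => Fin.tail e) (fun _ _ => Finset.mem_univ _)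
      intro t _
      set Y := (con m (dig ∘ t)).1 with hY
      set U := (con m (dig ∘ t)).2 with hU
      by_cases hlow : ∀ i, (s:ℤ) ≤ |dig (t i)|
      swap
      · have : P2.filter (fun e => Fin.tail e = t) = ∅ := by
          apply Finset.filter_eq_empty_iff.mpr
          intro e he h
          apply hlow
          intro i
          rw [← h]
          exact (Finset.mem_filter.mp he).2.1 i.succ
        rw [this]; simp
      have hs' : (4:ℤ) ≤ s := by exact_mod_cast hs
      obtain ⟨l1, l2⟩ := con_lower s hs' m (dig ∘ t) hlow
      have hYp : 0 < |Y| := abs_pos.mpr l2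
      have hUY : |U| ≤ |Y| := by
        change (s - 1 : ℤ) * |U| ≤ |Y| at l1
        nlinarith [abs_nonneg U]
      -- digits set
      let Zbl : ℕ × ℤ → Finset ℤ := fun q => (Finset.Ioo (-(N:ℤ)) N).filter
        (fun d => |q.1 * (d * Y + U) - q.2 * p| * (s - 1) ≤ 2 * (N * |Y|))
      let ZZ : Finset ℤ := ((Finset.Icc 1 B) ×ˢ (Finset.Icc (-(B:ℤ)) B)).biUnion Zbl
      have hZZ : ZZ.card ≤ B * (2 * B + 1) * (4 * N / (s - 1) + 1) := by
        refine (Finset.card_biUnion_le_card_mul _ _ (4 * N / (s - 1) + 1) ?_).trans ?_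
        · intro q hq
          rw [Finset.mem_product, Finset.mem_Icc] at hq
          apply bad_digits p N s hs Y U l2 q.1 hq.1.1 q.2
          intro d hd
          exact (Finset.mem_filter.mp hd).2
        · apply Nat.mul_le_mul_right
          rw [Finset.card_product, Nat.card_Icc, Int.card_Icc]
          apply Nat.mul_le_mul <;> omega
      have hinj : Set.InjOn (fun e : Fin (m+1) → I => e 0) (P2.filter (fun e => Fin.tail e = t) : Finset _) := by
        intro e he e' he' h
        have a1 := (Finset.mem_filter.mp he).2
        have a2 := (Finset.mem_filter.mp he').2
        rw [← Fin.cons_self_tail e, ← Fin.cons_self_tail e', a1, a2]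
        simp only at h
        rw [h]
      rw [← Finset.card_image_of_injOn hinj]
      refine (fib_count dig N hfib ZZ _ ?_).trans (Nat.mul_le_mul_left _ hZZ)
      intro i hi
      obtain ⟨e, he, rfl⟩ := Finset.mem_image.mp hi
      obtain ⟨he1, he2⟩ := Finset.mem_filter.mp he
      obtain ⟨_, hdl, hng⟩ := Finset.mem_filter.mp he1
      have hcon : (con (m+1) (dig ∘ e)).1 = dig (e 0) * Y + U := by
        have : Fin.tail (dig ∘ e) = dig ∘ t := by rw [← he2]; rfl
        simp only [con, this]; rfl
      unfold Good at hng
      push Not at hng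
      obtain ⟨b, hb1, hb2, l, hl⟩ := hng hdl
      have hN1 : (1:ℤ) ≤ N := by have := hdig (e 0); have := abs_nonneg (dig (e 0)); linarith
      have hup := (con_upper N hN1 (m+1) (dig ∘ e) (fun i => hdig _)).1
      have hne := (con_lower s hs' (m+1) (dig ∘ e) hdl).2
      rw [hcon] at hl hup hne
      set D := dig (e 0) with hD
      have hW : |D * Y + U| ≤ N * |Y| := by
        have h1 := abs_add_le (D * Y) U
        rw [abs_mul] at h1
        have h2 := hdig (e 0)
        nlinarith
      have hWp : 0 < |D * Y + U| := abs_pos.mpr hne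
      have hp' : 2 * (N : ℤ) ^ (m+1) < p := by exact_mod_cast hp
      set W := D * Y + U with hWdef
      have hlB : |l| ≤ B := by
        have h1 : |l * p| ≤ |b * W| + |b * W - l * p| := by
          have e : l * p = b * W - (b * W - l * p) := by ring
          calc |l * p| = |b * W - (b * W - l * p)| := by rw [← e]
            _ ≤ _ := abs_sub _ _
        have h2 : |b * W - l * p| ≤ |W| := by nlinarith [abs_nonneg (b * W - l * p)]
        rw [abs_mul, abs_mul, abs_of_nonneg (by positivity : (0:ℤ) ≤ p), abs_of_nonneg (by positivity : (0:ℤ) ≤ b)] at h1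
        have hbB : (b : ℤ) ≤ B := by exact_mod_cast hb2
        have hb0 : (1 : ℤ) ≤ b := by exact_mod_cast hb1
        have h3 : |l| * p < (B + 1) * p := by nlinarith
        have h4 : |l| < B + 1 := lt_of_mul_lt_mul_right h3 (by positivity)
        linarith
      rw [abs_le] at hlB
      refine Finset.mem_biUnion.mpr ⟨(b, l), ?_, ?_⟩
      · rw [Finset.mem_product, Finset.mem_Icc, Finset.mem_Icc]; exact ⟨⟨hb1, hb2⟩, hlB⟩
      · rw [Finset.mem_filter, Finset.mem_Ioo]
        refine ⟨abs_lt.mp (by have := hdig (e 0); linarith), ?_⟩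
        exact hl.trans (by linarith)
    refine h1.trans ?_
    rw [Finset.card_univ, Fintype.card_pi]
    simp [hI]

end Words2
end Kor
end PartP3b

section PartP3c
namespace Kor
section Coll
variable {p : ℕ} [hp : Fact p.Prime]

abbrev Mat (p : ℕ) := Matrix (Fin 2) (Fin 2) (ZMod p)

/-- lower-left entry of `adj g' * g` -/
def cc (g' g : Mat p) : ZMod p := g' 0 0 * g 1 0 - g' 1 0 * g 0 0

/-- trace of `adj g' * g` -/
def tt (g' g : Mat p) : ZMod p := g' 1 1 * g 0 0 - g' 0 1 * g 1 0 - g' 1 0 * g 0 1 + g' 0 0 * g 1 1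

def col (g : Mat p) : ZMod p × ZMod p := (g 0 0, g 1 0)

variable {ω : Type*} (G : Finset ω) (mat : ω → Mat p) (ς : ZMod p) (σ : ℕ)

lemma count_three {α β : Type*} (A : Finset α) (B : Finset β) (P : α → β → Prop) [∀ a b, Decidable (P a b)] (k : ℕ)
    (h : ∀ a ∈ A, (B.filter (fun b => P a b)).card ≤ k) :
    ((A ×ˢ B).filter (fun q => P q.1 q.2)).card ≤ A.card * k := by
  classical
  have : ((A ×ˢ B).filter (fun q => P q.1 q.2)).card = ∑ a ∈ A, (B.filter (fun b => P a b)).card := by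
    simp_rw [Finset.card_filter]
    rw [Finset.sum_product]
  rw [this]
  refine (Finset.sum_le_sum h).trans ?_
  simp

lemma col_eq_of (x y z w a b c d e t ς : ZMod p) (hdet : x * w - y * z = ς)
    (hac : (a, c) ≠ (0, 0)) (h1 : x * c - z * a = 0) (hxz : (x, z) = (t * a, t * c))
    (h2 : w * a - y * c - z * b + x * d = 0) (ht : t ≠ 0) (_he : e = 0) :
    t ^ 2 * (a * d - b * c) = - ς := by
  obtain ⟨rfl, rfl⟩ := Prod.mk.inj hxz
  linear_combination (-1) * hdet + t * h2

lemma two_values (a b c d ς : ZMod p) (hς : ς ≠ 0) (hac : (a, c) ≠ (0, 0)) :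
    ∃ u1 u2 : ZMod p × ZMod p, ∀ x y z w : ZMod p, x * w - y * z = ς → x * c - z * a = 0 →
      w * a - y * c - z * b + x * d = 0 → (x, z) = u1 ∨ (x, z) = u2 := by
  have hpar : ∀ x z : ZMod p, x * c - z * a = 0 → ∃ t, (x, z) = (t * a, t * c) := by
    intro x z h
    by_cases ha : a = 0
    · have hc : c ≠ 0 := by rintro rfl; exact hac (by rw [ha])
      refine ⟨z / c, ?_⟩
      subst ha
      have hx : x = 0 := by simpa [hc] using h
      rw [hx]; ext <;> simp [hc]
    · refine ⟨x / a, ?_⟩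
      have : z = x * c / a := by field_simp; linear_combination -h
      rw [this]; field_simp
  by_cases hex : ∃ t0 : ZMod p, t0 ^ 2 * (a * d - b * c) = - ς
  · obtain ⟨t0, ht0⟩ := hex
    refine ⟨(t0 * a, t0 * c), (-t0 * a, -t0 * c), ?_⟩
    intro x y z w hd h1 h2
    obtain ⟨t, ht⟩ := hpar x z h1
    have ht' : t ≠ 0 := by
      rintro rfl
      obtain ⟨rfl, rfl⟩ := Prod.mk.inj ht
      apply hς; rw [← hd]; ring
    have h3 := col_eq_of x y z w a b c d 0 t ς hd hac h1 ht h2 ht' rfl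
    have hdel : a * d - b * c ≠ 0 := by
      intro h; rw [h, mul_zero] at h3; exact hς (neg_eq_zero.mp h3.symm)
    have h4 : t ^ 2 = t0 ^ 2 := mul_right_cancel₀ hdel (h3.trans ht0.symm)
    rcases sq_eq_sq_iff_eq_or_eq_neg.mp h4 with h | h
    · left; rw [ht, h]
    · right; rw [ht, h]
  · refine ⟨0, 0, ?_⟩
    intro x y z w hd h1 h2
    exfalso
    obtain ⟨t, ht⟩ := hpar x z h1
    have ht' : t ≠ 0 := by
      rintro rfl
      obtain ⟨rfl, rfl⟩ := Prod.mk.inj ht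
      apply hς; rw [← hd]; ring
    exact hex ⟨t, col_eq_of x y z w a b c d 0 t ς hd hac h1 ht h2 ht' rfl⟩

open Classical in
lemma coll_count (hς : ς ≠ 0) (hdet : ∀ g ∈ G, mat g 0 0 * mat g 1 1 - mat g 0 1 * mat g 1 0 = ς)
    (hσ : ∀ v, (G.filter (fun g => col (mat g) = v)).card ≤ σ) :
    (((G ×ˢ G) ×ˢ G).filter (fun q => cc (mat q.2) (mat q.1.1) = cc (mat q.2) (mat q.1.2) ∧
      tt (mat q.2) (mat q.1.1) = tt (mat q.2) (mat q.1.2))).card ≤ 3 * σ * G.card ^ 2 := by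
  set P1 := ((G ×ˢ G) ×ˢ G).filter (fun q => col (mat q.1.1) = col (mat q.1.2))
  set P2 := ((G ×ˢ G) ×ˢ G).filter (fun q => col (mat q.1.1) ≠ col (mat q.1.2) ∧
      cc (mat q.2) (mat q.1.1) = cc (mat q.2) (mat q.1.2) ∧
      tt (mat q.2) (mat q.1.1) = tt (mat q.2) (mat q.1.2))
  have hsub : ((G ×ˢ G) ×ˢ G).filter (fun q => cc (mat q.2) (mat q.1.1) = cc (mat q.2) (mat q.1.2) ∧
      tt (mat q.2) (mat q.1.1) = tt (mat q.2) (mat q.1.2)) ⊆ P1 ∪ P2 := by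
    intro q hq
    obtain ⟨h1, h2⟩ := Finset.mem_filter.mp hq
    rw [Finset.mem_union]
    by_cases h : col (mat q.1.1) = col (mat q.1.2)
    · left; exact Finset.mem_filter.mpr ⟨h1, h⟩
    · right; exact Finset.mem_filter.mpr ⟨h1, h, h2⟩
  have hP1 : P1.card ≤ σ * G.card ^ 2 := by
    have e : P1 = ((G ×ˢ G).filter (fun q => col (mat q.1) = col (mat q.2))) ×ˢ G := by
      ext q; simp only [P1, Finset.mem_filter, Finset.mem_product]; tauto
    rw [e, Finset.card_product]
    have := count_three G G (fun a b => col (mat a) = col (mat b)) σ (fun a _ => by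
      refine le_trans (Finset.card_le_card ?_) (hσ (col (mat a)))
      intro b hb
      obtain ⟨h1, h2⟩ := Finset.mem_filter.mp hb
      exact Finset.mem_filter.mpr ⟨h1, h2.symm⟩)
    calc _ ≤ G.card * σ * G.card := Nat.mul_le_mul_right _ this
      _ = _ := by ring
  have hP2 : P2.card ≤ 2 * σ * G.card ^ 2 := by
    have := count_three (G ×ˢ G) G (fun a b => col (mat a.1) ≠ col (mat a.2) ∧
      cc (mat b) (mat a.1) = cc (mat b) (mat a.2) ∧
      tt (mat b) (mat a.1) = tt (mat b) (mat a.2)) (2 * σ) (by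
        intro a ha
        by_cases hne : col (mat a.1) = col (mat a.2)
        · simp [hne]
        obtain ⟨u1, u2, hu⟩ := two_values (mat a.1 0 0 - mat a.2 0 0) (mat a.1 0 1 - mat a.2 0 1)
          (mat a.1 1 0 - mat a.2 1 0) (mat a.1 1 1 - mat a.2 1 1) ς hς (by
            intro h
            obtain ⟨h1, h2⟩ := Prod.mk.inj h
            exact hne (Prod.ext (sub_eq_zero.mp h1) (sub_eq_zero.mp h2)))
        have hs : G.filter (fun b => col (mat a.1) ≠ col (mat a.2) ∧
            cc (mat b) (mat a.1) = cc (mat b) (mat a.2) ∧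
            tt (mat b) (mat a.1) = tt (mat b) (mat a.2)) ⊆
            G.filter (fun g => col (mat g) = u1) ∪ G.filter (fun g => col (mat g) = u2) := by
          intro b hb
          obtain ⟨hb1, _, hb2, hb3⟩ := Finset.mem_filter.mp hb
          unfold cc at hb2
          unfold tt at hb3
          rw [Finset.mem_union, Finset.mem_filter, Finset.mem_filter]
          rcases hu (mat b 0 0) (mat b 0 1) (mat b 1 0) (mat b 1 1) (hdet b hb1)
            (by linear_combination hb2) (by linear_combination hb3) with h | h
          · left; exact ⟨hb1, h⟩
          · right; exact ⟨hb1, h⟩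
        refine (Finset.card_le_card hs).trans ((Finset.card_union_le _ _).trans ?_)
        have := hσ u1
        have := hσ u2
        omega)
    calc _ ≤ _ := this
      _ = _ := by rw [Finset.card_product]; ring
  calc _ ≤ _ := Finset.card_le_card hsub
    _ ≤ _ := Finset.card_union_le _ _
    _ ≤ σ * G.card ^ 2 + 2 * σ * G.card ^ 2 := Nat.add_le_add hP1 hP2
    _ = _ := by ring

open Classical in
lemma czero_count (hς : ς ≠ 0) (hdet : ∀ g ∈ G, mat g 0 0 * mat g 1 1 - mat g 0 1 * mat g 1 0 = ς)
    (hσ : ∀ v, (G.filter (fun g => col (mat g) = v)).card ≤ σ) :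
    ((G ×ˢ G).filter (fun q => cc (mat q.1) (mat q.2) = 0)).card ≤ G.card * (p * σ) := by
  apply count_three G G (fun a b => cc (mat a) (mat b) = 0)
  intro a ha
  have hs : G.filter (fun b => cc (mat a) (mat b) = 0) ⊆
      (Finset.univ : Finset (ZMod p)).biUnion (fun t => G.filter (fun b => col (mat b) = (t * mat a 0 0, t * mat a 1 0))) := by
    intro b hb
    obtain ⟨hb1, hb2⟩ := Finset.mem_filter.mp hb
    rw [Finset.mem_biUnion]
    have hd := hdet a ha
    unfold cc at hb2
    by_cases h0 : mat a 0 0 = 0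
    · have h1 : mat a 1 0 ≠ 0 := by
        intro h; apply hς; rw [← hd, h0, h]; ring
      refine ⟨mat b 1 0 / mat a 1 0, Finset.mem_univ _, Finset.mem_filter.mpr ⟨hb1, ?_⟩⟩
      rw [h0, zero_mul, zero_sub, neg_eq_zero] at hb2
      have := (mul_eq_zero.mp hb2).resolve_left h1
      unfold col
      rw [h0, this]; ext <;> simp [h1]
    · refine ⟨mat b 0 0 / mat a 0 0, Finset.mem_univ _, Finset.mem_filter.mpr ⟨hb1, ?_⟩⟩
      unfold col
      ext
      · simp [h0]
      · simp only; field_simp; linear_combination hb2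
  refine (Finset.card_le_card hs).trans ((Finset.card_biUnion_le_card_mul _ _ σ (fun t _ => hσ _)).trans ?_)
  simp [ZMod.card]

open Classical in
lemma pm_count (hσ : ∀ v, (G.filter (fun g => col (mat g) = v)).card ≤ σ) :
    ((G ×ˢ G).filter (fun q => col (mat q.2) = col (mat q.1) ∨ col (mat q.2) = - col (mat q.1))).card ≤ G.card * (2 * σ) := by
  apply count_three G G (fun a b => col (mat b) = col (mat a) ∨ col (mat b) = - col (mat a))
  intro a _
  rw [Finset.filter_or]
  refine (Finset.card_union_le _ _).trans ?_
  have := hσ (col (mat a))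
  have := hσ (-col (mat a))
  omega

open Classical in
/-- Cauchy-Schwarz against collisions -/
lemma cs_coll {Z : Type*} [Fintype Z] (P : ω → ω → Prop) (ζ : ω → ω → Z) (Ψ : Z → ℝ) :
    (∑ q ∈ (G ×ˢ G).filter (fun q => P q.1 q.2), Ψ (ζ q.1 q.2)) ^ 2 ≤
      (G.card : ℝ) * (∑ z, Ψ z ^ 2) *
      (((G ×ˢ G) ×ˢ G).filter (fun q => P q.2 q.1.1 ∧ P q.2 q.1.2 ∧ ζ q.2 q.1.1 = ζ q.2 q.1.2)).card := by
  set n : ω × Z → ℝ := fun x => ∑ g ∈ G, if P x.1 g ∧ ζ x.1 g = x.2 then 1 else 0 with hn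
  have e1 : ∑ q ∈ (G ×ˢ G).filter (fun q => P q.1 q.2), Ψ (ζ q.1 q.2) =
      ∑ x ∈ G ×ˢ (Finset.univ : Finset Z), Ψ x.2 * n x := by
    rw [Finset.sum_filter, Finset.sum_product, Finset.sum_product]
    apply Finset.sum_congr rfl
    intro a _
    simp only [hn, Finset.mul_sum]
    rw [Finset.sum_comm]
    apply Finset.sum_congr rfl
    intro b _
    by_cases h : P a b
    · simp [h]
    · simp [h]
  have e2 : ∑ x ∈ G ×ˢ (Finset.univ : Finset Z), Ψ x.2 ^ 2 = (G.card : ℝ) * ∑ z, Ψ z ^ 2 := by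
    rw [Finset.sum_product]; simp
  have e3 : ∑ x ∈ G ×ˢ (Finset.univ : Finset Z), n x ^ 2 =
      (((G ×ˢ G) ×ˢ G).filter (fun q => P q.2 q.1.1 ∧ P q.2 q.1.2 ∧ ζ q.2 q.1.1 = ζ q.2 q.1.2)).card := by
    rw [Finset.card_filter]
    push_cast
    rw [Finset.sum_product, Finset.sum_product_right]
    apply Finset.sum_congr rfl
    intro a _
    simp only [hn, pow_two, Finset.sum_mul_sum]
    rw [Finset.sum_comm, Finset.sum_product]
    apply Finset.sum_congr rfl
    intro b _
    rw [Finset.sum_comm]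
    apply Finset.sum_congr rfl
    intro c _
    by_cases h1 : P a b <;> by_cases h2 : P a c <;> simp [h1, h2]
  rw [e1, ← e2, ← e3]
  exact Finset.sum_mul_sq_le_sq_mul_sq _ _ _

end Coll
end Kor
end PartP3c

section PartP4
namespace Kor
section Oper
variable {X Γ : Type*} [Fintype X] [Group Γ] [MulAction Γ X]

/-- left regular type representation on functions -/
def rho (g : Γ) : Module.End ℝ (X → ℝ) := LinearMap.funLeft ℝ ℝ (fun x => g⁻¹ • x)

lemma rho_apply (g : Γ) (f : X → ℝ) (x : X) : rho g f x = f (g⁻¹ • x) := rfl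

lemma rho_mul (g h : Γ) : (rho (g * h) : Module.End ℝ (X → ℝ)) = rho g * rho h := by
  ext f x
  simp [Module.End.mul_apply, rho_apply, mul_smul]

def nrm (f : X → ℝ) : ℝ := ∑ x, f x ^ 2
def ip (f h : X → ℝ) : ℝ := ∑ x, f x * h x

lemma nrm_nonneg (f : X → ℝ) : 0 ≤ nrm f := Finset.sum_nonneg (fun _ _ => sq_nonneg _)

lemma ip_sq_le (f h : X → ℝ) : ip f h ^ 2 ≤ nrm f * nrm h := Finset.sum_mul_sq_le_sq_mul_sq _ _ _

lemma ip_self (f : X → ℝ) : ip f f = nrm f := by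
  unfold ip nrm; exact Finset.sum_congr rfl (fun x _ => (pow_two _).symm)

lemma sum_rho (g : Γ) (f : X → ℝ) : ∑ x, rho g f x = ∑ x, f x :=
  Equiv.sum_comp (MulAction.toPerm g⁻¹) f

lemma nrm_rho (g : Γ) (f : X → ℝ) : nrm (rho g f) = nrm f :=
  Equiv.sum_comp (MulAction.toPerm g⁻¹) (fun x => f x ^ 2)

lemma ip_rho (g : Γ) (f h : X → ℝ) : ip (rho g f) h = ip f (rho g⁻¹ h) := by
  unfold ip
  rw [← Equiv.sum_comp (MulAction.toPerm g)]
  apply Finset.sum_congr rfl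
  intro x _
  simp [rho_apply]

lemma nrm_sum_rho {ι : Type*} (S : Finset ι) (g : ι → Γ) (f : X → ℝ) :
    nrm ((∑ i ∈ S, rho (g i)) f) ≤ (S.card : ℝ) ^ 2 * nrm f := by
  have h1 : ∀ x, ((∑ i ∈ S, rho (g i) : Module.End ℝ (X → ℝ)) f x) ^ 2 ≤ S.card * ∑ i ∈ S, (rho (g i) f x) ^ 2 := by
    intro x
    rw [LinearMap.sum_apply, Finset.sum_apply]
    exact sq_sum_le_card_mul_sum_sq
  calc nrm ((∑ i ∈ S, rho (g i)) f) ≤ ∑ x, S.card * ∑ i ∈ S, (rho (g i) f x) ^ 2 := Finset.sum_le_sum (fun x _ => h1 x)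
    _ = S.card * ∑ i ∈ S, nrm (rho (g i) f) := by
        rw [← Finset.mul_sum, Finset.sum_comm]; rfl
    _ = _ := by simp only [nrm_rho]; rw [Finset.sum_const, nsmul_eq_mul]; ring

lemma nrm_smul (c : ℝ) (f : X → ℝ) : nrm (c • f) = c ^ 2 * nrm f := by
  unfold nrm; simp [mul_pow, Finset.mul_sum]

lemma nrm_add_le (f h : X → ℝ) : nrm (f + h) ≤ 2 * nrm f + 2 * nrm h := by
  unfold nrm
  rw [Finset.mul_sum, Finset.mul_sum, ← Finset.sum_add_distrib]
  apply Finset.sum_le_sum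
  intro x _
  simp only [Pi.add_apply]
  nlinarith [sq_nonneg (f x - h x)]

open Classical in
/-- number of fixed points -/
noncomputable def fixn (X : Type*) [Fintype X] [MulAction Γ X] (g : Γ) : ℝ :=
  ((Finset.univ.filter (fun x : X => g • x = x)).card : ℝ)

lemma fixn_conj (g k : Γ) : fixn X (k⁻¹ * g * k) = fixn X g := by
  classical
  unfold fixn
  congr 1
  apply Finset.card_bij (fun x _ => k • x)
  · intro x hx
    have := (Finset.mem_filter.mp hx).2
    rw [Finset.mem_filter]
    refine ⟨Finset.mem_univ _, ?_⟩
    rw [mul_smul, mul_smul, inv_smul_eq_iff] at this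
    exact this
  · intro x _ y _ h
    exact smul_left_cancel k h
  · intro y hy
    have := (Finset.mem_filter.mp hy).2
    refine ⟨k⁻¹ • y, ?_, by simp⟩
    rw [Finset.mem_filter]
    refine ⟨Finset.mem_univ _, ?_⟩
    rw [mul_smul, mul_smul, smul_inv_smul, this]

lemma hs_bound [Nonempty X] {ι : Type*} (S : Finset ι) (g : ι → Γ) (f : X → ℝ) (hf : ∑ x, f x = 0) :
    nrm ((∑ i ∈ S, rho (g i)) f) ≤ (∑ i ∈ S, ∑ j ∈ S, (fixn X ((g j)⁻¹ * g i) - 1)) * nrm f := by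
  classical
  set c : ℝ := S.card / Fintype.card X with hc
  have hX : (Fintype.card X : ℝ) ≠ 0 := by exact_mod_cast Fintype.card_ne_zero
  let Z : X → X → ℝ := fun x y => ∑ i ∈ S, if x = g i • y then 1 else 0
  have h1 : ∀ x, (∑ i ∈ S, rho (g i) : Module.End ℝ (X → ℝ)) f x = ∑ y, (Z x y - c) * f y := by
    intro x
    rw [LinearMap.sum_apply, Finset.sum_apply]
    simp only [sub_mul, Finset.sum_sub_distrib]
    rw [← Finset.mul_sum, hf, mul_zero, sub_zero]
    simp only [Z, Finset.sum_mul]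
    rw [Finset.sum_comm]
    apply Finset.sum_congr rfl
    intro i _
    rw [rho_apply]
    have : ∀ y, (if x = g i • y then (1:ℝ) else 0) * f y = if (g i)⁻¹ • x = y then f y else 0 := by
      intro y
      have : x = g i • y ↔ (g i)⁻¹ • x = y := inv_smul_eq_iff.symm
      simp [this]
    simp [this]
  have hZ1 : ∑ x, ∑ y, Z x y = S.card * Fintype.card X := by
    have : ∀ y, ∑ x, Z x y = S.card := by
      intro y
      simp only [Z]
      rw [Finset.sum_comm]
      simp
    rw [Finset.sum_comm]
    simp [this]
    ring
  have hZ2 : ∑ x, ∑ y, Z x y ^ 2 = ∑ i ∈ S, ∑ j ∈ S, fixn X ((g j)⁻¹ * g i) := by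
    have e1 : ∀ y, ∑ x, Z x y ^ 2 = ∑ i ∈ S, ∑ j ∈ S, if ((g j)⁻¹ * g i) • y = y then (1:ℝ) else 0 := by
      intro y
      simp only [Z, pow_two, Finset.sum_mul_sum]
      rw [Finset.sum_comm]
      apply Finset.sum_congr rfl
      intro i _
      rw [Finset.sum_comm]
      apply Finset.sum_congr rfl
      intro j _
      have : (((g j)⁻¹ * g i) • y = y) ↔ g i • y = g j • y := by rw [mul_smul, inv_smul_eq_iff]
      simp [this, eq_comm]
    rw [Finset.sum_comm]
    simp only [e1]
    rw [Finset.sum_comm]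
    apply Finset.sum_congr rfl
    intro i _
    rw [Finset.sum_comm]
    apply Finset.sum_congr rfl
    intro j _
    unfold fixn
    rw [Finset.card_filter]; push_cast; rfl
  have hZ3 : ∑ x, ∑ y, (Z x y - c) ^ 2 = ∑ i ∈ S, ∑ j ∈ S, (fixn X ((g j)⁻¹ * g i) - 1) := by
    have : ∀ x y, (Z x y - c) ^ 2 = Z x y ^ 2 - 2 * c * Z x y + c ^ 2 := by intros; ring
    simp only [this, Finset.sum_add_distrib, Finset.sum_sub_distrib, ← Finset.mul_sum, hZ1, hZ2]
    simp only [Finset.sum_const, Finset.card_univ, nsmul_eq_mul, mul_one]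
    rw [hc]
    field_simp
    ring
  rw [← hZ3, Finset.sum_mul]
  apply Finset.sum_le_sum
  intro x _
  rw [h1]
  exact Finset.sum_mul_sq_le_sq_mul_sq _ _ _

lemma power_iter (T : Module.End ℝ (X → ℝ)) (hT : ∀ f h, ip (T f) h = ip f (T h)) (f : X → ℝ) (s : ℕ) :
    nrm (T f) ^ (2 ^ s) * nrm f ≤ nrm ((T ^ (2 ^ s)) f) * nrm f ^ (2 ^ s) := by
  have hTk : ∀ k f h, ip ((T ^ k) f) h = ip f ((T ^ k) h) := by
    intro k
    induction k with
    | zero => intro f h; simp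
    | succ k ih =>
      intro f h
      rw [pow_succ, Module.End.mul_apply, ih, hT, ← Module.End.mul_apply, ← pow_succ', pow_succ]
  have hk : ∀ k, nrm ((T ^ k) f) ^ 2 ≤ nrm f * nrm ((T ^ (2 * k)) f) := by
    intro k
    have : nrm ((T ^ k) f) = ip f ((T ^ (2 * k)) f) := by
      rw [← ip_self, hTk, ← Module.End.mul_apply, ← pow_add, two_mul]
    rw [this]; exact ip_sq_le _ _
  induction s with
  | zero => simp
  | succ s ih =>
    by_cases h0 : nrm f = 0
    · rw [h0]; simp
    have hpos : 0 < nrm f := lt_of_le_of_ne (nrm_nonneg _) (Ne.symm h0)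
    have h2 := hk (2 ^ s)
    have e : 2 * 2 ^ s = 2 ^ (s + 1) := by ring
    rw [e] at h2
    have h3 : (nrm (T f) ^ (2 ^ s) * nrm f) ^ 2 ≤ (nrm ((T ^ (2 ^ s)) f) * nrm f ^ (2 ^ s)) ^ 2 :=
      pow_le_pow_left₀ (mul_nonneg (pow_nonneg (nrm_nonneg _) _) (nrm_nonneg _)) ih 2
    rw [mul_pow, mul_pow, ← pow_mul, ← pow_mul, mul_comm (2 ^ s) 2, e] at h3
    have h4 : nrm (T f) ^ 2 ^ (s + 1) * nrm f ^ 2 ≤ nrm f * nrm ((T ^ 2 ^ (s + 1)) f) * nrm f ^ 2 ^ (s + 1) :=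
      h3.trans (mul_le_mul_of_nonneg_right h2 (pow_nonneg (nrm_nonneg _) _))
    nlinarith

end Oper
end Kor
end PartP4

section PartP4b
namespace Kor
section GLtwo
variable {p : ℕ} [hp : Fact p.Prime]

abbrev GLp (p : ℕ) [Fact p.Prime] := Matrix.GeneralLinearGroup (Fin 2) (ZMod p)
abbrev PL (p : ℕ) := OnePoint (ZMod p)

lemma card_PL : Fintype.card (PL p) = p + 1 := by
  have : Fintype.card (Option (ZMod p)) = p + 1 := by rw [Fintype.card_option, ZMod.card]
  exact (Fintype.card_congr (Equiv.refl _)).trans this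

lemma fixn_le (h : GLp p) : fixn (PL p) h - 1 ≤ p := by
  classical
  have h2 : fixn (PL p) h ≤ p + 1 := by
    unfold fixn
    have := Finset.card_le_univ (Finset.univ.filter (fun x : PL p => h • x = x))
    rw [card_PL] at this
    exact_mod_cast this
  linarith

lemma det_GL (h : GLp p) : h 0 0 * h 1 1 - h 0 1 * h 1 0 ≠ 0 := by
  have := h.det.ne_zero
  rwa [Matrix.GeneralLinearGroup.val_det_apply, Matrix.det_fin_two] at this

lemma fix_some_iff (h : GLp p) (x : ZMod p) :
    h • (x : PL p) = x ↔ h 1 0 * x ^ 2 + (h 1 1 - h 0 0) * x - h 0 1 = 0 := by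
  have hd := det_GL h
  rw [OnePoint.smul_some_eq_ite]
  split_ifs with h0
  · constructor
    · intro hh; exact absurd hh (by simp)
    · intro hh
      exfalso; apply hd
      have e : h 1 0 * x * x + h 1 1 * x - h 0 0 * x - h 0 1 = 0 := by linear_combination hh
      have e2 : h 0 0 * x + h 0 1 = 0 := by linear_combination x * h0 - e
      by_cases hc : h 1 0 = 0
      · have : h 1 1 = 0 := by simpa [hc] using h0
        rw [hc, this]; ring
      · linear_combination h 0 0 * h0 - h 1 0 * e2
  · rw [OnePoint.coe_eq_coe, div_eq_iff h0]
    constructor <;> intro hh <;> linear_combination -hh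

open Classical in
lemma fixn_eq (h : GLp p) : fixn (PL p) h = (if h 1 0 = 0 then 1 else 0) +
    ((Finset.univ.filter (fun x : ZMod p => h 1 0 * x ^ 2 + (h 1 1 - h 0 0) * x - h 0 1 = 0)).card : ℝ) := by
  unfold fixn
  rw [Finset.card_filter, Finset.card_filter]
  push_cast
  have : ∀ φ : PL p → ℝ, ∑ x, φ x = φ OnePoint.infty + ∑ x : ZMod p, φ (x : PL p) := fun φ => Fintype.sum_option φ
  rw [this]
  congr 1
  · simp only [OnePoint.smul_infty_eq_self_iff]
  · simp only [fix_some_iff]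

lemma fixn_c0 (h : GLp p) (hc : h 1 0 = 0) (hns : ¬ (h 1 1 = h 0 0 ∧ h 0 1 = 0)) : fixn (PL p) h - 1 ≤ 1 := by
  classical
  rw [fixn_eq, if_pos hc]
  have : (Finset.univ.filter (fun x : ZMod p => h 1 0 * x ^ 2 + (h 1 1 - h 0 0) * x - h 0 1 = 0)).card ≤ 1 := by
    rw [Finset.card_le_one]
    intro x hx y hy
    have hx := (Finset.mem_filter.mp hx).2
    have hy := (Finset.mem_filter.mp hy).2
    rw [hc] at hx hy
    have h1 : (h 1 1 - h 0 0) * (x - y) = 0 := by linear_combination hx - hy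
    rcases mul_eq_zero.mp h1 with h2 | h2
    · exfalso; apply hns
      refine ⟨sub_eq_zero.mp h2, ?_⟩
      rw [h2] at hx; linear_combination -hx
    · exact sub_eq_zero.mp h2
  have : ((Finset.univ.filter (fun x : ZMod p => h 1 0 * x ^ 2 + (h 1 1 - h 0 0) * x - h 0 1 = 0)).card : ℝ) ≤ 1 := by exact_mod_cast this
  linarith

lemma fixn_chi (hp2 : p ≠ 2) (h : GLp p) (hc : h 1 0 ≠ 0) :
    fixn (PL p) h - 1 = chi ((h 1 1 - h 0 0) ^ 2 + 4 * h 0 1 * h 1 0) := by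
  classical
  have two : (2 : ZMod p) ≠ 0 := by
    intro h2
    have : ((2:ℕ) : ZMod p) = 0 := by exact_mod_cast h2
    rw [ZMod.natCast_eq_zero_iff] at this
    exact hp2 ((Nat.prime_dvd_prime_iff_eq hp.out Nat.prime_two).mp this)
  have hrc : ringChar (ZMod p) ≠ 2 := by rw [ZMod.ringChar_zmod_n]; exact hp2
  have key := quadraticChar_card_sqrts hrc ((h 1 1 - h 0 0) ^ 2 + 4 * h 0 1 * h 1 0)
  rw [fixn_eq, if_neg hc]
  have e : (Finset.univ.filter (fun x : ZMod p => h 1 0 * x ^ 2 + (h 1 1 - h 0 0) * x - h 0 1 = 0)).card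
    = ({x : ZMod p | x ^ 2 = (h 1 1 - h 0 0) ^ 2 + 4 * h 0 1 * h 1 0}.toFinset).card := by
    apply Finset.card_bij (fun x _ => 2 * h 1 0 * x + (h 1 1 - h 0 0))
    · intro x hx
      have hx := (Finset.mem_filter.mp hx).2
      simp only [Set.mem_toFinset, Set.mem_ofPred_eq]
      linear_combination 4 * h 1 0 * hx
    · intro x _ y _ hxy
      have : 2 * h 1 0 * (x - y) = 0 := by linear_combination hxy
      have := (mul_eq_zero.mp this).resolve_left (mul_ne_zero two hc)
      exact sub_eq_zero.mp this
    · intro y hy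
      simp only [Set.mem_toFinset, Set.mem_ofPred_eq] at hy
      refine ⟨(y - (h 1 1 - h 0 0)) / (2 * h 1 0), ?_, by field_simp; ring⟩
      simp only [Finset.mem_filter, Finset.mem_univ, true_and]
      field_simp
      linear_combination hy
  rw [e]
  have : (({x : ZMod p | x ^ 2 = (h 1 1 - h 0 0) ^ 2 + 4 * h 0 1 * h 1 0}.toFinset).card : ℝ) = chi ((h 1 1 - h 0 0) ^ 2 + 4 * h 0 1 * h 1 0) + 1 := by
    unfold chi; exact_mod_cast key
  rw [this]; ring

/-- upper unipotent -/
def TT (d : ZMod p) : GLp p :=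
  ⟨!![1, d; 0, 1], !![1, -d; 0, 1], by ext i j; fin_cases i <;> fin_cases j <;> simp, by ext i j; fin_cases i <;> fin_cases j <;> simp⟩

def ww : GLp p :=
  ⟨!![0, 1; 1, 0], !![0, 1; 1, 0], by ext i j; fin_cases i <;> fin_cases j <;> simp, by ext i j; fin_cases i <;> fin_cases j <;> simp⟩

lemma TT_add (a b : ZMod p) : TT (a + b) = TT a * TT b := by
  apply Units.ext
  ext i j; fin_cases i <;> fin_cases j <;> simp [TT, add_comm]

lemma TT_inv (a : ZMod p) : (TT a)⁻¹ = TT (-a) := by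
  apply Units.ext
  rfl

lemma ww_inv : (ww : GLp p)⁻¹ = ww := by
  apply Units.ext
  rfl

def AA (d : ZMod p) : GLp p := TT d * ww

lemma AA_val (d : ZMod p) : (AA d : Mat p) = !![d, 1; 1, 0] := by
  ext i j; fin_cases i <;> fin_cases j <;> simp [AA, TT, ww]

lemma fix_conj_word (g g' : GLp p) (d d' : ZMod p) :
    fixn (PL p) ((g' * AA d')⁻¹ * (g * AA d)) = fixn (PL p) (g'⁻¹ * g * TT (d - d')) := by
  have : (g' * AA d')⁻¹ * (g * AA d) = (AA d')⁻¹ * (g'⁻¹ * g * TT (d - d')) * AA d' := by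
    unfold AA
    rw [sub_eq_add_neg, TT_add, ← TT_inv]
    group
  rw [this, fixn_conj]

lemma word_entries (g g' : GLp p) (ς : ZMod p) (hς : ς ^ 2 = 1)
    (hd' : g' 0 0 * g' 1 1 - g' 0 1 * g' 1 0 = ς) (j : ZMod p) :
    ((g'⁻¹ * g * TT j : GLp p) : Mat p) =
      !![ς * (g' 1 1 * g 0 0 - g' 0 1 * g 1 0), ς * (g' 1 1 * g 0 0 - g' 0 1 * g 1 0) * j + ς * (g' 1 1 * g 0 1 - g' 0 1 * g 1 1);
         ς * (g' 0 0 * g 1 0 - g' 1 0 * g 0 0), ς * (g' 0 0 * g 1 0 - g' 1 0 * g 0 0) * j + ς * (g' 0 0 * g 1 1 - g' 1 0 * g 0 1)] := by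
  have hinv : (((g'⁻¹ : GLp p)) : Mat p) = !![ς * g' 1 1, - ς * g' 0 1; - ς * g' 1 0, ς * g' 0 0] := by
    rw [← Units.val_inj.mpr rfl]
    apply Units.inv_eq_of_mul_eq_one_right
    ext i j; fin_cases i <;> fin_cases j <;> simp [Matrix.mul_apply, Fin.sum_univ_two]
    · linear_combination ς * hd' + hς
    · ring
    · ring
    · linear_combination ς * hd' + hς
  rw [Units.val_mul, Units.val_mul, hinv]
  ext i j; fin_cases i <;> fin_cases j <;> simp [TT, Matrix.mul_apply, Fin.sum_univ_two, Matrix.vecMul, dotProduct] <;> ring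

lemma sign_of_sq {ς : ZMod p} (hς : ς ^ 2 = 1) : ς ≠ 0 := by rintro rfl; simp at hς

lemma fix_a (hp2 : p ≠ 2) (g g' : GLp p) (ς : ZMod p) (hς : ς ^ 2 = 1)
    (hd : g 0 0 * g 1 1 - g 0 1 * g 1 0 = ς)
    (hd' : g' 0 0 * g' 1 1 - g' 0 1 * g' 1 0 = ς) (d d' : ZMod p) (hC : cc (g' : Mat p) g ≠ 0) :
    fixn (PL p) ((g' * AA d')⁻¹ * (g * AA d)) - 1 =
      chi ((tt (g' : Mat p) g - 2) / cc (g' : Mat p) g + (d - d')) * chi ((tt (g' : Mat p) g + 2) / cc (g' : Mat p) g + (d - d')) := by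
  rw [fix_conj_word]
  have he := word_entries g g' ς hς hd' (d - d')
  have hCC : chi (cc (g' : Mat p) g ^ 2) = 1 := by
    unfold chi; rw [quadraticChar_sq_one' hC]; simp
  rw [fixn_chi hp2]
  · rw [← chi_mul, ← one_mul (chi (_ * _)), ← hCC, ← chi_mul]
    congr 1
    rw [he]
    field_simp
    simp only [Matrix.of_apply, Matrix.cons_val', Matrix.cons_val_zero, Matrix.cons_val_one, Matrix.cons_val_fin_one]
    unfold cc tt
    generalize d - d' = j
    generalize g 0 0 = a at *
    generalize g 0 1 = b at *
    generalize g 1 0 = c at *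
    generalize g 1 1 = e at *
    generalize g' 0 0 = a' at *
    generalize g' 0 1 = b' at *
    generalize g' 1 0 = c' at *
    generalize g' 1 1 = e' at *
    linear_combination ((a' * c - c' * a) * j + (a' * e - c' * b) + (e' * a - b' * c)) ^ 2 * hς
      - 4 * ς ^ 2 * ((a * e - b * c) * hd' + ς * hd) - 4 * (ς ^ 2 + 1) * hς
  · rw [he]
    simpa using ⟨sign_of_sq hς, hC⟩

lemma sq_eq_one_iff_pm {x : ZMod p} (h : x ^ 2 = 1) : x = 1 ∨ x = -1 := by
  have : (x - 1) * (x + 1) = 0 := by linear_combination h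
  rcases mul_eq_zero.mp this with h | h
  · left; linear_combination h
  · right; linear_combination h

lemma fix_b (g g' : GLp p) (ς : ZMod p) (hς : ς ^ 2 = 1)
    (hd : g 0 0 * g 1 1 - g 0 1 * g 1 0 = ς)
    (hd' : g' 0 0 * g' 1 1 - g' 0 1 * g' 1 0 = ς) (d d' : ZMod p) (hC : cc (g' : Mat p) g = 0)
    (hpm : ¬ (col (g : Mat p) = col (g' : Mat p) ∨ col (g : Mat p) = - col (g' : Mat p))) :
    fixn (PL p) ((g' * AA d')⁻¹ * (g * AA d)) - 1 ≤ 1 := by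
  rw [fix_conj_word]
  have he := word_entries g g' ς hς hd' (d - d')
  apply fixn_c0
  · rw [he]
    unfold cc at hC; simpa using Or.inr hC
  · rintro ⟨h1, h2⟩
    apply hpm
    rw [he] at h1 h2
    simp only [Matrix.of_apply, Matrix.cons_val', Matrix.cons_val_zero, Matrix.cons_val_one, Matrix.cons_val_fin_one] at h1 h2
    unfold cc at hC
    unfold col
    generalize d - d' = j at *
    generalize g 0 0 = a at *
    generalize g 0 1 = b at *
    generalize g 1 0 = c at *
    generalize g 1 1 = e at *
    generalize g' 0 0 = a' at *
    generalize g' 0 1 = b' at *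
    generalize g' 1 0 = c' at *
    generalize g' 1 1 = e' at *
    have hs0 := sign_of_sq hς
    have k1 : a' * e - c' * b = e' * a - b' * c := by
      apply mul_left_cancel₀ hs0
      linear_combination h1 - ς * j * hC
    have k2 : (ς * (e' * a - b' * c)) ^ 2 = 1 := by
      linear_combination (-ς ^ 2 * (e' * a - b' * c)) * k1 + ς ^ 2 * (e' * b - b' * e) * hC + ς ^ 2 * ((a * e - b * c) * hd' + ς * hd) + (ς ^ 2 + 1) * hς
    have k3 : a = (ς * (e' * a - b' * c)) * a' := by
      linear_combination (-a) * hς - ς * a * hd' + ς * b' * hC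
    have k4 : c = (ς * (e' * a - b' * c)) * c' := by
      linear_combination (-c) * hς - ς * c * hd' + ς * e' * hC
    rcases sq_eq_one_iff_pm k2 with h | h
    · left; rw [h] at k3 k4; simp at k3 k4; rw [k3, k4]
    · right; rw [h] at k3 k4; simp at k3 k4; rw [k3, k4]; rfl

end GLtwo
end Kor
end PartP4b

section PartP4c
namespace Kor
section HSB
variable {p : ℕ} [hp : Fact p.Prime]

/-- the averaged correlation -/
noncomputable def Phi {ι : Type*} [Fintype ι] (jj : ι → ZMod p) (z : ZMod p × ZMod p) : ℝ :=
  ∑ i, chi (z.1 + jj i) * chi (z.2 + jj i)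

def zeta (g' g : Mat p) : ZMod p × ZMod p := ((tt g' g - 2) / cc g' g, (tt g' g + 2) / cc g' g)

lemma two_ne (hp2 : p ≠ 2) : (2 : ZMod p) ≠ 0 := by
    intro h2
    have : ((2:ℕ) : ZMod p) = 0 := by exact_mod_cast h2
    rw [ZMod.natCast_eq_zero_iff] at this
    exact hp2 ((Nat.prime_dvd_prime_iff_eq hp.out Nat.prime_two).mp this)

lemma zeta_inj (hp2 : p ≠ 2) (g' g h : Mat p) (h1 : cc g' g ≠ 0) (h2 : cc g' h ≠ 0)
    (he : zeta g' g = zeta g' h) : cc g' g = cc g' h ∧ tt g' g = tt g' h := by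
  have t2 := two_ne hp2
  unfold zeta at he
  obtain ⟨e1, e2⟩ := Prod.mk.inj he
  rw [div_eq_div_iff h1 h2] at e1 e2
  have : 2 * 2 * (cc g' h - cc g' g) = 0 := by linear_combination e2 - e1
  have := (mul_eq_zero.mp this).resolve_left (mul_ne_zero t2 t2)
  have e3 := sub_eq_zero.mp this
  refine ⟨e3.symm, ?_⟩
  rw [e3] at e1
  have := mul_right_cancel₀ h1 e1
  linear_combination this

lemma thr (x t : ℝ) (K : ℕ) (hK : 0 < K) (ht : 0 < t) : |x| ≤ t + |x| ^ K / t ^ (K - 1) := by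
  by_cases h : |x| ≤ t
  · have : 0 ≤ |x| ^ K / t ^ (K - 1) := by positivity
    linarith
  · push Not at h
    have : |x| ≤ |x| ^ K / t ^ (K - 1) := by
      rw [le_div_iff₀ (by positivity)]
      calc |x| * t ^ (K - 1) ≤ |x| * |x| ^ (K - 1) := by gcongr
        _ = |x| ^ K := by rw [← pow_succ']; congr 1; omega
    linarith

open Classical in
theorem hs_sum {ω I : Type*} [Fintype I] (hp2 : p ≠ 2) (G : Finset ω) (mat : ω → GLp p) (δ : I → ZMod p)
    (ς : ZMod p) (hς : ς ^ 2 = 1) (σ : ℕ)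
    (hdet : ∀ g ∈ G, mat g 0 0 * mat g 1 1 - mat g 0 1 * mat g 1 0 = ς)
    (hσ : ∀ v, (G.filter (fun g => col (mat g : Mat p) = v)).card ≤ σ)
    (K : ℕ) (hK : 0 < K) (t R Mo : ℝ) (ht : 0 < t) (hR : 0 ≤ R)
    (hMo : ∑ z, Phi (fun i : I × I => δ i.1 - δ i.2) z ^ (2 * K) ≤ Mo)
    (hRM : (G.card : ℝ) ^ 3 * (3 * σ) * Mo ≤ R ^ 2) :
    ∑ a ∈ G ×ˢ (Finset.univ : Finset I), ∑ b ∈ G ×ˢ (Finset.univ : Finset I),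
      (fixn (PL p) ((mat b.1 * AA (δ b.2))⁻¹ * (mat a.1 * AA (δ a.2))) - 1) ≤
    (G.card : ℝ) ^ 2 * t + R / t ^ (K - 1) + (Fintype.card I : ℝ) ^ 2 * G.card * (3 * p * σ) := by
  have hς0 := sign_of_sq hς
  set Φ : ZMod p × ZMod p → ℝ := Phi (fun i : I × I => δ i.1 - δ i.2) with hΦ
  set n : ℝ := (Fintype.card I : ℝ) with hn
  -- rearrange
  have e1 : ∑ a ∈ G ×ˢ (Finset.univ : Finset I), ∑ b ∈ G ×ˢ (Finset.univ : Finset I),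
      (fixn (PL p) ((mat b.1 * AA (δ b.2))⁻¹ * (mat a.1 * AA (δ a.2))) - 1) =
      ∑ q ∈ G ×ˢ G, ∑ i : I × I, (fixn (PL p) ((mat q.1 * AA (δ i.2))⁻¹ * (mat q.2 * AA (δ i.1))) - 1) := by
    simp only [Finset.sum_product, Fintype.sum_prod_type]
    rw [Finset.sum_comm' (t' := G) (s' := fun _ => G) (by simp)]
    apply Finset.sum_congr rfl
    intro a _
    rw [Finset.sum_comm]
  have hcardI : (Fintype.card (I × I) : ℝ) = n ^ 2 := by rw [Fintype.card_prod, hn]; push_cast; ring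
  have e2 : ∀ q ∈ G ×ˢ G, ∑ i : I × I, (fixn (PL p) ((mat q.1 * AA (δ i.2))⁻¹ * (mat q.2 * AA (δ i.1))) - 1) ≤
      (if cc (mat q.1 : Mat p) (mat q.2) ≠ 0 then |Φ (zeta (mat q.1 : Mat p) (mat q.2))| else 0) +
      ((if cc (mat q.1 : Mat p) (mat q.2) = 0 then n ^ 2 else 0) +
      (if col (mat q.2 : Mat p) = col (mat q.1 : Mat p) ∨ col (mat q.2 : Mat p) = - col (mat q.1 : Mat p) then p * n ^ 2 else 0)) := by
    intro q hq
    obtain ⟨h1, h2⟩ := Finset.mem_product.mp hq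
    have hn2 : 0 ≤ n ^ 2 := by positivity
    have hpn2 : 0 ≤ p * n ^ 2 := by positivity
    by_cases hc : cc (mat q.1 : Mat p) (mat q.2) = 0
    · rw [if_neg (not_not.mpr hc), if_pos hc]
      by_cases hpm : col (mat q.2 : Mat p) = col (mat q.1 : Mat p) ∨ col (mat q.2 : Mat p) = - col (mat q.1 : Mat p)
      · rw [if_pos hpm]
        have : ∑ i : I × I, (fixn (PL p) ((mat q.1 * AA (δ i.2))⁻¹ * (mat q.2 * AA (δ i.1))) - 1) ≤ ∑ i : I × I, (p : ℝ) :=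
          Finset.sum_le_sum (fun i _ => fixn_le _)
        rw [Finset.sum_const, Finset.card_univ, nsmul_eq_mul, hcardI] at this
        linarith
      · rw [if_neg hpm]
        have : ∑ i : I × I, (fixn (PL p) ((mat q.1 * AA (δ i.2))⁻¹ * (mat q.2 * AA (δ i.1))) - 1) ≤ ∑ i : I × I, (1 : ℝ) :=
          Finset.sum_le_sum (fun i _ => fix_b _ _ ς hς (hdet _ h2) (hdet _ h1) _ _ hc hpm)
        rw [Finset.sum_const, Finset.card_univ, nsmul_eq_mul, hcardI] at this
        linarith
    · rw [if_pos hc, if_neg hc]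
      have : ∑ i : I × I, (fixn (PL p) ((mat q.1 * AA (δ i.2))⁻¹ * (mat q.2 * AA (δ i.1))) - 1) =
          Φ (zeta (mat q.1 : Mat p) (mat q.2)) := by
        rw [hΦ]; unfold Phi zeta
        exact Finset.sum_congr rfl (fun i _ => fix_a hp2 _ _ ς hς (hdet _ h2) (hdet _ h1) _ _ hc)
      rw [this]
      have := le_abs_self (Φ (zeta (mat q.1 : Mat p) (mat q.2)))
      split_ifs <;> linarith
  rw [e1]
  refine (Finset.sum_le_sum e2).trans ?_
  rw [Finset.sum_add_distrib, Finset.sum_add_distrib, ← Finset.sum_filter, ← Finset.sum_filter, ← Finset.sum_filter,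
    Finset.sum_const, Finset.sum_const, nsmul_eq_mul, nsmul_eq_mul]
  have c1 : (((G ×ˢ G).filter (fun q => cc (mat q.1 : Mat p) (mat q.2) = 0)).card : ℝ) ≤ G.card * (p * σ) := by
    exact_mod_cast czero_count G (fun w => (mat w : Mat p)) ς σ hς0 hdet hσ
  have c2 : (((G ×ˢ G).filter (fun q => col (mat q.2 : Mat p) = col (mat q.1 : Mat p) ∨ col (mat q.2 : Mat p) = - col (mat q.1 : Mat p))).card : ℝ) ≤ G.card * (2 * σ) := by
    exact_mod_cast pm_count G (fun w => (mat w : Mat p)) σ hσ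
  have c3 : (∑ q ∈ (G ×ˢ G).filter (fun q => cc (mat q.1 : Mat p) (mat q.2) ≠ 0), |Φ (zeta (mat q.1 : Mat p) (mat q.2))| ^ K) ≤ R := by
    refine le_of_abs_le (abs_le_of_sq_le_sq ?_ hR)
    have cs := cs_coll G (fun a b => cc (mat a : Mat p) (mat b) ≠ 0) (fun a b => zeta (mat a : Mat p) (mat b)) (fun z => |Φ z| ^ K)
    have hfe : (G ×ˢ G).filter (fun q => cc (mat q.1 : Mat p) (mat q.2) ≠ 0) =
      @Finset.filter _ (fun q : ω × ω => cc (mat q.1 : Mat p) (mat q.2) ≠ 0) (fun _ => Classical.propDecidable _) (G ×ˢ G) := by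
      congr
    rw [hfe]
    refine cs.trans ?_
    refine le_trans ?_ hRM
    have d1 : ∑ z, (|Φ z| ^ K) ^ 2 ≤ Mo := by
      refine le_trans (le_of_eq ?_) hMo
      apply Finset.sum_congr rfl
      intro z _
      rw [← pow_mul, mul_comm K 2, pow_mul, sq_abs, ← pow_mul]
    have d2 : ((((G ×ˢ G) ×ˢ G).filter (fun q => cc (mat q.2 : Mat p) (mat q.1.1) ≠ 0 ∧ cc (mat q.2 : Mat p) (mat q.1.2) ≠ 0 ∧
        zeta (mat q.2 : Mat p) (mat q.1.1) = zeta (mat q.2 : Mat p) (mat q.1.2))).card : ℝ) ≤ 3 * σ * G.card ^ 2 := by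
      have := coll_count G (fun w => (mat w : Mat p)) ς σ hς0 hdet hσ
      have h2 : (((G ×ˢ G) ×ˢ G).filter (fun q => cc (mat q.2 : Mat p) (mat q.1.1) ≠ 0 ∧ cc (mat q.2 : Mat p) (mat q.1.2) ≠ 0 ∧
        zeta (mat q.2 : Mat p) (mat q.1.1) = zeta (mat q.2 : Mat p) (mat q.1.2))).card ≤ 3 * σ * G.card ^ 2 := by
        refine le_trans (Finset.card_le_card ?_) this
        intro q hq
        rw [Finset.mem_filter] at hq ⊢
        exact ⟨hq.1, zeta_inj hp2 _ _ _ hq.2.1 hq.2.2.1 hq.2.2.2⟩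
      exact_mod_cast h2
    have d0 : 0 ≤ ∑ z, (|Φ z| ^ K) ^ 2 := Finset.sum_nonneg (fun _ _ => by positivity)
    calc _ ≤ (G.card : ℝ) * Mo * (3 * σ * G.card ^ 2) := by
          refine mul_le_mul (by gcongr) ?_ (by positivity) (mul_nonneg (by positivity) (d0.trans d1))
          refine le_trans (le_of_eq ?_) d2
          congr!
      _ = _ := by ring
  have c4 : (∑ q ∈ (G ×ˢ G).filter (fun q => cc (mat q.1 : Mat p) (mat q.2) ≠ 0), |Φ (zeta (mat q.1 : Mat p) (mat q.2))|) ≤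
      (G.card : ℝ) ^ 2 * t + R / t ^ (K - 1) := by
    refine (Finset.sum_le_sum (fun q _ => thr (Φ (zeta (mat q.1 : Mat p) (mat q.2))) t K hK ht)).trans ?_
    rw [Finset.sum_add_distrib, Finset.sum_const, nsmul_eq_mul, ← Finset.sum_div]
    have : (((G ×ˢ G).filter (fun q => cc (mat q.1 : Mat p) (mat q.2) ≠ 0)).card : ℝ) ≤ (G.card : ℝ) ^ 2 := by
      have := Finset.card_filter_le (G ×ˢ G) (fun q => cc (mat q.1 : Mat p) (mat q.2) ≠ 0)
      rw [Finset.card_product, ← pow_two] at this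
      exact_mod_cast this
    gcongr
  have hn2 : 0 ≤ n ^ 2 := by positivity
  have hpn2 : 0 ≤ p * n ^ 2 := by positivity
  have k1 := mul_le_mul_of_nonneg_right c1 hn2
  have k2 := mul_le_mul_of_nonneg_right c2 hpn2
  linarith

end HSB
end Kor
end PartP4c

section PartP4d
namespace Kor
section Words
variable {p : ℕ} [hp : Fact p.Prime]

def word : (m : ℕ) → (Fin m → ℤ) → GLp p
  | 0, _ => 1
  | m+1, x => AA (x 0 : ZMod p) * word m (Fin.tail x)

lemma AA_mul_entries (d : ZMod p) (g : GLp p) : (AA d * g : GLp p) 0 0 = d * g 0 0 + g 1 0 ∧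
    (AA d * g : GLp p) 1 0 = g 0 0 ∧ (AA d * g : GLp p) 0 1 = d * g 0 1 + g 1 1 ∧ (AA d * g : GLp p) 1 1 = g 0 1 := by
  refine ⟨?_, ?_, ?_, ?_⟩ <;> rw [Units.val_mul, AA_val] <;> simp [Matrix.mul_apply, Fin.sum_univ_two]

lemma word_col (m : ℕ) (x : Fin m → ℤ) : (word m x : GLp p) 0 0 = ((con m x).1 : ZMod p) ∧
    (word m x : GLp p) 1 0 = ((con m x).2 : ZMod p) := by
  induction m with
  | zero => simp [word, con]
  | succ m ih =>
    obtain ⟨h1, h2⟩ := ih (Fin.tail x)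
    obtain ⟨k1, k2, -, -⟩ := AA_mul_entries (x 0 : ZMod p) (word m (Fin.tail x))
    simp only [word, con]
    rw [k1, k2, h1, h2]; push_cast; exact ⟨rfl, rfl⟩

lemma word_det (m : ℕ) (x : Fin m → ℤ) : (word m x : GLp p) 0 0 * (word m x : GLp p) 1 1 -
    (word m x : GLp p) 0 1 * (word m x : GLp p) 1 0 = (-1) ^ m := by
  induction m with
  | zero => simp [word]
  | succ m ih =>
    have := ih (Fin.tail x)
    obtain ⟨k1, k2, k3, k4⟩ := AA_mul_entries (x 0 : ZMod p) (word m (Fin.tail x))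
    simp only [word]
    rw [k1, k2, k3, k4, pow_succ]
    linear_combination (-1) * this

lemma sum_word {I : Type*} [Fintype I] (dig : I → ℤ) (m : ℕ) :
    (∑ i, (rho (AA (dig i : ZMod p)) : Module.End ℝ (PL p → ℝ))) ^ m = ∑ x : Fin m → I, rho (word m (dig ∘ x) : GLp p) := by
  induction m with
  | zero =>
    simp [word]
    ext f x; simp [rho_apply]
  | succ m ih =>
    rw [pow_succ', ih, ← Equiv.sum_comp (Fin.consEquiv (fun _ => I)), Fintype.sum_prod_type, Finset.sum_mul_sum]
    apply Finset.sum_congr rfl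
    intro i _
    apply Finset.sum_congr rfl
    intro x _
    rw [← rho_mul]
    rfl

/-- digit set -/
def dg (N : ℕ) (i : Fin N × Fin N) : ℤ := (i.1 : ℤ) - (i.2 : ℤ)

noncomputable def Mop (p N : ℕ) [Fact p.Prime] : Module.End ℝ (PL p → ℝ) := (N : ℝ)⁻¹ • ∑ i : Fin N, rho (TT (-(i : ℕ) : ZMod p))
noncomputable def Ms (p N : ℕ) [Fact p.Prime] : Module.End ℝ (PL p → ℝ) := (N : ℝ)⁻¹ • ∑ i : Fin N, rho (TT ((i : ℕ) : ZMod p))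
noncomputable def Bop (p N : ℕ) [Fact p.Prime] : Module.End ℝ (PL p → ℝ) := Mop p N * rho (ww : GLp p) * Ms p N
noncomputable def Qop (p N : ℕ) [Fact p.Prime] : Module.End ℝ (PL p → ℝ) := ∑ i, rho (AA (dg N i : ZMod p))

variable (N : ℕ)

lemma VW_eq : Ms p N * Mop p N * rho (ww : GLp p) = ((N : ℝ) ^ 2)⁻¹ • Qop p N := by
  unfold Ms Mop Qop
  rw [smul_mul_smul_comm, smul_mul_assoc]
  congr 1
  · rw [← mul_inv, pow_two]
  · rw [Finset.sum_mul_sum, Fintype.sum_prod_type, Finset.sum_mul]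
    apply Finset.sum_congr rfl
    intro i _
    rw [Finset.sum_mul]
    apply Finset.sum_congr rfl
    intro j _
    rw [← rho_mul, ← rho_mul, ← TT_add]
    unfold AA dg
    push_cast
    rw [sub_eq_add_neg]

lemma ip_smul_left {X : Type*} [Fintype X] (c : ℝ) (f h : X → ℝ) : ip (c • f) h = c * ip f h := by
  unfold ip; simp [Finset.mul_sum, mul_assoc]
lemma ip_smul_right {X : Type*} [Fintype X] (c : ℝ) (f h : X → ℝ) : ip f (c • h) = c * ip f h := by
  unfold ip; simp [Finset.mul_sum, mul_left_comm]
lemma ip_sum_left {X ι : Type*} [Fintype X] (S : Finset ι) (f : ι → X → ℝ) (h : X → ℝ) : ip (∑ i ∈ S, f i) h = ∑ i ∈ S, ip (f i) h := by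
  unfold ip; simp only [Finset.sum_apply, Finset.sum_mul]; rw [Finset.sum_comm]
lemma ip_sum_right {X ι : Type*} [Fintype X] (S : Finset ι) (f : ι → X → ℝ) (h : X → ℝ) : ip h (∑ i ∈ S, f i) = ∑ i ∈ S, ip h (f i) := by
  unfold ip; simp only [Finset.sum_apply, Finset.mul_sum]; rw [Finset.sum_comm]

lemma ip_Mop (f h : PL p → ℝ) : ip (Mop p N f) h = ip f (Ms p N h) := by
  unfold Mop Ms
  simp only [LinearMap.smul_apply, LinearMap.sum_apply, ip_smul_left, ip_smul_right, ip_sum_left, ip_sum_right, ip_rho, TT_inv, neg_neg]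

lemma ip_comm' {X : Type*} [Fintype X] (f h : X → ℝ) : ip f h = ip h f := by
  unfold ip; exact Finset.sum_congr rfl (fun _ _ => mul_comm _ _)

lemma ip_Bop (f h : PL p → ℝ) : ip (Bop p N f) h = ip f (Bop p N h) := by
  unfold Bop
  simp only [Module.End.mul_apply]
  rw [ip_Mop, ip_rho, ww_inv, ip_comm', ← ip_Mop, ip_comm']

lemma Bop_pow (k : ℕ) : Bop p N ^ (k + 1) = Mop p N * rho (ww : GLp p) * (Ms p N * Mop p N * rho (ww : GLp p)) ^ k * Ms p N := by
  induction k with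
  | zero => simp [Bop]
  | succ k ih =>
    rw [pow_succ, ih, pow_succ]
    unfold Bop
    simp only [mul_assoc]

lemma nrm_avg (hN : 0 < N) (g : Fin N → GLp p) (f : PL p → ℝ) :
    nrm (((N : ℝ)⁻¹ • ∑ i : Fin N, (rho (g i) : Module.End ℝ (PL p → ℝ))) f) ≤ nrm f := by
  rw [LinearMap.smul_apply, nrm_smul]
  have := nrm_sum_rho Finset.univ g f
  simp only [Finset.card_univ, Fintype.card_fin] at this
  have hN' : (0:ℝ) < N := by exact_mod_cast hN
  calc _ ≤ ((N:ℝ)⁻¹) ^ 2 * ((N:ℝ) ^ 2 * nrm f) := by gcongr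
    _ = nrm f := by field_simp

lemma sum_Ms (f : PL p → ℝ) (hf : ∑ x, f x = 0) : ∑ x, Ms p N f x = 0 := by
  unfold Ms
  simp only [LinearMap.smul_apply, LinearMap.sum_apply, Pi.smul_apply, Finset.sum_apply, ← Finset.smul_sum]
  rw [Finset.sum_comm]
  simp only [sum_rho, hf]
  simp

open Classical in
lemma Q_split (m s B : ℕ) (f : PL p → ℝ) (hf : ∑ x, f x = 0) (H : ℝ) (b : ℕ)
    (hb : (Finset.univ.filter (fun e : Fin m → Fin N × Fin N => ¬ Good p s B m (dg N ∘ e))).card ≤ b)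
    (hH : ∑ a ∈ (Finset.univ.filter (fun w : (Fin N × Fin N) × (Fin m → Fin N × Fin N) => Good p s B m (dg N ∘ w.2))) ×ˢ (Finset.univ : Finset (Fin N × Fin N)),
      ∑ b ∈ (Finset.univ.filter (fun w : (Fin N × Fin N) × (Fin m → Fin N × Fin N) => Good p s B m (dg N ∘ w.2))) ×ˢ (Finset.univ : Finset (Fin N × Fin N)),
      (fixn (PL p) (((AA (dg N b.1.1 : ZMod p) * word m (dg N ∘ b.1.2)) * AA (dg N b.2 : ZMod p))⁻¹ *
        ((AA (dg N a.1.1 : ZMod p) * word m (dg N ∘ a.1.2)) * AA (dg N a.2 : ZMod p))) - 1) ≤ H) :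
    nrm ((Qop p N ^ (m + 2)) f) ≤ (2 * H + 2 * ((N:ℝ) ^ 4 * b) ^ 2) * nrm f := by
  set G := (Finset.univ.filter (fun w : (Fin N × Fin N) × (Fin m → Fin N × Fin N) => Good p s B m (dg N ∘ w.2))) with hG
  set G' := (Finset.univ.filter (fun w : (Fin N × Fin N) × (Fin m → Fin N × Fin N) => ¬ Good p s B m (dg N ∘ w.2))) with hG'
  let gg : ((Fin N × Fin N) × (Fin m → Fin N × Fin N)) × (Fin N × Fin N) → GLp p :=
    fun a => (AA (dg N a.1.1 : ZMod p) * word m (dg N ∘ a.1.2)) * AA (dg N a.2 : ZMod p)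
  have e1 : Qop p N ^ (m + 2) = ∑ a ∈ G ×ˢ Finset.univ, rho (gg a) + ∑ a ∈ G' ×ˢ Finset.univ, rho (gg a) := by
    have : Qop p N ^ (m + 2) = ∑ a, (rho (gg a) : Module.End ℝ (PL p → ℝ)) := by
      rw [pow_succ, pow_succ']
      have hw : Qop p N ^ m = ∑ x : Fin m → Fin N × Fin N, rho (word m (dg N ∘ x) : GLp p) := sum_word (dg N) m
      rw [hw]
      unfold Qop
      rw [Finset.sum_mul_sum, Finset.sum_mul]
      have hs : ∑ a, (rho (gg a) : Module.End ℝ (PL p → ℝ)) = ∑ i, ∑ x, ∑ j, rho (gg ((i, x), j)) := by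
        rw [Fintype.sum_prod_type, Fintype.sum_prod_type (f := fun x => ∑ y, (rho (gg (x, y)) : Module.End ℝ (PL p → ℝ)))]
      rw [hs]
      apply Finset.sum_congr rfl
      intro i _
      rw [Finset.sum_mul]
      apply Finset.sum_congr rfl
      intro x _
      rw [Finset.mul_sum]
      apply Finset.sum_congr rfl
      intro j _
      rw [← rho_mul, ← rho_mul]
    rw [this, Finset.sum_product, Finset.sum_product, hG, hG', Finset.sum_filter_add_sum_filter_not, Fintype.sum_prod_type]
  have hb' : ((G' ×ˢ (Finset.univ : Finset (Fin N × Fin N))).card : ℝ) ≤ (N:ℝ) ^ 4 * b := by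
    have h1 : G' = (Finset.univ : Finset (Fin N × Fin N)) ×ˢ (Finset.univ.filter (fun e : Fin m → Fin N × Fin N => ¬ Good p s B m (dg N ∘ e))) := by
      ext w; simp [hG']
    rw [h1, Finset.card_product, Finset.card_product]
    simp only [Finset.card_univ, Fintype.card_prod, Fintype.card_fin]
    have : N * N * (Finset.univ.filter (fun e : Fin m → Fin N × Fin N => ¬ Good p s B m (dg N ∘ e))).card * (N * N) ≤ N ^ 4 * b := by
      calc _ = N ^ 4 * (Finset.univ.filter (fun e : Fin m → Fin N × Fin N => ¬ Good p s B m (dg N ∘ e))).card := by ring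
        _ ≤ _ := by gcongr
    exact_mod_cast this
  rw [e1, LinearMap.add_apply]
  refine (nrm_add_le _ _).trans ?_
  have k1 := hs_bound (G ×ˢ (Finset.univ : Finset (Fin N × Fin N))) gg f hf
  have k2 := nrm_sum_rho (G' ×ˢ (Finset.univ : Finset (Fin N × Fin N))) gg f
  have k3 : ((G' ×ˢ (Finset.univ : Finset (Fin N × Fin N))).card : ℝ) ^ 2 * nrm f ≤ ((N:ℝ) ^ 4 * b) ^ 2 * nrm f := by
    have := nrm_nonneg f
    gcongr
  have k4 := mul_le_mul_of_nonneg_right hH (nrm_nonneg f)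
  have k5 := k1.trans k4
  linarith

lemma B_bound (hN : 0 < N) (m s : ℕ) (hm : 2 ^ s = m + 3) (D : ℝ) (hD : ∀ f : PL p → ℝ, ∑ x, f x = 0 → nrm ((Qop p N ^ (m + 2)) f) ≤ D * nrm f)
    (hD0 : 0 ≤ D) (f : PL p → ℝ) (hf : ∑ x, f x = 0) :
    nrm (Bop p N f) ^ (m + 3) ≤ D / (N:ℝ) ^ (4 * (m + 2)) * nrm f ^ (m + 3) := by
  have hN' : (0:ℝ) < N := by exact_mod_cast hN
  by_cases h0 : nrm f = 0
  · have : f = 0 := by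
      ext x
      have := (Finset.sum_eq_zero_iff_of_nonneg (fun _ _ => sq_nonneg _)).mp h0 x (Finset.mem_univ _)
      simpa using this
    rw [this, map_zero]
    simp [nrm]
  have hpos : 0 < nrm f := lt_of_le_of_ne (nrm_nonneg _) (Ne.symm h0)
  have h1 := power_iter (Bop p N) (ip_Bop N) f s
  rw [hm] at h1
  have h2 : nrm ((Bop p N ^ (m + 3)) f) ≤ D / (N:ℝ) ^ (4 * (m + 2)) * nrm f := by
    rw [Bop_pow, VW_eq, smul_pow]
    simp only [Module.End.mul_apply]
    calc _ ≤ _ := nrm_avg N hN _ _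
      _ = _ := nrm_rho _ _
      _ = ((((N:ℝ) ^ 2)⁻¹) ^ (m + 2)) ^ 2 * nrm ((Qop p N ^ (m + 2)) (Ms p N f)) := by rw [LinearMap.smul_apply, nrm_smul]
      _ ≤ ((((N:ℝ) ^ 2)⁻¹) ^ (m + 2)) ^ 2 * (D * nrm f) := by
        gcongr
        refine (hD _ (sum_Ms N f hf)).trans ?_
        have : nrm (Ms p N f) ≤ nrm f := nrm_avg N hN _ _
        gcongr
      _ = _ := by
        rw [inv_pow, inv_pow, ← pow_mul, ← pow_mul]
        have : 2 * ((m + 2) * 2) = 4 * (m + 2) := by ring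
        rw [this]; field_simp
  have h3 : nrm (Bop p N f) ^ (m + 3) * nrm f ≤ (D / (N:ℝ) ^ (4 * (m + 2)) * nrm f ^ (m + 3)) * nrm f := by
    refine h1.trans ?_
    have := mul_le_mul_of_nonneg_right h2 (pow_nonneg hpos.le (m+3))
    linarith
  exact le_of_mul_le_mul_right h3 hpos

end Words
end Kor
end PartP4d

section PartP4e
namespace Kor
section Spec
variable {p : ℕ} [hp : Fact p.Prime]

lemma dg_abs (N : ℕ) (i : Fin N × Fin N) : |dg N i| + 1 ≤ N := by
  unfold dg
  have h1 := i.1.2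
  have h2 := i.2.2
  rcases abs_cases ((i.1 : ℤ) - (i.2 : ℤ)) with h | h <;> omega

open Classical in
lemma dg_fib (N : ℕ) (d : ℤ) : (Finset.univ.filter (fun i => dg N i = d)).card ≤ N := by
  have : (Finset.univ.filter (fun i => dg N i = d)).card ≤ (Finset.univ : Finset (Fin N)).card := by
    apply Finset.card_le_card_of_injOn (fun i => i.1) (fun _ _ => Finset.mem_univ _)
    intro i hi j hj hij
    simp only [Finset.coe_filter, Finset.mem_univ, true_and, Set.mem_ofPred_eq] at hi hj
    unfold dg at hi hj
    have h1 : i.1 = j.1 := hij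
    rw [← h1] at hj
    apply Prod.ext h1
    apply Fin.ext
    omega
  simpa using this

lemma jj_fib (N : ℕ) (hN : N ≤ p) (y : ZMod p) :
    (Finset.univ.filter (fun q : (Fin N × Fin N) × (Fin N × Fin N) => ((dg N q.1 : ℤ) : ZMod p) - ((dg N q.2 : ℤ) : ZMod p) = y)).card ≤ N ^ 3 := by
  have : (Finset.univ.filter (fun q : (Fin N × Fin N) × (Fin N × Fin N) => ((dg N q.1 : ℤ) : ZMod p) - ((dg N q.2 : ℤ) : ZMod p) = y)).card ≤
    (Finset.univ : Finset (Fin N × (Fin N × Fin N))).card := by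
    apply Finset.card_le_card_of_injOn (fun q => (q.1.1, q.2)) (fun _ _ => Finset.mem_univ _)
    rintro ⟨⟨a, b⟩, c⟩ hi ⟨⟨a', b'⟩, c'⟩ hj hij
    simp only [Finset.coe_filter, Finset.mem_univ, true_and, Set.mem_ofPred_eq] at hi hj
    simp only [Prod.mk.injEq] at hij
    obtain ⟨rfl, rfl⟩ := hij
    unfold dg at hi hj
    push_cast at hi hj
    have h3 : ((b : ℕ) : ZMod p) = ((b' : ℕ) : ZMod p) := by linear_combination hj - hi
    rw [ZMod.natCast_eq_natCast_iff'] at h3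
    rw [Nat.mod_eq_of_lt (by omega), Nat.mod_eq_of_lt (by omega)] at h3
    rw [Fin.ext h3]
  refine this.trans ?_
  simp; ring_nf; rfl

lemma moment_dg (N : ℕ) (hN : N ≤ p) (K : ℕ) (hK : 0 < K) (hbig : 200 * K ≤ Nat.sqrt p) :
    ∑ z, Phi (fun i : (Fin N × Fin N) × (Fin N × Fin N) => ((dg N i.1 : ℤ) : ZMod p) - ((dg N i.2 : ℤ) : ZMod p)) z ^ (2 * K) ≤
    (p:ℝ)^2 * ((4 * N : ℝ) ^ K * K ^ (2 * K) * (N ^ 3 : ℝ) ^ (2 * K)) + ((N:ℝ) ^ 4) ^ (2 * K) * ((80 * K)^2 * p) := by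
  classical
  set S : Finset (ZMod p) := (Finset.Ioo (-(2 * N : ℤ)) (2 * N)).image (fun d : ℤ => (d : ZMod p)) with hS
  have hSc : S.card ≤ 4 * N := by
    refine Finset.card_image_le.trans ?_
    rw [Int.card_Ioo]; omega
  have := moment (fun i : (Fin N × Fin N) × (Fin N × Fin N) => ((dg N i.1 : ℤ) : ZMod p) - ((dg N i.2 : ℤ) : ZMod p)) S (by
    rintro ⟨i, j⟩
    rw [hS, Finset.mem_image]
    refine ⟨dg N i - dg N j, ?_, by push_cast; rfl⟩
    rw [Finset.mem_Ioo]
    have h1 := abs_le.mp (show |dg N i| ≤ N - 1 by linarith [dg_abs N i])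
    have h2 := abs_le.mp (show |dg N j| ≤ N - 1 by linarith [dg_abs N j])
    constructor <;> linarith) (N ^ 3) (jj_fib N hN) K hK hbig
  unfold Phi
  rw [Fintype.sum_prod_type]
  refine this.trans ?_
  have hc : (Fintype.card ((Fin N × Fin N) × (Fin N × Fin N)) : ℝ) = (N:ℝ) ^ 4 := by
    simp; ring
  rw [hc]
  have : (S.card : ℝ) ≤ 4 * N := by exact_mod_cast hSc
  push_cast
  gcongr

open Classical in
theorem spec (hp2 : p ≠ 2) (N m s s0 B K b : ℕ) (hm : 2 ^ s = m + 3) (hN : 0 < N) (hNp : 2 * N ^ m < p) (hNp' : N ≤ p) (hs0 : 4 ≤ s0)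
    (hK : 0 < K) (hbig : 200 * K ≤ Nat.sqrt p) (υ ρ β θ : ℝ) (hθ : 0 < θ) (hρ : 0 ≤ ρ) (hυ0 : 0 ≤ υ)
    (hb : (Finset.univ.filter (fun e : Fin m → Fin N × Fin N => ¬ Good p s0 B m (dg N ∘ e))).card ≤ b)
    (hβ : (b : ℝ) ≤ β * (N:ℝ) ^ (2 * m))
    (hυ : (p:ℝ) * (N ^ (m + 1) * (2 * N / (B + 1) + 1) : ℕ) ≤ υ * (N:ℝ) ^ (2 * (m + 1)))
    (hρυ : 3 * υ * (p * ((4 * K ^ 2 / N : ℝ)) ^ K + (80 * K) ^ 2) ≤ ρ ^ 2)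
    (f : PL p → ℝ) (hf : ∑ x, f x = 0) :
    nrm (Bop p N f) ^ (m + 3) ≤ (2 * (θ + ρ / θ ^ (K - 1) + 3 * υ) + 2 * β ^ 2) * nrm f ^ (m + 3) := by
  have hN' : (0:ℝ) < N := by exact_mod_cast hN
  have hp' : (0:ℝ) < p := by exact_mod_cast hp.out.pos
  set σ := N ^ (m + 1) * (2 * N / (B + 1) + 1) with hσd
  set G := (Finset.univ.filter (fun w : (Fin N × Fin N) × (Fin m → Fin N × Fin N) => Good p s0 B m (dg N ∘ w.2))) with hG
  have hGc : (G.card : ℝ) ≤ (N:ℝ) ^ (2 * (m + 1)) := by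
    have : G.card ≤ N ^ (2 * (m + 1)) := by
      refine (Finset.card_le_univ _).trans (le_of_eq ?_)
      simp; ring
    exact_mod_cast this
  set Mo : ℝ := (N:ℝ) ^ (8 * K) * (p * (p * ((4 * K ^ 2 / N : ℝ)) ^ K + (80 * K) ^ 2)) with hMo
  have hmo := moment_dg (p := p) N hNp' K hK hbig
  have hmo' : (p:ℝ)^2 * ((4 * N : ℝ) ^ K * K ^ (2 * K) * (N ^ 3 : ℝ) ^ (2 * K)) + ((N:ℝ) ^ 4) ^ (2 * K) * ((80 * K)^2 * p) = Mo := by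
    rw [hMo, div_pow, mul_pow 4 (N:ℝ) K, mul_pow 4 ((K:ℝ)^2) K, ← pow_mul (K:ℝ), ← pow_mul, ← pow_mul]
    have e : (N:ℝ) ^ (8 * K) = N ^ K * N ^ K * N ^ (3 * (2 * K)) := by
      rw [← pow_add, ← pow_add]; congr 1; ring
    have e2 : 4 * (2 * K) = 8 * K := by ring
    rw [e2, e]
    field_simp
  rw [hmo'] at hmo
  have hMo0 : 0 ≤ Mo := by rw [hMo]; positivity
  have hσ : ∀ v, (G.filter (fun w => col ((AA (dg N w.1 : ZMod p) * word m (dg N ∘ w.2) : GLp p) : Mat p) = v)).card ≤ σ := by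
    intro v
    refine le_trans (Finset.card_le_card ?_) (sup_count (dg N) p N s0 B m (fun d => le_trans (le_of_eq (by congr!)) (dg_fib N d)) (dg_abs N) hNp hs0 v)
    intro w hw
    rw [Finset.mem_filter, hG, Finset.mem_filter] at hw
    rw [Finset.mem_filter]
    refine ⟨Finset.mem_univ _, hw.1.2, ?_⟩
    have h := hw.2
    obtain ⟨k1, k2, -, -⟩ := AA_mul_entries (dg N w.1 : ZMod p) (word m (dg N ∘ w.2))
    obtain ⟨l1, l2⟩ := word_col (p := p) m (dg N ∘ w.2)
    unfold col at h
    rw [k1, k2, l1, l2] at h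
    rw [← h]
    push_cast
    exact ⟨rfl, rfl⟩
  have hdet : ∀ w ∈ G, (AA (dg N w.1 : ZMod p) * word m (dg N ∘ w.2) : GLp p) 0 0 * (AA (dg N w.1 : ZMod p) * word m (dg N ∘ w.2) : GLp p) 1 1 -
     (AA (dg N w.1 : ZMod p) * word m (dg N ∘ w.2) : GLp p) 0 1 * (AA (dg N w.1 : ZMod p) * word m (dg N ∘ w.2) : GLp p) 1 0 = (-1) ^ (m + 1) := by
    intro w _
    obtain ⟨k1, k2, k3, k4⟩ := AA_mul_entries (dg N w.1 : ZMod p) (word m (dg N ∘ w.2))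
    rw [k1, k2, k3, k4, pow_succ]
    linear_combination (-1) * word_det (p := p) m (dg N ∘ w.2)
  set R : ℝ := (N:ℝ) ^ (4 * (m + 1)) * (N:ℝ) ^ (4 * K) * ρ with hR
  have hR0 : 0 ≤ R := by positivity
  have hRM : (G.card : ℝ) ^ 3 * (3 * σ) * Mo ≤ R ^ 2 := by
    calc (G.card : ℝ) ^ 3 * (3 * σ) * Mo ≤ ((N:ℝ) ^ (2 * (m + 1))) ^ 3 * (3 * σ) * Mo := by gcongr
      _ = ((N:ℝ) ^ (2 * (m + 1))) ^ 3 * 3 * ((N:ℝ) ^ (8 * K)) * (p * σ) * (p * ((4 * K ^ 2 / N : ℝ)) ^ K + (80 * K) ^ 2) := by rw [hMo]; ring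
      _ ≤ ((N:ℝ) ^ (2 * (m + 1))) ^ 3 * 3 * ((N:ℝ) ^ (8 * K)) * (υ * (N:ℝ) ^ (2 * (m + 1))) * (p * ((4 * K ^ 2 / N : ℝ)) ^ K + (80 * K) ^ 2) := by gcongr
      _ = ((N:ℝ) ^ (2 * (m + 1))) ^ 4 * ((N:ℝ) ^ (8 * K)) * (3 * υ * (p * ((4 * K ^ 2 / N : ℝ)) ^ K + (80 * K) ^ 2)) := by ring
      _ ≤ ((N:ℝ) ^ (2 * (m + 1))) ^ 4 * ((N:ℝ) ^ (8 * K)) * ρ ^ 2 := by gcongr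
      _ = R ^ 2 := by rw [hR]; ring
  have hs := hs_sum hp2 G (fun w => AA (dg N w.1 : ZMod p) * word m (dg N ∘ w.2)) (fun i => (dg N i : ZMod p)) ((-1) ^ (m + 1))
    (by rw [← pow_mul, mul_comm, pow_mul]; simp) σ hdet hσ K hK ((N:ℝ) ^ 4 * θ) R Mo (by positivity) hR0 hmo hRM
  have hQ := fun (f : PL p → ℝ) hf => Q_split N m s0 B f hf _ b hb hs
  set H : ℝ := (G.card : ℝ) ^ 2 * ((N:ℝ) ^ 4 * θ) + R / ((N:ℝ) ^ 4 * θ) ^ (K - 1) + (Fintype.card (Fin N × Fin N) : ℝ) ^ 2 * G.card * (3 * p * σ) with hH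
  have hH0 : 0 ≤ H := by positivity
  refine (B_bound N hN m s hm (2 * H + 2 * ((N:ℝ) ^ 4 * b) ^ 2) hQ (by positivity) f hf).trans ?_
  have hfn := nrm_nonneg f
  gcongr
  rw [div_le_iff₀ (by positivity)]
  have hH1 : H ≤ (θ + ρ / θ ^ (K - 1) + 3 * υ) * (N:ℝ) ^ (4 * (m + 2)) := by
    have t1 : (G.card : ℝ) ^ 2 * ((N:ℝ) ^ 4 * θ) ≤ θ * (N:ℝ) ^ (4 * (m + 2)) := by
      calc _ ≤ ((N:ℝ) ^ (2 * (m + 1))) ^ 2 * ((N:ℝ) ^ 4 * θ) := by gcongr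
        _ = _ := by rw [show 4 * (m + 2) = 2 * (m + 1) * 2 + 4 by ring, pow_add, pow_mul]; ring
    have t2 : R / ((N:ℝ) ^ 4 * θ) ^ (K - 1) = ρ / θ ^ (K - 1) * (N:ℝ) ^ (4 * (m + 2)) := by
      obtain ⟨k, rfl⟩ : ∃ k, K = k + 1 := ⟨K - 1, by omega⟩
      simp only [Nat.add_sub_cancel]
      rw [hR, mul_pow, ← pow_mul]
      rw [show 4 * (k + 1) = 4 * k + 4 by ring, show 4 * (m + 2) = 4 * (m + 1) + 4 by ring, pow_add _ (4 * k), pow_add _ (4 * (m + 1))]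
      field_simp
    have t3 : (Fintype.card (Fin N × Fin N) : ℝ) ^ 2 * G.card * (3 * p * σ) ≤ 3 * υ * (N:ℝ) ^ (4 * (m + 2)) := by
      have : (Fintype.card (Fin N × Fin N) : ℝ) = (N:ℝ) ^ 2 := by simp; ring
      rw [this]
      calc _ = 3 * ((N:ℝ) ^ 2) ^ 2 * G.card * (p * σ) := by ring
        _ ≤ 3 * ((N:ℝ) ^ 2) ^ 2 * (N:ℝ) ^ (2 * (m + 1)) * (υ * (N:ℝ) ^ (2 * (m + 1))) := by gcongr
        _ = _ := by rw [show 4 * (m + 2) = 2 * (m + 1) * 2 + 4 by ring, pow_add, pow_mul _ (2 * (m + 1))]; ring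
    rw [hH, t2]; linarith
  have hb1 : ((N:ℝ) ^ 4 * b) ^ 2 ≤ β ^ 2 * (N:ℝ) ^ (4 * (m + 2)) * 1 := by
    calc ((N:ℝ) ^ 4 * b) ^ 2 ≤ ((N:ℝ) ^ 4 * (β * (N:ℝ) ^ (2 * m))) ^ 2 := by gcongr
      _ = _ := by rw [show 4 * (m + 2) = 2 * m * 2 + 8 by ring, pow_add, pow_mul _ (2 * m)]; ring
  linarith

end Spec
end Kor
end PartP4e

section PartP5
namespace Kor
section Five
variable {p : ℕ} [hp : Fact p.Prime]

open Classical in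
noncomputable def indA (A : Finset (ZMod p)) (x : PL p) : ℝ := if ∃ y ∈ A, x = (y : PL p) then 1 else 0

lemma sum_PL (φ : PL p → ℝ) : ∑ x, φ x = φ OnePoint.infty + ∑ x : ZMod p, φ (x : PL p) := Fintype.sum_option φ

lemma indA_infty (A : Finset (ZMod p)) : indA A OnePoint.infty = 0 := by
  unfold indA; rw [if_neg]; rintro ⟨y, _, h⟩; exact OnePoint.infty_ne_coe y h

lemma indA_coe (A : Finset (ZMod p)) (x : ZMod p) : indA A (x : PL p) = if x ∈ A then 1 else 0 := by
  classical
  unfold indA; congr 1; simp [OnePoint.coe_eq_coe]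

lemma sum_indA (A : Finset (ZMod p)) : ∑ x, indA A x = A.card := by
  classical
  rw [sum_PL, indA_infty]; simp [indA_coe]

lemma indA_nonneg (A : Finset (ZMod p)) (x) : 0 ≤ indA A x := by unfold indA; split_ifs <;> norm_num
lemma indA_le (A : Finset (ZMod p)) (x) : indA A x ≤ 1 := by unfold indA; split_ifs <;> norm_num

lemma nrm_indA (A : Finset (ZMod p)) : nrm (indA A) = A.card := by
  rw [← sum_indA]; unfold nrm; apply Finset.sum_congr rfl; intro x _; unfold indA; split_ifs <;> norm_num

variable (N : ℕ)

lemma TT_smul_coe (d x : ZMod p) : (TT d) • (x : PL p) = ((x + d : ZMod p) : PL p) := by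
  rw [OnePoint.smul_some_eq_ite]; simp [TT]

lemma TT_smul_infty (d : ZMod p) : (TT d) • (OnePoint.infty : PL p) = OnePoint.infty := by
  rw [OnePoint.smul_infty_eq_self_iff]; simp [TT]

lemma ww_smul_coe (x : ZMod p) (hx : x ≠ 0) : (ww : GLp p) • (x : PL p) = ((x⁻¹ : ZMod p) : PL p) := by
  rw [OnePoint.smul_some_eq_ite]; simp [ww, hx]

lemma ww_smul_zero : (ww : GLp p) • ((0 : ZMod p) : PL p) = OnePoint.infty := by
  rw [OnePoint.smul_some_eq_ite]; simp [ww]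

lemma Ms_apply (f : PL p → ℝ) (x : PL p) : Ms p N f x = (N:ℝ)⁻¹ * ∑ i : Fin N, f (TT (-((i:ℕ) : ZMod p)) • x) := by
  unfold Ms
  simp only [LinearMap.smul_apply, LinearMap.sum_apply, Pi.smul_apply, Finset.sum_apply, rho_apply, TT_inv, smul_eq_mul]

lemma Ms_nonneg (A : Finset (ZMod p)) (x) : 0 ≤ Ms p N (indA A) x := by
  rw [Ms_apply]
  exact mul_nonneg (by positivity) (Finset.sum_nonneg (fun _ _ => indA_nonneg _ _))

lemma Ms_le (A : Finset (ZMod p)) (x) : Ms p N (indA A) x ≤ 1 := by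
  rw [Ms_apply]
  have : ∑ i : Fin N, indA A (TT (-((i:ℕ) : ZMod p)) • x) ≤ ∑ i : Fin N, (1:ℝ) := Finset.sum_le_sum (fun _ _ => indA_le _ _)
  simp at this
  by_cases hN : N = 0
  · subst hN; simp
  have hN' : (0:ℝ) < N := by exact_mod_cast Nat.pos_of_ne_zero hN
  calc _ ≤ (N:ℝ)⁻¹ * N := by gcongr
    _ = 1 := by field_simp

lemma Ms_infty (A : Finset (ZMod p)) : Ms p N (indA A) OnePoint.infty = 0 := by
  rw [Ms_apply]; simp [TT_smul_infty, indA_infty]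

lemma Ms_supp (A : Finset (ZMod p)) (x : ZMod p) (h : Ms p N (indA A) x ≠ 0) : ∃ a ∈ A, ∃ i < N, x = a + (i : ℕ) := by
  rw [Ms_apply] at h
  have := right_ne_zero_of_mul h
  obtain ⟨i, _, hi⟩ := Finset.exists_ne_zero_of_sum_ne_zero this
  rw [TT_smul_coe, indA_coe] at hi
  have : x + -((i:ℕ) : ZMod p) ∈ A := by by_contra hh; simp [hh] at hi
  exact ⟨_, this, i, i.2, by ring⟩

open Classical in
theorem expander (A : Finset (ZMod p)) (m : ℕ) (hp3 : 3 ≤ p) (hN : 0 < N) (Θ η : ℝ)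
    (hB : ∀ f : PL p → ℝ, ∑ x, f x = 0 → nrm (Bop p N f) ^ (m + 3) ≤ Θ * nrm f ^ (m + 3))
    (hη0 : 0 ≤ η) (hη : Θ ≤ η ^ (m + 3)) (hηA : η ≤ ((A.card : ℝ) / (4 * p)) ^ 2) :
    (A.card : ℝ) ^ 2 / (2 * p) ≤ ((Finset.univ.filter (fun x : ZMod p => x ≠ 0 ∧ (∃ a ∈ A, ∃ i < N, x = a + (i : ℕ)) ∧
       (∃ a ∈ A, ∃ i < N, x⁻¹ = a + (i : ℕ)))).card : ℝ) := by
  have hp' : (3:ℝ) ≤ p := by exact_mod_cast hp3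
  have hN' : (0:ℝ) < N := by exact_mod_cast hN
  set F := indA A with hF
  set a : ℝ := (A.card : ℝ) with ha
  set c : ℝ := a / (p + 1) with hc
  set f : PL p → ℝ := F - fun _ => c with hf
  have hcardPL : (Fintype.card (PL p) : ℝ) = p + 1 := by rw [card_PL]; push_cast; rfl
  have hsumf : ∑ x, f x = 0 := by
    simp only [hf, Pi.sub_apply, Finset.sum_sub_distrib]
    rw [sum_indA, Finset.sum_const, Finset.card_univ, nsmul_eq_mul, hcardPL, hc]
    field_simp; ring
  have hnf : nrm f = a - a ^ 2 / (p + 1) := by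
    have : ∀ x, f x ^ 2 = F x ^ 2 - 2 * c * F x + c ^ 2 := by intro x; simp only [hf, Pi.sub_apply]; ring
    unfold nrm
    simp only [this, Finset.sum_add_distrib, Finset.sum_sub_distrib, ← Finset.mul_sum]
    rw [sum_indA, Finset.sum_const, Finset.card_univ, nsmul_eq_mul, hcardPL]
    have := nrm_indA A
    unfold nrm at this
    rw [this, hc]
    field_simp; ring
  have hconst : ∀ c : ℝ, Bop p N (fun _ => c) = fun _ => c := by
    intro c
    have h1 : ∀ g : GLp p, rho g (fun _ : PL p => c) = fun _ => c := fun g => rfl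
    unfold Bop
    simp only [Module.End.mul_apply]
    have h2 : Ms p N (fun _ => c) = fun _ => c := by
      ext x; rw [Ms_apply]; simp; field_simp
    rw [h2, h1]
    unfold Mop
    ext x
    simp only [LinearMap.smul_apply, LinearMap.sum_apply, h1]
    simp; field_simp
  have hBF : ip F (Bop p N F) = ip f (Bop p N f) + a ^ 2 / (p + 1) := by
    have hFf : F = f + fun _ => c := by ext x; simp [hf]
    have add1 : ∀ u v w : PL p → ℝ, ip (u + v) w = ip u w + ip v w := by
      intro u v w; unfold ip; simp [add_mul, Finset.sum_add_distrib]
    have add2 : ∀ u v w : PL p → ℝ, ip w (u + v) = ip w u + ip w v := by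
      intro u v w; unfold ip; simp [mul_add, Finset.sum_add_distrib]
    have hcf : ∀ c : ℝ, ip f (fun _ => c) = 0 := by
      intro c; unfold ip; rw [← Finset.sum_mul, hsumf, zero_mul]
    have hcB : ip (fun _ => c) (Bop p N f) = 0 := by rw [← ip_Bop, hconst, ip_comm', hcf]
    have hexp : ip F (Bop p N F) = ip (f + fun _ => c) (Bop p N (f + fun _ => c)) := by rw [← hFf]
    rw [hexp, map_add, hconst, add1, add2, add2, hcf, hcB]
    have : ip (fun _ : PL p => c) (fun _ => c) = a ^ 2 / (p + 1) := by
      unfold ip; rw [Finset.sum_const, Finset.card_univ, nsmul_eq_mul, hcardPL, hc]; field_simp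
    rw [this]; ring
  have hnB : nrm (Bop p N f) ≤ η * nrm f := by
    have h1 := hB f hsumf
    have h2 : nrm (Bop p N f) ^ (m + 3) ≤ (η * nrm f) ^ (m + 3) := by
      rw [mul_pow]
      exact h1.trans (mul_le_mul_of_nonneg_right hη (pow_nonneg (nrm_nonneg _) _))
    exact le_of_pow_le_pow_left₀ (by omega) (mul_nonneg hη0 (nrm_nonneg _)) h2
  have ha0 : 0 ≤ a := by rw [ha]; positivity
  have hnfa : nrm f ≤ a := by rw [hnf]; have : 0 ≤ a ^ 2 / (p + 1) := by positivity
                              linarith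
  have hip : |ip f (Bop p N f)| ≤ a ^ 2 / (4 * p) := by
    apply abs_le_of_sq_le_sq _ (by positivity)
    refine (ip_sq_le _ _).trans ?_
    calc nrm f * nrm (Bop p N f) ≤ a * (η * a) := by
          have := nrm_nonneg f
          have := nrm_nonneg (Bop p N f)
          have h3 : nrm (Bop p N f) ≤ η * a := hnB.trans (by gcongr)
          gcongr
      _ = η * a ^ 2 := by ring
      _ ≤ (a / (4 * p)) ^ 2 * a ^ 2 := by gcongr
      _ = _ := by field_simp
  have hlow : a ^ 2 / (2 * p) ≤ ip F (Bop p N F) := by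
    rw [hBF]
    have h1 := (abs_le.mp hip).1
    have h2 : a ^ 2 / (2 * p) + a ^ 2 / (4 * p) ≤ a ^ 2 / (p + 1) := by
      have : a ^ 2 / (2 * p) + a ^ 2 / (4 * p) = a ^ 2 * (3 / (4 * p)) := by field_simp; ring
      rw [this, div_eq_mul_inv (a ^ 2) (p + 1 : ℝ)]
      apply mul_le_mul_of_nonneg_left _ (by positivity)
      rw [div_le_iff₀ (by positivity), inv_mul_eq_div, le_div_iff₀ (by positivity)]
      linarith
    linarith
  refine hlow.trans ?_
  have e : ip F (Bop p N F) = ip (Ms p N F) (rho (ww : GLp p) (Ms p N F)) := by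
    unfold Bop
    simp only [Module.End.mul_apply]
    rw [ip_comm', ip_Mop, ip_comm']
  rw [e]
  unfold ip
  rw [sum_PL, Ms_infty, zero_mul, zero_add, Finset.card_filter]
  push_cast
  apply Finset.sum_le_sum
  intro x _
  rw [rho_apply, ww_inv]
  by_cases h0 : x = 0
  · subst h0
    rw [ww_smul_zero, Ms_infty, mul_zero]
    split_ifs <;> norm_num
  rw [ww_smul_coe x h0]
  by_cases h1 : Ms p N F x = 0
  · rw [h1, zero_mul]; split_ifs <;> norm_num
  by_cases h2 : Ms p N F ((x⁻¹ : ZMod p) : PL p) = 0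
  · rw [h2, mul_zero]; split_ifs <;> norm_num
  rw [if_pos ⟨h0, Ms_supp N A x h1, Ms_supp N A _ h2⟩]
  exact mul_le_one₀ (Ms_le N A _) (Ms_nonneg N A _) (Ms_le N A _)

end Five
end Kor
end PartP5

section PartP7a
namespace Kor
section Seven

/-- Euclid's algorithm produces bounded digits. -/
lemma cf_list (p M1 : ℕ) (a : ℤ)
    (hgood : ∀ x : ℕ, 1 ≤ x → x < p → ∀ y : ℤ, (p:ℤ) ∣ y - a * x → p ≤ M1 * x * y.natAbs) :
    ∀ (r r' q q' : ℕ) (ε : ℤ), 1 ≤ r → r < r' → Nat.Coprime r r' → 1 ≤ q → q * r' + q' * r = p →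
      (ε = 1 ∨ ε = -1) → (p:ℤ) ∣ r - ε * a * q → (p:ℤ) ∣ r' + ε * a * q' →
      ∃ l : List ℕ, l ≠ [] ∧ IsCFOf ((r:ℚ)/r') l ∧ ∀ c ∈ l, c ≤ M1 := by
  intro r
  induction r using Nat.strong_induction_on with
  | _ r ih =>
  intro r' q q' ε hr hrr hco hq hp hε h1 h2
  have hqp : q < p := by nlinarith
  have key : p ≤ M1 * q * r := by
    have := hgood q hq hqp (ε * r) (by
      obtain ⟨t, ht⟩ := h1
      refine ⟨ε * t, ?_⟩
      rcases hε with rfl | rfl <;> linarith)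
    have e : (ε * r).natAbs = r := by rcases hε with rfl | rfl <;> simp
    rwa [e] at this
  set c := r' / r with hc
  have hcr : r * c + r' % r = r' := Nat.div_add_mod r' r
  have hcM : c ≤ M1 := by
    have : c * (q * r) ≤ M1 * (q * r) := by
      calc c * (q * r) = q * (r * c) := by ring
        _ ≤ q * r' := by gcongr; omega
        _ ≤ p := by omega
        _ ≤ _ := by rw [← mul_assoc]; exact key
    exact Nat.le_of_mul_le_mul_right this (by positivity)
  have hc1 : 1 ≤ c := (Nat.one_le_div_iff (by omega)).2 hrr.le
  by_cases hr1 : r = 1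
  · subst hr1
    refine ⟨[r'], by simp, ⟨?_, ?_, ?_⟩, ?_⟩
    · simp; omega
    · simp; omega
    · simp [cfVal]
    · simp; simpa [hc] using hcM
  · set r2 := r' % r with hr2
    have hr2lt : r2 < r := Nat.mod_lt _ (by omega)
    have hco2 : Nat.Coprime r2 r := by
      rw [Nat.Coprime] at hco ⊢
      rw [← Nat.gcd_rec]; exact hco
    have hr2pos : 1 ≤ r2 := by
      rcases Nat.eq_zero_or_pos r2 with h | h
      · rw [h, Nat.coprime_zero_left] at hco2; omega
      · exact h
    have hcrz : (r:ℤ) * c + r2 = r' := by exact_mod_cast hcr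
    obtain ⟨l, hl0, ⟨hl1, hl2, hl3⟩, hl4⟩ := ih r2 hr2lt r (c * q + q') q (-ε) hr2pos hr2lt hco2 (by nlinarith)
      (by rw [← hp, ← hcr]; ring) (by rcases hε with rfl | rfl <;> simp)
      (by
        obtain ⟨t, ht⟩ := h1
        obtain ⟨u, hu⟩ := h2
        refine ⟨u - c * t, ?_⟩
        push_cast
        linear_combination hu - c * ht + hcrz)
      (by convert h1 using 1; ring)
    refine ⟨c :: l, by simp, ⟨?_, ?_, ?_⟩, ?_⟩
    · intro d hd; rcases List.mem_cons.1 hd with h | h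
      · omega
      · exact hl1 d h
    · intro h; rw [List.getLast_cons hl0]; exact hl2 hl0
    · have : cfVal (c :: l) = 1 / ((c:ℚ) + cfVal l) := rfl
      rw [this, hl3]
      have hq1 : ((r:ℚ) * c + r2) = r' := by exact_mod_cast hcr
      have hrpos : (0:ℚ) < r := by exact_mod_cast hr
      have hr'pos : (0:ℚ) < r' := by exact_mod_cast (by omega : 0 < r')
      rw [← hq1]
      have : (c:ℚ) + r2 / r = (r * c + r2) / r := by field_simp
      rw [this, one_div_div]
    · intro d hd; rcases List.mem_cons.1 hd with h | h
      · omega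
      · exact hl4 d h

lemma cf_final (p M1 a : ℕ) (hp : p.Prime) (ha : 1 ≤ a) (hap : a < p)
    (hgood : ∀ x : ℕ, 1 ≤ x → x < p → ∀ y : ℤ, (p:ℤ) ∣ y - a * x → p ≤ M1 * x * y.natAbs) :
    Nat.gcd a p = 1 ∧ ∃ l : List ℕ, IsCFOf ((a:ℚ)/p) l ∧ ∀ c ∈ l, c ≤ M1 := by
  have hco : Nat.Coprime a p := (Nat.coprime_of_lt_prime (by omega) hap hp).symm
  refine ⟨hco, ?_⟩
  obtain ⟨l, _, h⟩ := cf_list p M1 a hgood a p 1 0 1 ha hap hco le_rfl (by ring) (Or.inl rfl) (by simp) (by simp)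
  exact ⟨l, h⟩

end Seven
end Kor
end PartP7a

section PartP7b
namespace Kor
section SevenB

lemma harm_log (X : ℕ) (hX : 1 ≤ X) (n : ℕ) : ∑ x ∈ Finset.Ioc X (X + n), (1:ℝ) / x ≤ Real.log ((X + n : ℕ) / X : ℝ) := by
  have hX0 : (0:ℝ) < X := by exact_mod_cast hX
  induction n with
  | zero => simp [hX0.ne']
  | succ n ih =>
    rw [← add_assoc, ← Finset.insert_Ioc_right_eq_Ioc_add_one (by omega), Finset.sum_insert (by simp)]
    have h1 : (0:ℝ) < ((X + n : ℕ):ℝ) := by positivity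
    have h2 : (0:ℝ) < ((X + n + 1 : ℕ):ℝ) := by positivity
    have h3 := Real.one_sub_inv_le_log_of_pos (div_pos h2 h1)
    have h4 : 1 - ((((X + n + 1 : ℕ):ℝ)) / ((X+n:ℕ):ℝ))⁻¹ = 1 / ((X+n+1:ℕ):ℝ) := by
      rw [inv_div]; field_simp; push_cast; ring
    rw [h4] at h3
    have h5 : Real.log (((X + n + 1 : ℕ):ℝ) / X) = Real.log (((X + n + 1 : ℕ):ℝ) / ((X+n:ℕ):ℝ)) + Real.log (((X+n:ℕ):ℝ) / X) := by
      rw [← Real.log_mul (by positivity) (by positivity)]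
      congr 1; field_simp
    rw [h5]
    exact add_le_add h3 ih

variable {p : ℕ} [hp : Fact p.Prime]

open Classical in
/-- residues with an unusually small product in the middle range -/
noncomputable def midBad (p : ℕ) [Fact p.Prime] (X M1 : ℕ) : Finset (ZMod p) :=
  Finset.univ.filter (fun r => ∃ x : ℕ, ∃ y : ℤ, X < x ∧ x < p ∧ X < y.natAbs ∧ M1 * x * y.natAbs < p ∧ (y : ZMod p) = r * x)

lemma mid_count (X M1 : ℕ) (hX : 1 ≤ X) (hM : 1 ≤ M1) (hXp : X * X ≤ p) :
    ((midBad p X M1).card : ℝ) ≤ 2 * p / M1 * Real.log ((p:ℝ) / (X * X)) := by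
  classical
  have hX0 : (0:ℝ) < X := by exact_mod_cast hX
  have hM0 : (0:ℝ) < M1 := by exact_mod_cast hM
  have hp0 : (0:ℝ) < p := by exact_mod_cast hp.out.pos
  have hsub : midBad p X M1 ⊆ (Finset.Ioc X (p / X)).biUnion (fun x =>
      ((Finset.univ : Finset Bool) ×ˢ Finset.Icc 1 (p / (M1 * x))).image
        (fun bk => ((if bk.1 then (bk.2 : ZMod p) else -(bk.2 : ZMod p)) * (x : ZMod p)⁻¹))) := by
    intro r hr
    simp only [midBad, Finset.mem_filter, Finset.mem_univ, true_and] at hr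
    obtain ⟨x, y, h1, h2, h3, h4, h5⟩ := hr
    simp only [Finset.mem_biUnion, Finset.mem_image, Finset.mem_product, Finset.mem_univ, true_and, Finset.mem_Icc, Finset.mem_Ioc]
    have hx0 : (x : ZMod p) ≠ 0 := by
      rw [Ne, ZMod.natCast_eq_zero_iff]; exact Nat.not_dvd_of_pos_of_lt (by omega) h2
    refine ⟨x, ⟨h1, ?_⟩, (decide (0 ≤ y), y.natAbs), ⟨by omega, ?_⟩, ?_⟩
    · rw [Nat.le_div_iff_mul_le (by omega)]
      have : x * X ≤ x * y.natAbs := by gcongr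
      have : x * y.natAbs ≤ M1 * x * y.natAbs := by rw [mul_assoc]; exact Nat.le_mul_of_pos_left _ (by omega)
      omega
    · rw [Nat.le_div_iff_mul_le (by apply Nat.mul_pos <;> omega)]
      show y.natAbs * (M1 * x) ≤ p
      rw [mul_comm]; omega
    · have : (if decide (0 ≤ y) = true then ((y.natAbs : ℕ) : ZMod p) else -((y.natAbs:ℕ) : ZMod p)) = (y : ZMod p) := by
        by_cases hy : 0 ≤ y
        · simp only [hy, decide_true, if_true]
          rw [← Int.cast_natCast, Int.natAbs_of_nonneg hy]
        · have hy' : ((y.natAbs : ℕ) : ℤ) = - y := by omega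
          simp only [hy, decide_false]
          rw [← Int.cast_natCast, hy']; simp
      simp only [this, h5]
      field_simp
  have h1 := (Finset.card_le_card hsub).trans Finset.card_biUnion_le
  have h2 : ((midBad p X M1).card : ℝ) ≤ ∑ x ∈ Finset.Ioc X (p / X), (2 * p / M1) * (1 / (x:ℝ)) := by
    refine (Nat.cast_le.2 h1).trans ?_
    push_cast
    apply Finset.sum_le_sum
    intro x hx
    refine (Nat.cast_le.2 Finset.card_image_le).trans ?_
    rw [Finset.card_product]
    simp only [Finset.card_univ, Fintype.card_bool, Nat.card_Icc]
    push_cast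
    have : ((p / (M1 * x) : ℕ) : ℝ) ≤ (p:ℝ) / (M1 * x) := by
      have := @Nat.cast_div_le ℝ _ _ _ p (M1 * x)
      push_cast at this; exact this
    have hx0 : (0:ℝ) < x := by
      have := (Finset.mem_Ioc.1 hx).1
      exact_mod_cast (by omega : 0 < x)
    calc _ ≤ 2 * ((p:ℝ) / (M1 * x)) := by gcongr
      _ = _ := by field_simp
  refine h2.trans ?_
  rw [← Finset.mul_sum]
  apply mul_le_mul_of_nonneg_left _ (by positivity)
  have hle : X ≤ p / X := (Nat.le_div_iff_mul_le (by omega)).2 hXp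
  obtain ⟨n, hn⟩ := Nat.exists_eq_add_of_le hle
  rw [hn]
  refine (harm_log X hX n).trans ?_
  rw [← hn]
  apply Real.log_le_log
  · have : (0:ℝ) < (p / X : ℕ) := by exact_mod_cast (by omega : 0 < p / X)
    positivity
  · have := @Nat.cast_div_le ℝ _ _ _ p X
    rw [div_le_div_iff₀ hX0 (by positivity)]
    have h3 : ((p / X : ℕ):ℝ) * X ≤ p := by exact_mod_cast Nat.div_mul_le_self p X
    nlinarith

/-- good for small multipliers -/
def PastGood (p X M1 : ℕ) (r : ZMod p) : Prop :=
  ∀ x : ℕ, 1 ≤ x → x ≤ X → ∀ y : ℤ, (y : ZMod p) = r * x → p ≤ M1 * x * y.natAbs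

lemma good_of (X M1 : ℕ) (r : ZMod p) (hr : r ≠ 0) (h1 : PastGood p X M1 r) (h2 : PastGood p X M1 r⁻¹)
    (h3 : r ∉ midBad p X M1) :
    ∃ a : ℕ, 1 ≤ a ∧ a < p ∧ ∀ x : ℕ, 1 ≤ x → x < p → ∀ y : ℤ, (p:ℤ) ∣ y - a * x → p ≤ M1 * x * y.natAbs := by
  refine ⟨r.val, ?_, ZMod.val_lt r, ?_⟩
  · have := (ZMod.val_ne_zero r).2 hr
    omega
  intro x hx hxp y hy
  have hy' : (y : ZMod p) = r * x := by
    have := (ZMod.intCast_zmod_eq_zero_iff_dvd _ _).2 hy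
    push_cast at this
    rw [ZMod.natCast_zmod_val] at this
    linear_combination this
  have hx0 : (x : ZMod p) ≠ 0 := by
    rw [Ne, ZMod.natCast_eq_zero_iff]; exact Nat.not_dvd_of_pos_of_lt (by omega) hxp
  by_cases hxX : x ≤ X
  · exact h1 x hx hxX y hy'
  by_cases hyX : y.natAbs ≤ X
  · have hy0 : y ≠ 0 := by
      rintro rfl
      simp at hy'
      rcases hy' with h | h
      · exact hr h
      · exact hx0 h
    rcases Int.natAbs_eq y with h | h
    · have := h2 y.natAbs (by omega) hyX (x:ℤ) (by
        have : ((y.natAbs : ℕ) : ZMod p) = (y : ZMod p) := by rw [← Int.cast_natCast, ← h]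
        rw [this, hy']; push_cast; field_simp)
      simp only [Int.natAbs_natCast] at this
      nlinarith
    · have := h2 y.natAbs (by omega) hyX (-x:ℤ) (by
        have : ((y.natAbs : ℕ) : ZMod p) = -(y : ZMod p) := by
          have h' : ((y.natAbs : ℕ) : ℤ) = - y := by omega
          rw [← Int.cast_natCast, h']; simp
        rw [this, hy']; push_cast; field_simp)
      simp only [Int.natAbs_natCast, Int.natAbs_neg] at this
      nlinarith
  · by_contra hlt
    apply h3
    simp only [midBad, Finset.mem_filter, Finset.mem_univ, true_and]
    exact ⟨x, y, by omega, hxp, by omega, by omega, hy'⟩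

end SevenB
end Kor
end PartP7b

section PartP6
namespace Kor
section Six
open MeasureTheory

/-- cylinder interval -/
def Cyl (σ P P' Q Q' : ℤ) : Set ℝ :=
  {α : ℝ | 0 < (σ:ℝ) * (α * Q - P) ∧ (σ:ℝ) * (α * (Q + Q') - (P + P')) < 0}

/-- points of the cylinder whose next `k` digits are at most `M` -/
def Ek (M : ℕ) : ℕ → ℤ → ℤ → ℤ → ℤ → ℤ → Set ℝ
  | 0, σ, P, P', Q, Q' => Cyl σ P P' Q Q'
  | k + 1, σ, P, P', Q, Q' => ⋃ c ∈ Finset.Icc 1 M, Ek M k (-σ) (c * P + P') P (c * Q + Q') Q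

lemma Cyl_eq (σ P P' Q Q' : ℤ) (hσ : σ = 1 ∨ σ = -1) (hQ : 1 ≤ Q) (hQ' : 0 ≤ Q') :
    Cyl σ P P' Q Q' = Set.Ioo (if σ = 1 then (P:ℝ)/Q else ((P:ℝ)+P')/(Q+Q')) (if σ = 1 then ((P:ℝ)+P')/(Q+Q') else (P:ℝ)/Q) := by
  have h1 : (0:ℝ) < Q := by exact_mod_cast hQ
  have h2 : (0:ℝ) < Q + Q' := by exact_mod_cast (by omega : 0 < Q + Q')
  ext α
  rcases hσ with rfl | rfl
  · simp only [Cyl, Set.mem_ofPred_eq, Set.mem_Ioo, if_true]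
    rw [div_lt_iff₀ h1, lt_div_iff₀ h2]
    push_cast
    constructor <;> rintro ⟨a, b⟩ <;> constructor <;> linarith
  · simp only [Cyl, Set.mem_ofPred_eq, Set.mem_Ioo]
    norm_num
    rw [div_lt_iff₀ h2, lt_div_iff₀ h1]
    constructor <;> rintro ⟨a, b⟩ <;> constructor <;> linarith

lemma Cyl_vol (σ P P' Q Q' : ℤ) (hσ : σ = 1 ∨ σ = -1) (hQ : 1 ≤ Q) (hQ' : 0 ≤ Q') (hdet : P' * Q - P * Q' = σ) :
    volume (Cyl σ P P' Q Q') = ENNReal.ofReal (1 / (Q * (Q + Q'))) := by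
  have h1 : (0:ℝ) < Q := by exact_mod_cast hQ
  have h2 : (0:ℝ) < Q + Q' := by exact_mod_cast (by omega : 0 < Q + Q')
  have hd : (P':ℝ) * Q - P * Q' = σ := by exact_mod_cast hdet
  rw [Cyl_eq _ _ _ _ _ hσ hQ hQ', Real.volume_Ioo]
  congr 1
  rcases hσ with rfl | rfl
  · simp only [if_true]
    rw [div_sub_div _ _ h2.ne' h1.ne', div_eq_div_iff (by positivity) (by positivity)]
    push_cast at hd
    linear_combination ((Q:ℝ) * (Q + Q')) * hd
  · rw [if_neg (by norm_num), if_neg (by norm_num)]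
    rw [div_sub_div _ _ h1.ne' h2.ne', div_eq_div_iff (by positivity) (by positivity)] 
    push_cast at hd
    linear_combination (-(Q:ℝ) * (Q + Q')) * hd

lemma Cyl_child (σ P P' Q Q' : ℤ) (c : ℕ) (hc : 1 ≤ c) (α : ℝ) (h : α ∈ Cyl (-σ) (c * P + P') P (c * Q + Q') Q) :
    0 < (σ:ℝ) * (α * Q - P) ∧ (c:ℝ) * (σ * (α * Q - P)) + σ * (α * Q' - P') < 0 ∧
    0 < ((c:ℝ) + 1) * (σ * (α * Q - P)) + σ * (α * Q' - P') := by
  simp only [Cyl, Set.mem_ofPred_eq] at h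
  obtain ⟨h1, h2⟩ := h
  push_cast at h1 h2
  have e1 : (c:ℝ) * (σ * (α * Q - P)) + σ * (α * Q' - P') < 0 := by linarith
  have e2 : 0 < ((c:ℝ) + 1) * (σ * (α * Q - P)) + σ * (α * Q' - P') := by linarith
  exact ⟨by linarith, e1, e2⟩

lemma Cyl_child_sub (σ P P' Q Q' : ℤ) (c : ℕ) (hc : 1 ≤ c) : Cyl (-σ) (c * P + P') P (c * Q + Q') Q ⊆ Cyl σ P P' Q Q' := by
  intro α h
  obtain ⟨h0, h1, h2⟩ := Cyl_child _ _ _ _ _ c hc α h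
  refine ⟨h0, ?_⟩
  have : (1:ℝ) ≤ c := by exact_mod_cast hc
  nlinarith

lemma Ek_sub (M : ℕ) : ∀ (k : ℕ) (σ P P' Q Q' : ℤ), Ek M k σ P P' Q Q' ⊆ Cyl σ P P' Q Q' := by
  intro k
  induction k with
  | zero => intro σ P P' Q Q'; exact subset_rfl
  | succ k ih =>
    intro σ P P' Q Q' α h
    simp only [Ek, Set.mem_iUnion] at h
    obtain ⟨c, hc, h⟩ := h
    exact Cyl_child_sub _ _ _ _ _ c (Finset.mem_Icc.1 hc).1 (ih _ _ _ _ _ h)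

lemma Ek_meas (M : ℕ) : ∀ (k : ℕ) (σ P P' Q Q' : ℤ), MeasurableSet (Ek M k σ P P' Q Q') := by
  intro k
  induction k with
  | zero =>
    intro σ P P' Q Q'
    show MeasurableSet ({α : ℝ | 0 < (σ:ℝ) * (α * Q - P)} ∩ {α : ℝ | (σ:ℝ) * (α * (Q + Q') - (P + P')) < 0})
    apply MeasurableSet.inter
    · exact measurableSet_lt (by fun_prop) (by fun_prop)
    · exact measurableSet_lt (by fun_prop) (by fun_prop)
  | succ k ih =>
    intro σ P P' Q Q'
    simp only [Ek]
    exact Finset.measurableSet_biUnion _ (fun c _ => ih _ _ _ _ _)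

lemma tele (M : ℕ) (Q Q' : ℝ) (hQ : 0 < Q) (hQ' : 0 ≤ Q') :
    ∑ c ∈ Finset.Icc 1 M, 1 / (((c:ℝ) * Q + Q') * ((c * Q + Q') + Q)) = M / ((Q + Q') * ((M + 1) * Q + Q')) := by
  induction M with
  | zero => simp
  | succ M ih =>
    rw [Finset.sum_Icc_succ_top (by omega), ih]
    have : 0 < (M + 1) * Q + Q' := by positivity
    push_cast
    field_simp
    ring

lemma Ek_vol (M : ℕ) (hM : 1 ≤ M) : ∀ (k : ℕ) (σ P P' Q Q' : ℤ), (σ = 1 ∨ σ = -1) → 1 ≤ Q → 0 ≤ Q' → Q' ≤ Q → P' * Q - P * Q' = σ →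
    ENNReal.ofReal (((M:ℝ) / (M + 2)) ^ k * (1 / (Q * (Q + Q')))) ≤ volume (Ek M k σ P P' Q Q') := by
  intro k
  induction k with
  | zero =>
    intro σ P P' Q Q' hσ hQ hQ' hQQ hd
    simp only [Ek]
    rw [Cyl_vol _ _ _ _ _ hσ hQ hQ' hd]; simp
  | succ k ih =>
    intro σ P P' Q Q' hσ hQ hQ' hQQ hd
    have h1 : (0:ℝ) < Q := by exact_mod_cast hQ
    have h2 : (0:ℝ) ≤ Q' := by exact_mod_cast hQ'
    have h3 : (Q':ℝ) ≤ Q := by exact_mod_cast hQQ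
    simp only [Ek]
    rw [measure_biUnion_finset]
    · have hs : ∀ c ∈ Finset.Icc 1 M, ENNReal.ofReal (((M:ℝ) / (M + 2)) ^ k * (1 / (((c:ℝ) * Q + Q') * ((c * Q + Q') + Q)))) ≤
          volume (Ek M k (-σ) (c * P + P') P (c * Q + Q') Q) := by
        intro c hc
        have hc1 : 1 ≤ c := (Finset.mem_Icc.1 hc).1
        have hc2 : (1:ℤ) ≤ c := by exact_mod_cast hc1
        have := ih (-σ) (c * P + P') P (c * Q + Q') Q (by omega) (by nlinarith) (by omega) (by nlinarith) (by rw [← hd]; ring)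
        push_cast at this
        exact this
      refine le_trans ?_ (Finset.sum_le_sum hs)
      rw [← ENNReal.ofReal_sum_of_nonneg (by intro c hc; positivity), ← Finset.mul_sum, tele M Q Q' h1 h2]
      apply ENNReal.ofReal_le_ofReal
      rw [pow_succ, mul_assoc]
      apply mul_le_mul_of_nonneg_left _ (by positivity)
      have hM0 : (0:ℝ) < M := by exact_mod_cast hM
      rw [div_mul_div_comm, div_le_div_iff₀ (by positivity) (by positivity)]
      have : (M + 1) * (Q:ℝ) + Q' ≤ (M + 2) * Q := by linarith
      calc (M:ℝ) * 1 * ((Q + Q') * ((M + 1) * Q + Q')) ≤ (M:ℝ) * 1 * ((Q + Q') * ((M + 2) * Q)) := by gcongr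
        _ = _ := by ring
    · intro c hc c' hc' hne
      have key : ∀ c c' : ℕ, 1 ≤ c → c < c' → Disjoint (Ek M k (-σ) (c * P + P') P (c * Q + Q') Q) (Ek M k (-σ) (c' * P + P') P (c' * Q + Q') Q) := by
        intro c c' hc hlt
        rw [Set.disjoint_left]
        intro α ha hb
        obtain ⟨a0, a1, a2⟩ := Cyl_child _ _ _ _ _ c hc α (Ek_sub _ _ _ _ _ _ _ ha)
        obtain ⟨b0, b1, b2⟩ := Cyl_child _ _ _ _ _ c' (by omega) α (Ek_sub _ _ _ _ _ _ _ hb)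
        have : (c:ℝ) + 1 ≤ c' := by exact_mod_cast hlt
        nlinarith
      have hc1 := (Finset.mem_Icc.1 (Finset.mem_coe.1 hc)).1
      have hc1' := (Finset.mem_Icc.1 (Finset.mem_coe.1 hc')).1
      rcases lt_or_gt_of_ne hne with h | h
      · exact key c c' hc1 h
      · exact (key c' c hc1' h).symm
    · intro c _; exact Ek_meas _ _ _ _ _ _ _

set_option maxHeartbeats 2000000 in
lemma Ek_approx (M : ℕ) : ∀ (k : ℕ) (σ P P' Q Q' : ℤ), (σ = 1 ∨ σ = -1) → 1 ≤ Q → 0 ≤ Q' → Q' ≤ Q → P' * Q - P * Q' = σ →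
    ∀ α ∈ Ek M k σ P P' Q Q', ∀ x u : ℤ, Q ≤ x → 2 * (x * x) < 2 ^ k * (Q * (Q + Q')) → 1 ≤ ((M:ℝ) + 2) * x * |x * α - u| := by
  intro k
  induction k with
  | zero =>
    intro σ P P' Q Q' hσ hQ hQ' hQQ hd α hα x u hx hlt
    exfalso
    nlinarith
  | succ k ih =>
    intro σ P P' Q Q' hσ hQ hQ' hQQ hd α hα x u hx hlt
    simp only [Ek, Set.mem_iUnion] at hα
    obtain ⟨c, hc, hα⟩ := hα
    obtain ⟨hc1, hcM⟩ := Finset.mem_Icc.1 hc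
    have hc2 : (1:ℤ) ≤ c := by exact_mod_cast hc1
    by_cases hxn : c * Q + Q' ≤ x
    · refine ih (-σ) (c * P + P') P (c * Q + Q') Q (by omega) (by nlinarith) (by omega) (by nlinarith) (by rw [← hd]; ring) α hα x u hxn ?_
      refine hlt.trans_le ?_
      rw [pow_succ, mul_assoc]
      apply mul_le_mul_of_nonneg_left _ (by positivity)
      have : Q ≤ c * Q := by nlinarith
      nlinarith
    · push Not at hxn
      obtain ⟨a0, a1, a2⟩ := Cyl_child _ _ _ _ _ c hc1 α (Ek_sub _ _ _ _ _ _ _ hα)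
      have hσ2 : σ * σ = 1 := by rcases hσ with rfl | rfl <;> norm_num
      have hσ2' : (σ:ℝ) * σ = 1 := by exact_mod_cast hσ2
      have hσabs : |(σ:ℝ)| = 1 := by rcases hσ with rfl | rfl <;> norm_num
      have hdR : (P':ℝ) * Q - P * Q' = σ := by exact_mod_cast hd
      set d0 : ℝ := σ * (α * Q - P) with hd0
      set d1 : ℝ := σ * (α * Q' - P') with hd1
      set m : ℤ := σ * (x * (c * P + P') - u * (c * Q + Q')) with hm
      set n : ℤ := σ * (u * Q - x * P) with hn
      have hxmn : x = m * Q + n * (c * Q + Q') := by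
        rw [hm, hn]
        linear_combination (-x * σ) * hd - x * hσ2
      have hcomb : (σ:ℝ) * (x * α - u) = m * d0 + n * (c * d0 + d1) := by
        rw [hm, hn, hd0, hd1]
        push_cast
        linear_combination (-(σ:ℝ) * (x * α - u)) * (σ * hdR + hσ2')
      have habs : |x * α - u| = |m * d0 + n * (c * d0 + d1)| := by
        rw [← hcomb, abs_mul, hσabs, one_mul]
      have hlow : d0 ≤ |x * α - u| := by
        rw [habs]
        have hQn : 0 < c * Q + Q' := by nlinarith
        have hm0 : m ≠ 0 := by
          intro h0
          rw [h0, zero_mul, zero_add] at hxmn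
          have : n < 1 := by by_contra hh; push Not at hh; nlinarith
          nlinarith
        rcases lt_or_gt_of_ne hm0 with hneg | hpos
        · have hn1 : 0 < n := by by_contra hh; push Not at hh; nlinarith
          have hmR : (m:ℝ) ≤ -1 := by exact_mod_cast (by omega : m ≤ -1)
          have hnR : (0:ℝ) ≤ n := by exact_mod_cast hn1.le
          have e1 : (m:ℝ) * d0 ≤ -d0 := by nlinarith
          have e2 : (n:ℝ) * (c * d0 + d1) ≤ 0 := mul_nonpos_of_nonneg_of_nonpos hnR a1.le
          rw [abs_of_nonpos (by linarith)]
          linarith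
        · have hn1 : n ≤ 0 := by by_contra hh; push Not at hh; nlinarith
          have hmR : (1:ℝ) ≤ m := by exact_mod_cast (by omega : 1 ≤ m)
          have hnR : (n:ℝ) ≤ 0 := by exact_mod_cast hn1
          have e1 : d0 ≤ (m:ℝ) * d0 := by nlinarith
          have e2 : 0 ≤ (n:ℝ) * (c * d0 + d1) := mul_nonneg_of_nonpos_of_nonpos hnR a1.le
          rw [abs_of_nonneg (by linarith)]
          linarith
      have hQR : (1:ℝ) ≤ Q := by exact_mod_cast hQ
      have hQR' : (Q':ℝ) ≤ Q := by exact_mod_cast hQQ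
      have hxR : (Q:ℝ) ≤ x := by exact_mod_cast hx
      have hcR : (c:ℝ) ≤ M := by exact_mod_cast hcM
      have hone : d0 * (c * Q + Q') - (c * d0 + d1) * Q = 1 := by
        rw [hd0, hd1]
        linear_combination (σ:ℝ) * hdR + hσ2'
      have h4 : 1 ≤ d0 * ((M + 2) * Q) := by
        have : d0 * (c * Q + Q' + Q) ≤ d0 * ((M + 2) * Q) := by
          apply mul_le_mul_of_nonneg_left _ a0.le
          have : (c:ℝ) * Q ≤ M * Q := by gcongr
          linarith
        have h6 : 0 ≤ (c * d0 + d1 + d0) * (Q:ℝ) := by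
          apply mul_nonneg <;> linarith
        linarith
      calc (1:ℝ) ≤ d0 * ((M + 2) * Q) := h4
        _ ≤ |x * α - u| * ((M + 2) * x) := by gcongr
        _ = _ := by ring

end Six
end Kor
end PartP6

section PartP6b
namespace Kor
section SixB
open MeasureTheory
variable {p : ℕ} [hp : Fact p.Prime]

theorem density (N M K X : ℕ) (hM : 1 ≤ M) (hN : 1 ≤ N) (hX : 2 * (X * X) < 2 ^ K) (hXN : 2 * (M + 2) * N * (X * X) ≤ p) :
    ∃ A : Finset (ZMod p), (p:ℝ) * ((M:ℝ) / (M + 2)) ^ K ≤ A.card ∧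
      ∀ r : ZMod p, (∃ a ∈ A, ∃ i < N, r = a + (i : ℕ)) → PastGood p X (2 * (M + 2)) r := by
  classical
  have hp0 : (0:ℝ) < p := by exact_mod_cast hp.out.pos
  set E := Ek M K 1 0 1 1 0 with hE
  set A' : Finset ℕ := (Finset.range p).filter (fun a => ∃ α ∈ E, (a:ℝ) ≤ α * p ∧ α * p < a + 1) with hA'
  have hcov : E ⊆ ⋃ a ∈ A', Set.Ico ((a:ℝ)/p) (((a:ℝ)+1)/p) := by
    intro α hα
    have hc := Ek_sub _ _ _ _ _ _ _ hα
    simp only [Cyl, Set.mem_ofPred_eq] at hc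
    norm_num at hc
    obtain ⟨h0, h1⟩ := hc
    have hnn : 0 ≤ α * p := by positivity
    have f1 := Nat.floor_le hnn
    have f2 := Nat.lt_floor_add_one (α * p)
    simp only [Set.mem_iUnion]
    refine ⟨⌊α * p⌋₊, ?_, ?_⟩
    · rw [hA', Finset.mem_filter, Finset.mem_range]
      refine ⟨?_, α, hα, f1, f2⟩
      rw [Nat.floor_lt hnn]
      nlinarith
    · rw [Set.mem_Ico, div_le_iff₀ hp0, lt_div_iff₀ hp0]
      exact ⟨f1, f2⟩
  have hvol : (p:ℝ) * ((M:ℝ) / (M + 2)) ^ K ≤ A'.card := by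
    have h1 := Ek_vol M hM K 1 0 1 1 0 (Or.inl rfl) le_rfl le_rfl (by norm_num) (by norm_num)
    have h2 := h1.trans (measure_mono hcov)
    have h3 := h2.trans (measure_biUnion_finset_le _ _)
    have h4 : ∀ a : ℕ, volume (Set.Ico ((a:ℝ)/p) (((a:ℝ)+1)/p)) = ENNReal.ofReal (1 / p) := by
      intro a; rw [Real.volume_Ico]; congr 1; ring
    simp only [h4, Finset.sum_const, nsmul_eq_mul] at h3
    rw [← ENNReal.ofReal_natCast, ← ENNReal.ofReal_mul (by positivity),
      ENNReal.ofReal_le_ofReal_iff (by positivity)] at h3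
    norm_num at h3
    rw [← div_eq_mul_inv, le_div_iff₀ hp0] at h3
    linarith
  refine ⟨A'.image (fun a : ℕ => (a : ZMod p)), ?_, ?_⟩
  · rw [Finset.card_image_of_injOn]
    · exact hvol
    · intro a ha b hb hab
      have ha' := Finset.mem_range.1 (Finset.mem_filter.1 (Finset.mem_coe.1 ha)).1
      have hb' := Finset.mem_range.1 (Finset.mem_filter.1 (Finset.mem_coe.1 hb)).1
      have := (ZMod.natCast_eq_natCast_iff' a b p).1 hab
      rwa [Nat.mod_eq_of_lt ha', Nat.mod_eq_of_lt hb'] at this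
  · rintro r ⟨a0, ha0, i, hi, rfl⟩
    obtain ⟨a, ha, rfl⟩ := Finset.mem_image.1 ha0
    obtain ⟨_, α, hα, f1, f2⟩ := Finset.mem_filter.1 ha
    intro x hx1 hxX y hy
    have hdvd : (p:ℤ) ∣ ((a:ℤ) + i) * x - y := by
      rw [← ZMod.intCast_zmod_eq_zero_iff_dvd]
      push_cast
      rw [hy]; ring
    obtain ⟨u, hu⟩ := hdvd
    have hap := Ek_approx M K 1 0 1 1 0 (Or.inl rfl) le_rfl le_rfl (by norm_num) (by norm_num) α hα x u (by exact_mod_cast hx1) (by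
      have : 2 * (x * x) ≤ 2 * (X * X) := by gcongr
      have : 2 * (x * x) < 2 ^ K := by omega
      have : (2 * (x * x) : ℤ) < 2 ^ K := by exact_mod_cast this
      linarith)
    have huR : ((a:ℝ) + i) * x - y = p * u := by exact_mod_cast hu
    have hxR : (1:ℝ) ≤ x := by exact_mod_cast hx1
    have hiR : (i:ℝ) + 1 ≤ N := by exact_mod_cast hi
    have hi0 : (0:ℝ) ≤ i := by positivity
    have hbd : p * |(x:ℝ) * α - u| ≤ |(y:ℝ)| + x * N := by
      have e : (p:ℝ) * (x * α - u) = y + x * (α * p - a - i) := by linear_combination huR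
      calc p * |(x:ℝ) * α - u| = |(p:ℝ) * (x * α - u)| := by rw [abs_mul, abs_of_pos hp0]
        _ = |y + x * (α * p - a - i)| := by rw [e]
        _ ≤ |(y:ℝ)| + |x * (α * p - a - i)| := abs_add_le _ _
        _ ≤ _ := by
          rw [abs_mul, abs_of_pos (by linarith : (0:ℝ) < x)]
          gcongr
          rw [abs_le]; constructor <;> linarith
    have hXR : 2 * ((M:ℝ) + 2) * N * (x * x) ≤ p := by
      have : 2 * (M + 2) * N * (x * x) ≤ p := le_trans (by gcongr) hXN
      exact_mod_cast this
    have h5 : (p:ℝ) ≤ ((M:ℝ) + 2) * x * (|(y:ℝ)| + x * N) := by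
      push_cast at hap
      calc (p:ℝ) = p * 1 := by ring
        _ ≤ p * (((M:ℝ) + 2) * x * |x * α - u|) := by gcongr
        _ = ((M:ℝ) + 2) * x * (p * |x * α - u|) := by ring
        _ ≤ _ := by gcongr
    have h6 : (p:ℝ) ≤ 2 * (M + 2) * x * |(y:ℝ)| := by nlinarith
    have h7 : |(y:ℝ)| = (y.natAbs : ℝ) := by rw [Nat.cast_natAbs]; push_cast; rfl
    rw [h7] at h6
    exact_mod_cast h6

end SixB
end Kor
end PartP6b

section PartP8
namespace Kor
section Eight
open Finset
variable {p : ℕ} [hp : Fact p.Prime]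

lemma master (n u : ℕ) (hn : 8 ≤ n) (hu : n ^ (16 * n ^ 2) ≤ u) : 940800 * n ^ 2 * (8 * n ^ (2 * n)) ^ (4 * n) ≤ u := by
  refine le_trans ?_ hu
  have h1 : 8 * n ^ (2 * n) ≤ n ^ (3 * n) := by
    calc 8 * n ^ (2 * n) ≤ n * n ^ (2 * n) := by gcongr
      _ = n ^ (2 * n + 1) := by ring
      _ ≤ n ^ (3 * n) := Nat.pow_le_pow_right (by omega) (by omega)
  have h2 : 940800 ≤ n ^ 7 := le_trans (by norm_num) (Nat.pow_le_pow_left hn 7)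
  calc 940800 * n ^ 2 * (8 * n ^ (2 * n)) ^ (4 * n) ≤ n ^ 7 * n ^ 2 * (n ^ (3 * n)) ^ (4 * n) := by gcongr
    _ = n ^ (9 + 3 * n * (4 * n)) := by rw [← pow_mul]; ring
    _ ≤ _ := Nat.pow_le_pow_right (by omega) (by nlinarith)

set_option maxHeartbeats 2000000 in
open Classical in
theorem spec' (n s m u N : ℕ) (hn : 8 ≤ n) (hs : 2 ^ s = n) (hm : m + 3 = n) (hu : n ^ (16 * n ^ 2) ≤ u) (huN : u ^ 8 ≤ N)
    (hNp : 2 * N ^ m < p) (hpN : p ≤ 4 * N ^ m) (f : PL p → ℝ) (hf : ∑ x, f x = 0) :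
    nrm (Bop p N f) ^ (m + 3) ≤ (1 / (n:ℝ) ^ 2) ^ (m + 3) * nrm f ^ (m + 3) := by
  have hmas := master n u hn hu
  set W : ℕ := n ^ (2 * n) with hW
  have hW1 : 1 ≤ W := Nat.one_le_pow _ _ (by omega)
  have hnn : 64 ≤ n ^ 2 := by nlinarith
  have hpow1 : 8 * W ≤ (8 * W) ^ (4 * n) := Nat.le_self_pow (by omega) _
  have hu1 : 940800 * n ^ 2 * (8 * W) ≤ u := le_trans (by gcongr) hmas
  have huW : 940800 * W ≤ u := by nlinarith
  have hun : 940800 * n ^ 2 ≤ u := by nlinarith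
  have hunn : 940800 * n ≤ u := by nlinarith
  have hu2 : 940800 ≤ u := by nlinarith
  have huu : u ≤ u ^ 8 := Nat.le_self_pow (by omega) _
  have hN0 : 0 < N := by omega
  have hmn : m ≤ n := by omega
  have hNm : N ^ 2 ≤ N ^ m := Nat.pow_le_pow_right hN0 (by omega)
  have hN1 : N ≤ N ^ m := Nat.le_self_pow (by omega) _
  have hp2 : p ≠ 2 := by omega
  -- real versions
  have U1 : (940800:ℝ) ≤ u := by exact_mod_cast hu2
  have U0 : (0:ℝ) < u := by linarith
  have NR : (0:ℝ) < N := by exact_mod_cast hN0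
  have WR : (1:ℝ) ≤ W := by exact_mod_cast hW1
  have pR : (0:ℝ) < p := by exact_mod_cast hp.out.pos
  have huN' : (u:ℝ) ^ 8 ≤ N := by exact_mod_cast huN
  have hpN' : (p:ℝ) ≤ 4 * (N:ℝ) ^ m := by exact_mod_cast hpN
  have huWR : 940800 * (W:ℝ) ≤ u := by exact_mod_cast huW
  have hunR : 940800 * (n:ℝ) ^ 2 ≤ u := by exact_mod_cast hun
  have mR : (m:ℝ) ≤ n := by exact_mod_cast hmn
  have m1 : (1:ℝ) ≤ m := by exact_mod_cast (by omega : 1 ≤ m)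
  have nR : (8:ℝ) ≤ n := by exact_mod_cast hn
  have huN1 : (u:ℝ) ≤ N := le_trans (by exact_mod_cast huu) huN'
  set θ : ℝ := 1 / (8 * W) with hθ
  have hθ0 : 0 < θ := by positivity
  set υ : ℝ := 12 / u with hυ
  have hυ0 : 0 < υ := by positivity
  set ρ : ℝ := 140 * ((2 * m : ℕ):ℝ) * Real.sqrt υ with hρ
  have hρ0 : 0 ≤ ρ := by positivity
  have hρ2 : ρ ^ 2 = 19600 * (2 * m) ^ 2 * υ := by
    rw [hρ, mul_pow, Real.sq_sqrt hυ0.le]; push_cast; ring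
  set β : ℝ := 30 / u ^ 2 with hβ
  set b : ℕ := m * (N * (2 * u ^ 4)) * (N ^ 2) ^ (m - 1) + N * (u * (2 * u + 1) * (4 * N / (u ^ 4 - 1) + 1)) * (N ^ 2) ^ (m - 1) with hb
  have hbad : (univ.filter (fun e : Fin m → Fin N × Fin N => ¬ Good p (u ^ 4) u m (dg N ∘ e))).card ≤ b := by
    obtain ⟨m', rfl⟩ : ∃ m', m = m' + 1 := ⟨m - 1, by omega⟩
    have h4 : 4 ≤ u ^ 4 := le_trans (by omega : 4 ≤ u) (Nat.le_self_pow (by omega) _)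
    have := bad_count (dg N) p N (u ^ 4) u m' (by simp [sq]) (dg_fib N) (dg_abs N) hNp h4
    simpa [hb] using this
  have hbβ : (b:ℝ) ≤ β * (N:ℝ) ^ (2 * m) := by
    have hdiv : ((4 * N / (u ^ 4 - 1) : ℕ):ℝ) ≤ 8 * N / u ^ 4 := by
      refine Nat.cast_div_le.trans ?_
      have h1 : 1 ≤ u ^ 4 := Nat.one_le_pow _ _ (by omega)
      have h2 : (2:ℝ) ≤ (u:ℝ) ^ 4 := by
        have : (u:ℝ) ≤ (u:ℝ)^4 := le_self_pow₀ (by linarith) (by norm_num)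
        linarith
      push_cast [Nat.cast_sub h1]
      rw [div_le_div_iff₀ (by linarith) (by positivity)]
      nlinarith
    have hNmm : (N:ℝ) ^ (2 * m) = N ^ 2 * ((N:ℝ) ^ 2) ^ (m - 1) := by
      rw [pow_mul, ← pow_succ']; congr 1; omega
    have e : (b:ℝ) = (m * (N * (2 * (u:ℝ) ^ 4)) + N * (u * (2 * u + 1) * (((4 * N / (u ^ 4 - 1) : ℕ):ℝ) + 1))) * ((N:ℝ) ^ 2) ^ (m - 1) := by
      rw [hb]; push_cast; ring
    rw [e, hNmm, ← mul_assoc β]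
    apply mul_le_mul_of_nonneg_right _ (by positivity)
    have h1 : (m:ℝ) * (N * (2 * (u:ℝ) ^ 4)) ≤ N * (N * (1 / u ^ 2)) := by
      have : (m:ℝ) * (2 * (u:ℝ) ^ 4) * u ^ 2 ≤ N := by
        calc (m:ℝ) * (2 * (u:ℝ) ^ 4) * u ^ 2 = (2 * m) * u ^ 6 := by ring
          _ ≤ (u:ℝ) * u ^ 6 := by gcongr; nlinarith
          _ = (u:ℝ) ^ 7 := by ring
          _ ≤ (u:ℝ) ^ 8 := pow_le_pow_right₀ (by linarith) (by norm_num)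
          _ ≤ (N:ℝ) := huN'
      calc (m:ℝ) * (N * (2 * (u:ℝ) ^ 4)) = N * (m * (2 * (u:ℝ) ^ 4)) := by ring
        _ ≤ (N:ℝ) * (N * (1 / u ^ 2)) := by
          apply mul_le_mul_of_nonneg_left _ NR.le
          rw [mul_one_div, le_div_iff₀ (by positivity)]; exact this
    have h2 : (N:ℝ) * (u * (2 * u + 1) * (((4 * N / (u ^ 4 - 1) : ℕ):ℝ) + 1)) ≤ N * (N * (27 / u ^ 2)) := by
      have : ((4 * N / (u ^ 4 - 1) : ℕ):ℝ) + 1 ≤ 9 * N / u ^ 4 := by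
        have : (1:ℝ) ≤ N / u ^ 4 := by
          rw [le_div_iff₀ (by positivity), one_mul]
          exact le_trans (pow_le_pow_right₀ (by linarith) (by norm_num)) huN'
        calc _ ≤ 8 * (N:ℝ) / u ^ 4 + N / u ^ 4 := by linarith
          _ = _ := by ring
      calc (N:ℝ) * (u * (2 * u + 1) * (((4 * N / (u ^ 4 - 1) : ℕ):ℝ) + 1)) ≤ N * (u * (3 * u) * (9 * N / u ^ 4)) := by
            gcongr; linarith
        _ = _ := by field_simp; ring
    calc _ ≤ (N:ℝ) * (N * (1 / u ^ 2)) + N * (N * (27 / u ^ 2)) := add_le_add h1 h2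
      _ = 28 / u ^ 2 * N ^ 2 := by ring
      _ ≤ _ := by rw [hβ]; gcongr; norm_num
  have hυ' : (p:ℝ) * (N ^ (m + 1) * (2 * N / (u + 1) + 1) : ℕ) ≤ υ * (N:ℝ) ^ (2 * (m + 1)) := by
    have hdiv : ((2 * N / (u + 1) : ℕ):ℝ) ≤ 2 * N / u := by
      refine Nat.cast_div_le.trans ?_
      push_cast
      gcongr; linarith
    have h1 : (1:ℝ) ≤ N / u := by rw [le_div_iff₀ U0]; linarith
    push_cast
    calc (p:ℝ) * (N ^ (m + 1) * (((2 * N / (u + 1) : ℕ):ℝ) + 1)) ≤ 4 * (N:ℝ) ^ m * (N ^ (m + 1) * (2 * N / u + N / u)) := by gcongr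
      _ = _ := by rw [hυ]; ring
  have hρυ : 3 * υ * (p * ((4 * ((2 * m : ℕ):ℝ) ^ 2 / N)) ^ (2 * m) + (80 * ((2 * m : ℕ):ℝ)) ^ 2) ≤ ρ ^ 2 := by
    have h1 : p * ((4 * ((2 * m : ℕ):ℝ) ^ 2 / N)) ^ (2 * m) ≤ 1 := by
      have hbase : (4 * ((2 * m : ℕ):ℝ) ^ 2) ^ 2 * 4 ≤ (N:ℝ) := by
        rw [Nat.cast_mul, Nat.cast_ofNat]
        have a1 : (m:ℝ) ^ 2 ≤ n ^ 2 := by gcongr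
        have a2 : 64 * (m:ℝ) ^ 2 ≤ u := by nlinarith
        calc (4 * (2 * (m:ℝ)) ^ 2) ^ 2 * 4 = (64 * (m:ℝ) ^ 2) ^ 2 / 4 := by ring
          _ ≤ (u:ℝ) ^ 2 / 4 := by gcongr
          _ ≤ (u:ℝ) ^ 2 := by linarith [sq_nonneg (u:ℝ)]
          _ ≤ (u:ℝ) ^ 8 := pow_le_pow_right₀ (by linarith) (by norm_num)
          _ ≤ (N:ℝ) := huN'
      have h4 : (4:ℝ) ≤ 4 ^ m := le_self_pow₀ (by norm_num) (by omega)
      calc p * ((4 * ((2 * m : ℕ):ℝ) ^ 2 / N)) ^ (2 * m) ≤ (4 * (N:ℝ) ^ m) * ((4 * ((2 * m : ℕ):ℝ) ^ 2 / N)) ^ (2 * m) := by gcongr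
        _ = 4 * ((4 * ((2 * m : ℕ):ℝ) ^ 2) ^ 2 / N) ^ m := by
          rw [pow_mul, mul_assoc, ← mul_pow]; congr 2; field_simp
        _ ≤ 4 ^ m * ((4 * ((2 * m : ℕ):ℝ) ^ 2) ^ 2 / N) ^ m := by gcongr
        _ = ((4 * ((2 * m : ℕ):ℝ) ^ 2) ^ 2 * 4 / N) ^ m := by rw [← mul_pow]; congr 1; ring
        _ ≤ 1 := pow_le_one₀ (by positivity) (by rw [div_le_one NR]; exact hbase)
    rw [hρ2]
    calc _ ≤ 3 * υ * (1 + (80 * ((2 * m : ℕ):ℝ)) ^ 2) := by gcongr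
      _ ≤ _ := by push_cast; nlinarith [mul_le_mul m1 m1 (by norm_num) (by linarith), hυ0]
  have hsq : 200 * (2 * m) ≤ Nat.sqrt p := by
    rw [Nat.le_sqrt']
    have h1 : 200 * (2 * m) ≤ N := by omega
    have h2 : (200 * (2 * m)) ^ 2 ≤ N ^ 2 := by gcongr
    omega
  have hmain := spec (p := p) hp2 N m s (u ^ 4) u (2 * m) b (by omega) hN0 hNp (by omega)
    (le_trans (by omega : 4 ≤ u) (Nat.le_self_pow (by omega) _)) (by omega) hsq υ ρ β θ hθ0 hρ0 hυ0.le hbad hbβ hυ' (by exact_mod_cast hρυ) f hf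
  refine hmain.trans ?_
  apply mul_le_mul_of_nonneg_right _ (pow_nonneg (nrm_nonneg _) _)
  have hW8 : (8 * (W:ℝ)) * θ = 1 := by rw [hθ]; field_simp
  have hρθ : ρ / θ ^ (2 * m - 1) ≤ θ := by
    rw [div_le_iff₀ (by positivity), ← pow_succ']
    have e : 2 * m - 1 + 1 = 2 * m := by omega
    rw [e]
    refine le_of_pow_le_pow_left₀ two_ne_zero (by positivity) ?_
    rw [hρ2, hυ, hθ, div_pow, div_pow, one_pow, one_pow, ← pow_mul, mul_div_assoc', div_le_div_iff₀ U0 (by positivity), one_mul]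
    have hmR : (940800:ℝ) * n ^ 2 * (8 * W) ^ (4 * n) ≤ u := by exact_mod_cast hmas
    calc 19600 * (2 * (m:ℝ)) ^ 2 * 12 * (8 * W) ^ (2 * m * 2) = 940800 * (m:ℝ) ^ 2 * (8 * W) ^ (2 * m * 2) := by ring
      _ ≤ 940800 * (n:ℝ) ^ 2 * (8 * W) ^ (4 * n) := by
        have h9 : (8 * (W:ℝ)) ^ (2 * m * 2) ≤ (8 * (W:ℝ)) ^ (4 * n) := pow_le_pow_right₀ (by linarith) (by omega)
        have h10 : (m:ℝ) ^ 2 ≤ (n:ℝ) ^ 2 := by gcongr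
        exact mul_le_mul (by linarith) h9 (by positivity) (by positivity)
      _ ≤ (u:ℝ) := hmR
  have hυθ : 3 * υ ≤ θ := by
    rw [hυ, hθ, mul_div_assoc', div_le_div_iff₀ U0 (by positivity)]
    linarith
  have hβθ : β ^ 2 ≤ θ := by
    rw [hβ, hθ, div_pow, div_le_div_iff₀ (by positivity) (by positivity)]
    have : (u:ℝ) ≤ (u ^ 2) ^ 2 := by rw [← pow_mul]; exact le_self_pow₀ (by linarith) (by norm_num)
    linarith
  have hfin : (1 / (n:ℝ) ^ 2) ^ (m + 3) = 8 * θ := by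
    rw [hm, hθ, hW, div_pow, one_pow, ← pow_mul]; push_cast; field_simp
  rw [hfin]
  linarith

end Eight
end Kor
end PartP8

section PartP9
namespace Kor
section Nine
open Finset

theorem main_step {p : ℕ} [hp : Fact p.Prime] (n s m u N M K X : ℕ) (hn : 8 ≤ n) (hs : 2 ^ s = n) (hm : m + 3 = n) (hu : n ^ (16 * n ^ 2) ≤ u) (huN : u ^ 8 ≤ N)
    (hNp : 2 * N ^ m < p) (hpN : p ≤ 4 * N ^ m) (hM : 1 ≤ M) (hX : 2 * (X * X) < 2 ^ K) (hX1 : 1 ≤ X)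
    (hXN : 2 * (M + 2) * N * (X * X) ≤ p) (δ : ℝ) (hδ : δ ≤ ((M:ℝ) / (M + 2)) ^ K) (hδ1 : 4 / (n:ℝ) ≤ δ)
    (hδ2 : 1 / ((M:ℝ) + 2) * Real.log ((p:ℝ) / (X * X)) < δ ^ 2 / 2) :
    ∃ a : ℕ, 1 ≤ a ∧ a < p ∧ Nat.gcd a p = 1 ∧ ∃ l : List ℕ, IsCFOf ((a:ℚ)/p) l ∧ ∀ c ∈ l, c ≤ 2 * (M + 2) := by
  classical
  have hp0 : (0:ℝ) < p := by exact_mod_cast hp.out.pos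
  have hu0 : 0 < u := lt_of_lt_of_le (Nat.pos_of_ne_zero (pow_ne_zero _ (by omega))) hu
  have hN0 : 0 < N := lt_of_lt_of_le (by positivity) huN
  have hn0 : (0:ℝ) < n := by exact_mod_cast (by omega : 0 < n)
  have hNm : 1 ≤ N ^ m := Nat.one_le_pow _ _ hN0
  obtain ⟨A, hA, hgood⟩ := density (p := p) N M K X hM hN0 hX hXN
  have hAδ : δ * p ≤ A.card := by
    refine le_trans ?_ hA
    rw [mul_comm]; gcongr
  have hAδ' : δ ≤ (A.card:ℝ) / p := by rw [le_div_iff₀ hp0]; exact hAδ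
  have hδ0 : 0 < δ := lt_of_lt_of_le (by positivity) hδ1
  have hexp := expander (p := p) N A m (by omega) hN0 _ (1 / (n:ℝ) ^ 2)
    (fun f hf => spec' n s m u N hn hs hm hu huN hNp hpN f hf) (by positivity) le_rfl (by
      have : 1 / (n:ℝ) ≤ (A.card:ℝ) / (4 * p) := by
        have : 4 / (n:ℝ) ≤ (A.card:ℝ) / p := hδ1.trans hAδ'
        have e : (A.card:ℝ) / (4 * p) = (A.card:ℝ) / p / 4 := by field_simp
        have e' : 1 / (n:ℝ) = 4 / n / 4 := by field_simp
        rw [e, e']; linarith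
      calc 1 / (n:ℝ) ^ 2 = (1 / (n:ℝ)) ^ 2 := by rw [div_pow, one_pow]
        _ ≤ _ := by gcongr)
  have hmid := mid_count (p := p) X (2 * (M + 2)) hX1 (by omega) (by nlinarith [Nat.mul_pos (Nat.mul_pos (by omega : 0 < 2 * (M + 2)) hN0) (Nat.mul_pos hX1 hX1), Nat.le_mul_of_pos_left (X * X) (Nat.mul_pos (by omega : 0 < 2 * (M + 2)) hN0)])
  set S := Finset.univ.filter (fun x : ZMod p => x ≠ 0 ∧ (∃ a ∈ A, ∃ i < N, x = a + (i : ℕ)) ∧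
       (∃ a ∈ A, ∃ i < N, x⁻¹ = a + (i : ℕ))) with hS
  have hlt : (midBad p X (2 * (M + 2))).card < S.card := by
    have : ((midBad p X (2 * (M + 2))).card : ℝ) < S.card := by
      refine lt_of_le_of_lt hmid (lt_of_lt_of_le ?_ hexp)
      have h1 : p * (δ ^ 2 / 2) ≤ (A.card:ℝ) ^ 2 / (2 * p) := by
        rw [le_div_iff₀ (by positivity)]
        have : (δ * p) ^ 2 ≤ (A.card:ℝ) ^ 2 := by gcongr
        nlinarith
      refine lt_of_lt_of_le ?_ h1
      calc _ = p * (1 / ((M:ℝ) + 2) * Real.log ((p:ℝ) / (X * X))) := by push_cast; field_simp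
        _ < _ := by gcongr
    exact_mod_cast this
  obtain ⟨r, hrS, hrb⟩ := Finset.exists_mem_notMem_of_card_lt_card hlt
  rw [hS, Finset.mem_filter] at hrS
  obtain ⟨_, hr0, hr1, hr2⟩ := hrS
  obtain ⟨a, ha1, ha2, ha3⟩ := good_of X (2 * (M + 2)) r hr0 (hgood r hr1) (hgood _ hr2) hrb
  exact ⟨a, ha1, ha2, cf_final p _ a hp.out ha1 ha2 ha3⟩

lemma exists_N (n m p : ℕ) (L : ℝ) (hn : 8 ≤ n) (hm : m + 3 = n) (hp : 0 < p) (hL : L = Real.log p) (hnL : (n:ℝ) ^ 4 ≤ L)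
    (hlog : Real.log n ≤ n / 4096) :
    ∃ N : ℕ, (n ^ (16 * n ^ 2)) ^ 8 ≤ N ∧ 2 * N ^ m < p ∧ p ≤ 4 * N ^ m := by
  set T := (n ^ (16 * n ^ 2)) ^ 8 with hT
  have hn0 : (8:ℝ) ≤ n := by exact_mod_cast hn
  have hpR : (0:ℝ) < p := by exact_mod_cast hp
  have hTp : 2 * T ^ m < p := by
    have hTR : (T:ℝ) = Real.exp (128 * n ^ 2 * Real.log n) := by
      have : (T:ℝ) = (n:ℝ) ^ (128 * n ^ 2) := by rw [hT]; push_cast; rw [← pow_mul]; congr 1; ring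
      rw [this, ← Real.rpow_natCast, Real.rpow_def_of_pos (by linarith)]
      congr 1; push_cast; ring
    have : (2:ℝ) * (T:ℝ) ^ m < p := by
      rw [hTR, ← Real.exp_nat_mul]
      have h2 : (2:ℝ) ≤ Real.exp 1 := by linarith [Real.add_one_le_exp (1:ℝ)]
      calc (2:ℝ) * Real.exp (m * (128 * n ^ 2 * Real.log n)) ≤ Real.exp 1 * Real.exp (m * (128 * n ^ 2 * Real.log n)) := by gcongr
        _ = Real.exp (1 + m * (128 * n ^ 2 * Real.log n)) := by rw [Real.exp_add]
        _ < Real.exp L := by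
          rw [Real.exp_lt_exp]
          have hmn : (m:ℝ) ≤ n := by exact_mod_cast (by omega : m ≤ n)
          have hl0 : 0 ≤ Real.log n := Real.log_nonneg (by linarith)
          have : (m:ℝ) * (128 * n ^ 2 * Real.log n) ≤ n * (128 * n ^ 2 * (n / 4096)) := by gcongr
          have h4 : (1:ℝ) ≤ n ^ 4 / 4096 := by
            have : (8:ℝ) ^ 4 ≤ n ^ 4 := by gcongr
            linarith
          have e : (n:ℝ) * (128 * n ^ 2 * (n / 4096)) = n ^ 4 / 32 := by ring
          linarith
        _ = p := by rw [hL, Real.exp_log hpR]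
    exact_mod_cast this
  set N := Nat.findGreatest (fun N => 2 * N ^ m < p) p with hN
  have hTle : T ≤ p := by
    have : T ≤ T ^ m := Nat.le_self_pow (by omega) _
    omega
  have h1 : T ≤ N := Nat.le_findGreatest hTle hTp
  have h2 : 2 * N ^ m < p := Nat.findGreatest_spec (P := fun N => 2 * N ^ m < p) hTle hTp
  have hTn : n ≤ T := by
    rw [hT, ← pow_mul]; exact Nat.le_self_pow (by positivity) _
  have hNn : n ≤ N := hTn.trans h1
  have hT2 : 2 * n ≤ T := by
    rw [hT, ← pow_mul]
    calc 2 * n ≤ n * n := by gcongr; omega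
      _ = n ^ 2 := by ring
      _ ≤ _ := Nat.pow_le_pow_right (by omega) (by nlinarith)
  refine ⟨N, h1, h2, ?_⟩
  have h3 : p ≤ 2 * (N + 1) ^ m := by
    by_contra hlt
    push Not at hlt
    have : N + 1 ≤ p := by
      have : N + 1 ≤ (N + 1) ^ m := Nat.le_self_pow (by omega) _
      omega
    have := Nat.le_findGreatest (P := fun N => 2 * N ^ m < p) this hlt
    omega
  have h4 : ((N:ℝ) + 1) ^ m ≤ 2 * (N:ℝ) ^ m := by
    have hN1 : (0:ℝ) < (N:ℝ) + 1 := by positivity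
    have hb := one_add_mul_le_pow (a := -(1 / ((N:ℝ) + 1))) (by
      have : 1 / ((N:ℝ) + 1) ≤ 1 := by rw [div_le_one hN1]; linarith [(Nat.cast_nonneg N : (0:ℝ) ≤ N)]
      linarith) m
    have h5 : (1:ℝ) / 2 ≤ 1 + m * -(1 / ((N:ℝ) + 1)) := by
      have : (m:ℝ) * (1 / ((N:ℝ) + 1)) ≤ 1 / 2 := by
        rw [mul_one_div, div_le_div_iff₀ hN1 (by norm_num)]
        have : (m * 2 : ℕ) ≤ N + 1 := by omega
        have : (m:ℝ) * 2 ≤ N + 1 := by exact_mod_cast this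
        linarith
      linarith
    have e : 1 + -(1 / ((N:ℝ) + 1)) = N / (N + 1) := by field_simp; ring
    rw [e] at hb
    have h6 := h5.trans hb
    rw [div_pow, le_div_iff₀ (by positivity)] at h6
    linarith
  have h5 : (N + 1) ^ m ≤ 2 * N ^ m := by exact_mod_cast h4
  omega

end Nine
end Kor
end PartP9

namespace Kor
section Ten

lemma exists_n0 : ∃ n0 : ℕ, 8 ≤ n0 ∧ ∀ n : ℕ, n0 ≤ n → (Real.log n) ^ 2 ≤ n / 4096 := by
  have h := (Real.isLittleO_pow_log_id_atTop (n := 2)).bound (show (0:ℝ) < 1 / 4096 by norm_num)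
  have h2 := tendsto_natCast_atTop_atTop (R := ℝ) |>.eventually h
  obtain ⟨a, ha⟩ := Filter.eventually_atTop.1 h2
  refine ⟨max a 8, le_max_right _ _, fun n hn => ?_⟩
  have := ha n (le_trans (le_max_left _ _) hn)
  rw [Real.norm_of_nonneg (by positivity)] at this
  simp only [id] at this
  rw [Real.norm_of_nonneg (by positivity)] at this
  linarith

lemma log16 (n : ℕ) (hn : 8 ≤ n) : Real.log (16 * (n:ℝ) ^ 4) ≤ 8 * Real.log n := by
  have hn0 : (8:ℝ) ≤ n := by exact_mod_cast hn
  rw [show (8:ℝ) * Real.log n = Real.log ((n:ℝ) ^ 8) by rw [Real.log_pow]; norm_num]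
  apply Real.log_le_log (by positivity)
  have : (8:ℝ) ^ 4 ≤ n ^ 4 := by gcongr
  nlinarith [pow_pos (by linarith : (0:ℝ) < n) 4]

lemma delta_one (n : ℕ) (L δ : ℝ) (hn : 8 ≤ n) (hδ : 0 < δ) (hL : 0 < L) (hLn : L ≤ 16 * (n:ℝ) ^ 4) (h16 : δ ^ 16 = 1 / L) :
    4 / (n:ℝ) ≤ δ := by
  have hn0 : (8:ℝ) ≤ n := by exact_mod_cast hn
  refine le_of_pow_le_pow_left₀ (n := 16) (by norm_num) hδ.le ?_
  rw [h16, div_pow, div_le_div_iff₀ (by positivity) hL]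
  have h12 : (8:ℝ) ^ 12 ≤ n ^ 12 := by gcongr
  calc (4:ℝ) ^ 16 * L ≤ (4:ℝ) ^ 16 * (16 * (n:ℝ) ^ 4) := by gcongr
    _ = (8:ℝ) ^ 12 * (n:ℝ) ^ 4 := by ring
    _ ≤ (n:ℝ) ^ 12 * (n:ℝ) ^ 4 := by gcongr
    _ = _ := by ring

lemma delta_two (n : ℕ) (L δ M W : ℝ) (hn : 8 ≤ n) (hδ : 0 < δ) (hL : 1 < L) (hLn : L ≤ 16 * (n:ℝ) ^ 4) (hnL : (n:ℝ) ^ 4 ≤ L)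
    (h16 : δ ^ 16 = 1 / L) (hlog : (Real.log n) ^ 2 ≤ n / 4096) (hM : 64 * L / Real.log L ≤ M) (hW : W ≤ 66 * (n:ℝ) ^ 3) :
    1 / (M + 2) * W < δ ^ 2 / 2 := by
  have hn0 : (8:ℝ) ≤ n := by exact_mod_cast hn
  have hΛ : 0 < Real.log L := Real.log_pos hL
  have hl : 0 < Real.log n := Real.log_pos (by linarith)
  have hM0 : 0 < M := lt_of_lt_of_le (by positivity) hM
  have hΛ8 : Real.log L ≤ 8 * Real.log n := (Real.log_le_log (by linarith) hLn).trans (log16 n hn)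
  have a1 : 1 / (M + 2) * W ≤ 66 * (n:ℝ) ^ 3 / (64 * L / Real.log L) := by
    calc 1 / (M + 2) * W ≤ 1 / (M + 2) * (66 * (n:ℝ) ^ 3) := by gcongr
      _ = 66 * (n:ℝ) ^ 3 / (M + 2) := by ring
      _ ≤ _ := by gcongr; linarith
  have a2 : 66 * (n:ℝ) ^ 3 / (64 * L / Real.log L) ≤ 16 * Real.log n / n := by
    rw [div_div_eq_mul_div, div_le_div_iff₀ (by linarith) (by linarith)]
    calc 66 * (n:ℝ) ^ 3 * Real.log L * n ≤ 66 * (n:ℝ) ^ 3 * (8 * Real.log n) * n := by gcongr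
      _ = 528 * Real.log n * n ^ 4 := by ring
      _ ≤ 528 * Real.log n * L := by gcongr
      _ ≤ 16 * Real.log n * (64 * L) := by nlinarith [mul_pos hl (by linarith : 0 < L)]
  have a3 : 16 * Real.log n / n < δ ^ 2 / 2 := by
    have : 32 * Real.log n / n < δ ^ 2 := by
      refine lt_of_pow_lt_pow_left₀ 8 (by positivity) ?_
      rw [← pow_mul, show 2 * 8 = 16 from rfl, h16, div_pow, div_lt_div_iff₀ (by positivity) (by linarith)]
      calc (32 * Real.log n) ^ 8 * L ≤ (32 * Real.log n) ^ 8 * (16 * n ^ 4) := by gcongr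
        _ = 2 ^ 44 * ((Real.log n) ^ 2) ^ 4 * n ^ 4 := by ring
        _ ≤ 2 ^ 44 * (n / 4096) ^ 4 * n ^ 4 := by gcongr
        _ = 1 / 16 * n ^ 8 := by ring
        _ < 1 * n ^ 8 := by
          have : (0:ℝ) < n ^ 8 := by positivity
          linarith
    have e : 16 * Real.log n / n = 32 * Real.log n / n / 2 := by ring
    rw [e]; linarith
  linarith

lemma delta_zero (M K : ℕ) (L : ℝ) (hL : 1 < L) (hM : 64 * L / Real.log L ≤ M) (hK : (K:ℝ) ≤ 2 * L) :
    Real.exp (- (Real.log L / 16)) ≤ ((M:ℝ) / (M + 2)) ^ K := by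
  have hΛ : 0 < Real.log L := Real.log_pos hL
  have hM0 : (0:ℝ) < M := lt_of_lt_of_le (by positivity) hM
  have h1 : Real.exp (- (2 / M)) ≤ (M:ℝ) / (M + 2) := by
    rw [Real.exp_neg]
    have : (M:ℝ) / (M + 2) = (2 / (M:ℝ) + 1)⁻¹ := by field_simp; ring
    rw [this]
    gcongr
    exact Real.add_one_le_exp _
  calc Real.exp (- (Real.log L / 16)) ≤ Real.exp (K * (- (2 / M))) := by
        rw [Real.exp_le_exp, mul_neg, neg_le_neg_iff]
        rw [← mul_div_assoc, div_le_iff₀ hM0]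
        rw [div_le_iff₀ hΛ] at hM
        nlinarith
    _ = Real.exp (- (2 / M)) ^ K := by rw [Real.exp_nat_mul]
    _ ≤ _ := by gcongr

set_option maxHeartbeats 1000000 in
theorem final (n0 : ℕ) (h8 : 8 ≤ n0) (hn0 : ∀ n : ℕ, n0 ≤ n → (Real.log n) ^ 2 ≤ n / 4096) (p : ℕ) (hp : p.Prime)
    (hpL : 16 * (n0:ℝ) ^ 4 ≤ Real.log p) :
    ∃ a : ℕ, 1 ≤ a ∧ a < p ∧ Nat.gcd a p = 1 ∧ ∃ l : List ℕ, IsCFOf ((a:ℚ)/p) l ∧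
      ∀ c ∈ l, (c:ℝ) ≤ 134 * Real.log p / Real.log (Real.log p) := by
  have : Fact p.Prime := ⟨hp⟩
  have hp0 : (0:ℝ) < p := by exact_mod_cast hp.pos
  obtain ⟨L, hL⟩ : ∃ L, L = Real.log p := ⟨_, rfl⟩
  rw [← hL] at hpL ⊢
  have h8R : (8:ℝ) ≤ n0 := by exact_mod_cast h8
  have hLbig : 65536 ≤ L := by
    have : (8:ℝ) ^ 4 ≤ n0 ^ 4 := by gcongr
    linarith
  set s := Nat.log 16 ⌊L⌋₊ with hs
  obtain ⟨n, hn⟩ : ∃ n, n = 2 ^ s := ⟨_, rfl⟩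
  have hn4 : n ^ 4 = 16 ^ s := by rw [hn, ← pow_mul, mul_comm, pow_mul]; norm_num
  have hfl : ⌊L⌋₊ ≠ 0 := by
    have : 0 < ⌊L⌋₊ := Nat.floor_pos.2 (by linarith)
    omega
  have hnL : (n:ℝ) ^ 4 ≤ L := by
    have h := Nat.pow_log_le_self 16 hfl
    rw [← hs, ← hn4, Nat.le_floor_iff (by linarith)] at h
    exact_mod_cast h
  have hLn' : L < 16 * (n:ℝ) ^ 4 := by
    have h := Nat.lt_pow_succ_log_self (b := 16) (by norm_num) ⌊L⌋₊
    rw [← hs, pow_succ, ← hn4, Nat.floor_lt (by linarith)] at h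
    push_cast at h
    linarith
  have hLn := hLn'.le
  have hnn0 : n0 ≤ n := by
    have : (n0:ℝ) ^ 4 < (n:ℝ) ^ 4 := by linarith
    have := lt_of_pow_lt_pow_left₀ 4 (by positivity) this
    exact_mod_cast this.le
  have hn8 : 8 ≤ n := h8.trans hnn0
  have hn8R : (8:ℝ) ≤ n := by exact_mod_cast hn8
  have hlog2 := hn0 n hnn0
  have hlogn1 : 1 ≤ Real.log n := by
    rw [Real.le_log_iff_exp_le (by linarith)]
    linarith [Real.exp_one_lt_d9]
  have hlog1 : Real.log n ≤ n / 4096 := by nlinarith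
  obtain ⟨m, hm⟩ : ∃ m, m + 3 = n := ⟨n - 3, by omega⟩
  obtain ⟨N, hN1, hN2, hN3⟩ := exists_N n m p L hn8 hm hp.pos hL hnL hlog1
  -- size of N
  have hNbig : n ^ 8 ≤ N := by
    refine le_trans ?_ hN1
    gcongr
    exact Nat.le_self_pow (by positivity) _
  have hN0 : 0 < N := lt_of_lt_of_le (by positivity) hNbig
  have hN0R : (0:ℝ) < N := by exact_mod_cast hN0
  have hNsq : N * N ≤ p := by
    have : N ^ 2 ≤ N ^ m := Nat.pow_le_pow_right hN0 (by omega)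
    nlinarith
  have hlogN : Real.log N ≤ 32 * n ^ 3 := by
    have h1 : (N:ℝ) ^ m ≤ p := by exact_mod_cast (by omega : N ^ m ≤ p)
    have h2 : m * Real.log N ≤ L := by
      rw [hL, ← Real.log_pow]
      exact Real.log_le_log (by positivity) h1
    have h3 : (n:ℝ) / 2 ≤ m := by
      have : (m:ℝ) + 3 = n := by exact_mod_cast hm
      linarith
    have h4 : 0 ≤ Real.log N := Real.log_nonneg (by exact_mod_cast hN0)
    have h5 : (n:ℝ) / 2 * Real.log N ≤ 16 * n ^ 4 := (mul_le_mul_of_nonneg_right h3 h4).trans (h2.trans hLn)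
    have h6 : (n:ℝ) * Real.log N ≤ n * (32 * n ^ 3) := by nlinarith
    exact le_of_mul_le_mul_left h6 (by linarith)
  -- X
  obtain ⟨X, hX⟩ : ∃ X, X = Nat.sqrt p / N := ⟨_, rfl⟩
  have hX1 : 1 ≤ X := by
    rw [hX, Nat.one_le_div_iff hN0, Nat.le_sqrt]; exact hNsq
  have hXle : N * X ≤ Nat.sqrt p := by rw [hX]; exact Nat.mul_div_le _ _
  have hXsq : (N * X) * (N * X) ≤ p := Nat.le_sqrt.1 hXle
  have hXup : p ≤ (2 * N * X) * (2 * N * X) := by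
    have h1 : Nat.sqrt p < N * (X + 1) := by rw [hX]; exact Nat.lt_mul_div_succ _ hN0
    have h2 : N * (X + 1) ≤ 2 * N * X := by nlinarith
    have h3 := Nat.sqrt_lt.1 (h1.trans_le h2)
    exact h3.le
  have hX0R : (0:ℝ) < X := by exact_mod_cast hX1
  have hW : Real.log ((p:ℝ) / (X * X)) ≤ 66 * (n:ℝ) ^ 3 := by
    have h1 : (p:ℝ) / (X * X) ≤ (2 * N) ^ 2 := by
      rw [div_le_iff₀ (by positivity)]
      have : (p:ℝ) ≤ (2 * N * X) * (2 * N * X) := by exact_mod_cast hXup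
      linarith
    have h2 := Real.log_le_log (by positivity) h1
    rw [Real.log_pow, Real.log_mul (by norm_num) (by positivity)] at h2
    have h3 : Real.log 2 ≤ 1 := by linarith [Real.log_two_lt_d9]
    have h4 : (8:ℝ) ^ 3 ≤ n ^ 3 := by gcongr
    push_cast at h2
    linarith
  -- M
  have hΛ1 : 1 ≤ Real.log L := by
    rw [Real.le_log_iff_exp_le (by linarith)]
    linarith [Real.exp_one_lt_d9]
  obtain ⟨M, hM⟩ : ∃ M, M = ⌈64 * L / Real.log L⌉₊ := ⟨_, rfl⟩
  have hM1 : 64 * L / Real.log L ≤ M := by rw [hM]; exact Nat.le_ceil _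
  have hM2 : (M:ℝ) < 64 * L / Real.log L + 1 := by rw [hM]; exact Nat.ceil_lt_add_one (by positivity)
  have hLΛ : 1 ≤ L / Real.log L := by
    rw [le_div_iff₀ (by linarith)]
    linarith [Real.log_le_sub_one_of_pos (show 0 < L by linarith)]
  have hMpos : 1 ≤ M := by
    have : (0:ℝ) < M := lt_of_lt_of_le (by positivity) hM1
    exact_mod_cast this
  have e64 : 64 * L / Real.log L = 64 * (L / Real.log L) := by ring
  have hC : ((2 * (M + 2) : ℕ):ℝ) ≤ 134 * L / Real.log L := by
    push_cast
    have : 134 * L / Real.log L = 134 * (L / Real.log L) := by ring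
    rw [this]; rw [e64] at hM2; linarith
  have hMN : 2 * (M + 2) ≤ N := by
    have h1 : L / Real.log L ≤ L := div_le_self (by linarith) hΛ1
    have h2 : ((2 * (M + 2) : ℕ):ℝ) ≤ ((n ^ 8 : ℕ) : ℝ) := by
      push_cast
      have h4 : (8:ℝ) ^ 4 ≤ n ^ 4 := by gcongr
      have h8 : (8:ℝ) ^ 4 * n ^ 4 ≤ n ^ 8 := by
        calc (8:ℝ) ^ 4 * n ^ 4 ≤ n ^ 4 * n ^ 4 := by gcongr
          _ = _ := by ring
      rw [e64] at hM2
      linarith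
    exact (by exact_mod_cast h2 : 2 * (M + 2) ≤ n ^ 8).trans hNbig
  have hXN : 2 * (M + 2) * N * (X * X) ≤ p := by
    refine le_trans ?_ hXsq
    calc 2 * (M + 2) * N * (X * X) ≤ N * N * (X * X) := by gcongr
      _ = _ := by ring
  -- K
  have hKX : 2 * (X * X) < 2 ^ (Nat.log 2 p + 1) := by
    refine lt_of_le_of_lt ?_ (Nat.lt_pow_succ_log_self (by norm_num) p)
    refine le_trans ?_ hXN
    gcongr
    nlinarith
  have hK : ((Nat.log 2 p + 1 : ℕ):ℝ) ≤ 2 * L := by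
    have h := Nat.pow_log_le_self 2 hp.ne_zero
    have h1 : ((2:ℝ)) ^ (Nat.log 2 p) ≤ p := by exact_mod_cast h
    have h2 := Real.log_le_log (by positivity) h1
    rw [Real.log_pow, ← hL] at h2
    push_cast
    nlinarith [Real.log_two_gt_d9]
  -- delta
  obtain ⟨δ, hδ⟩ : ∃ δ, δ = Real.exp (- (Real.log L / 16)) := ⟨_, rfl⟩
  have hδ0 : 0 < δ := by rw [hδ]; exact Real.exp_pos _
  have h16 : δ ^ 16 = 1 / L := by
    rw [hδ, ← Real.exp_nat_mul]
    rw [show ((16:ℕ):ℝ) * (- (Real.log L / 16)) = - Real.log L by push_cast; ring, Real.exp_neg, Real.exp_log (by linarith), one_div]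
  obtain ⟨a, ha1, ha2, ha3, l, hl1, hl2⟩ := main_step (p := p) n s m (n ^ (16 * n ^ 2)) N M (Nat.log 2 p + 1) X hn8 hn.symm hm le_rfl hN1 hN2 hN3
    hMpos hKX hX1 hXN δ (by rw [hδ]; exact delta_zero M _ L (by linarith) hM1 hK)
    (delta_one n L δ hn8 hδ0 (by linarith) hLn h16)
    (delta_two n L δ M _ hn8 hδ0 (by linarith) hLn hnL h16 hlog2 hM1 hW)
  refine ⟨a, ha1, ha2, ha3, l, hl1, fun c hc => le_trans ?_ hC⟩
  exact_mod_cast hl2 c hc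

end Ten
end Kor

/-- For all sufficiently large primes `q` there is `a` coprime to `q` whose
partial quotients are all `O(log q / log log q)`. -/
theorem korobov_bound_improved :
    ∃ C : ℝ, 0 < C ∧ ∃ Q₀ : ℕ, ∀ q : ℕ, q.Prime → Q₀ ≤ q →
      ∃ a : ℕ, 1 ≤ a ∧ a < q ∧ Nat.gcd a q = 1 ∧
        ∃ l : List ℕ, IsCFOf ((a : ℚ) / q) l ∧
          ∀ c ∈ l, (c : ℝ) ≤ C * Real.log q / Real.log (Real.log q) := by
  obtain ⟨n0, h8, hn0⟩ := Kor.exists_n0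
  refine ⟨134, by norm_num, ⌈Real.exp (16 * (n0:ℝ) ^ 4)⌉₊, fun q hq hQ => Kor.final n0 h8 hn0 q hq ?_⟩
  rw [Real.le_log_iff_exp_le (by exact_mod_cast hq.pos)]
  exact Nat.ceil_le.1 hQ
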